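/- arXiv:2003.14007 — 4 statements merged into one kernel-verified Lean document; each statement's English description precedes it below -/
import Mathlib

section
/- Let n ≥ 3 and d be positive integers such that d is odd and n divides d. Then s_{dℕ}(D_{2n}) = 2d + ⌊log₂ n⌋. -/
/-- `T` is a 1-product sequence: its terms can be ordered so that their product is `1`. -/
def IsOneProdSeq {G : Type*} [Group G] (T : Multiset G) : Prop :=
  ∃ l : List G, (l : Multiset G) = T ∧ l.prod = 1

namespace DihAux

open Multiset DihedralGroup

variable {n : ℕ}

/-- the exponent of an element -/
def vl : DihedralGroup n → ZMod n
  | r i => i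
  | sr i => i

/-- reflection indicator -/
def rf : DihedralGroup n → ℕ
  | r _ => 0
  | sr _ => 1

@[simp] theorem vl_r (i : ZMod n) : vl (r i) = i := rfl
@[simp] theorem vl_sr (i : ZMod n) : vl (sr i) = i := rfl
@[simp] theorem rf_r (i : ZMod n) : rf (r i) = 0 := rfl
@[simp] theorem rf_sr (i : ZMod n) : rf (sr i) = 1 := rfl

/-- sum of exponents -/
def vs (T : Multiset (DihedralGroup n)) : ZMod n := (T.map vl).sum

/-- number of reflections -/
def rc (T : Multiset (DihedralGroup n)) : ℕ := (T.map rf).sum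

@[simp] theorem vs_zero : vs (0 : Multiset (DihedralGroup n)) = 0 := by simp [vs]
@[simp] theorem rc_zero : rc (0 : Multiset (DihedralGroup n)) = 0 := by simp [rc]
@[simp] theorem vs_add (A B : Multiset (DihedralGroup n)) : vs (A + B) = vs A + vs B := by
  simp [vs]
@[simp] theorem rc_add (A B : Multiset (DihedralGroup n)) : rc (A + B) = rc A + rc B := by
  simp [rc]
@[simp] theorem vs_cons (a) (B : Multiset (DihedralGroup n)) : vs (a ::ₘ B) = vl a + vs B := by
  simp [vs]
@[simp] theorem rc_cons (a) (B : Multiset (DihedralGroup n)) : rc (a ::ₘ B) = rf a + rc B := by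
  simp [rc]
@[simp] theorem vs_singleton (a : DihedralGroup n) : vs {a} = vl a := by
  simp [vs]
@[simp] theorem rc_singleton (a : DihedralGroup n) : rc {a} = rf a := by
  simp [rc]

theorem rf_le (g : DihedralGroup n) : rf g ≤ 1 := by cases g <;> simp

theorem rc_le_card (T : Multiset (DihedralGroup n)) : rc T ≤ card T := by
  induction T using Multiset.induction with
  | empty => simp
  | cons a T ih => have := rf_le a; simp; omega

theorem rc_mono {A B : Multiset (DihedralGroup n)} (h : A ≤ B) : rc A ≤ rc B := by
  obtain ⟨C, rfl⟩ := Multiset.le_iff_exists_add.1 h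
  simp

/-- signed zero-sum sequences -/
def Good (T : Multiset (DihedralGroup n)) : Prop :=
  ∃ A B, A + B = T ∧ vs A = vs B ∧ rc A = rc B

theorem Good.zero : Good (0 : Multiset (DihedralGroup n)) := ⟨0, 0, by simp⟩

theorem Good.add {S T : Multiset (DihedralGroup n)} (hS : Good S) (hT : Good T) :
    Good (S + T) := by
  obtain ⟨A, B, rfl, h1, h2⟩ := hS
  obtain ⟨C, D, rfl, h3, h4⟩ := hT
  refine ⟨A + C, B + D, ?_, ?_, ?_⟩
  · abel
  · simp [h1, h3]
  · simp [h2, h4]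

theorem Good.dbl (P : Multiset (DihedralGroup n)) : Good (P + P) := ⟨P, P, rfl, rfl, rfl⟩

theorem Good.even_rc {T : Multiset (DihedralGroup n)} (h : Good T) : Even (rc T) := by
  obtain ⟨A, B, rfl, h1, h2⟩ := h
  exact ⟨rc B, by simp [h2]⟩

theorem decomp (T : Multiset (DihedralGroup n)) :
    ∃ X Y : Multiset (ZMod n), T = X.map r + Y.map sr := by
  induction T using Multiset.induction with
  | empty => exact ⟨0, 0, by simp⟩
  | cons a T ih =>
    obtain ⟨X, Y, rfl⟩ := ih
    cases a with
    | r i => exact ⟨i ::ₘ X, Y, by simp⟩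
    | sr i => exact ⟨X, i ::ₘ Y, by simp⟩

@[simp] theorem vs_map_r (X : Multiset (ZMod n)) : vs (X.map r) = X.sum := by
  induction X using Multiset.induction with
  | empty => simp
  | cons a T ih => simp [ih]
@[simp] theorem vs_map_sr (X : Multiset (ZMod n)) : vs (X.map sr) = X.sum := by
  induction X using Multiset.induction with
  | empty => simp
  | cons a T ih => simp [ih]
@[simp] theorem rc_map_r (X : Multiset (ZMod n)) : rc (X.map r) = 0 := by
  induction X using Multiset.induction with
  | empty => simp
  | cons a T ih => simp [ih]
@[simp] theorem rc_map_sr (X : Multiset (ZMod n)) : rc (X.map sr) = card X := by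
  induction X using Multiset.induction with
  | empty => simp
  | cons a T ih => simp [ih]; omega

theorem prod_rot (X : Multiset (ZMod n)) :
    ∃ l : List (DihedralGroup n), (l : Multiset _) = X.map r ∧ l.prod = r X.sum := by
  induction X using Multiset.induction with
  | empty => exact ⟨[], by simp⟩
  | cons a T ih =>
    obtain ⟨l, h1, h2⟩ := ih
    refine ⟨r a :: l, ?_, ?_⟩
    · simp [← h1]
    · simp [h2]

theorem prod_refl (X : Multiset (ZMod n)) : ∀ Y : Multiset (ZMod n), card X = card Y →
    ∃ l : List (DihedralGroup n), (l : Multiset _) = X.map sr + Y.map sr ∧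
      l.prod = r (Y.sum - X.sum) := by
  induction X using Multiset.induction with
  | empty =>
    intro Y h
    have : Y = 0 := by
      rw [← Multiset.card_eq_zero, ← h]; simp
    subst this
    exact ⟨[], by simp⟩
  | cons a T ih =>
    intro Y h
    induction Y using Multiset.induction with
    | empty => simp at h
    | cons b Y _ =>
      obtain ⟨l, h1, h2⟩ := ih Y (by simpa using h)
      refine ⟨sr a :: sr b :: l, ?_, ?_⟩
      · rw [← Multiset.cons_coe, ← Multiset.cons_coe, h1]
        simp
        rw [Multiset.cons_swap]
      · simp [h2]; ring

theorem Good.isOne {T : Multiset (DihedralGroup n)} (h : Good T) (hr : rc T ≠ 0) :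
    IsOneProdSeq T := by
  obtain ⟨A, B, rfl, h1, h2⟩ := h
  obtain ⟨X, Y, rfl⟩ := decomp A
  obtain ⟨Z, W, rfl⟩ := decomp B
  simp at h1 h2 hr
  induction Y using Multiset.induction with
  | empty => exact absurd (Multiset.card_eq_zero.1 (by simpa using h2.symm)) (hr rfl)
  | cons a Y _ =>
  induction W using Multiset.induction with
  | empty => simp at h2
  | cons b W _ =>
  obtain ⟨l1, h3, h4⟩ := prod_rot X
  obtain ⟨l2, h5, h6⟩ := prod_rot Z
  obtain ⟨l3, h7, h8⟩ := prod_refl Y W (by simpa using h2)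
  refine ⟨l2 ++ [sr a] ++ l1 ++ [sr b] ++ l3, ?_, ?_⟩
  · simp only [← Multiset.coe_add, h3, h5, h7]
    rw [Multiset.map_cons, Multiset.map_cons, ← Multiset.singleton_add, ← Multiset.singleton_add,
      Multiset.coe_singleton, Multiset.coe_singleton]
    abel
  · simp [h4, h6, h8]
    rw [one_def]; congr 1
    simp at h1
    linear_combination -h1

theorem isOne_rot (X : Multiset (ZMod n)) (h : X.sum = 0) :
    IsOneProdSeq (X.map (r : ZMod n → DihedralGroup n)) := by
  obtain ⟨l, h1, h2⟩ := prod_rot X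
  exact ⟨l, h1, by rw [h2, h, one_def]⟩

/-- normal form of a residue up to sign -/
def nrm (i : ZMod n) : ZMod n := if i.val ≤ n / 2 then i else -i

def nu : DihedralGroup n → DihedralGroup n
  | r i => r (nrm i)
  | sr i => sr i

@[simp] theorem nu_r (i : ZMod n) : nu (r i) = r (nrm i) := rfl
@[simp] theorem nu_sr (i : ZMod n) : nu (sr i) = sr i := rfl

@[simp] theorem rc_map_nu (T : Multiset (DihedralGroup n)) : rc (T.map nu) = rc T := by
  induction T using Multiset.induction with
  | empty => simp
  | cons a T ih => cases a <;> simp [ih]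

theorem nrm_or (i : ZMod n) : nrm i = i ∨ nrm i = -i := by
  unfold nrm; split <;> simp

theorem good_flip {i : ZMod n} {T : Multiset (DihedralGroup n)} (h : Good (r (-i) ::ₘ T)) :
    Good (r i ::ₘ T) := by
  obtain ⟨A, B, h0, h1, h2⟩ := h
  have hm : r (-i) ∈ A + B := by rw [h0]; simp
  rw [Multiset.mem_add] at hm
  rcases hm with hm | hm
  · obtain ⟨A, rfl⟩ := Multiset.exists_cons_of_mem hm
    simp at h0 h1 h2
    refine ⟨A, r i ::ₘ B, ?_, ?_, ?_⟩
    · rw [← h0]; simp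
    · simp [← h1]
    · simp [← h2]
  · obtain ⟨B, rfl⟩ := Multiset.exists_cons_of_mem hm
    simp at h0 h1 h2
    refine ⟨r i ::ₘ A, B, ?_, ?_, ?_⟩
    · rw [← h0]; simp
    · simp [h1]
    · simp [h2]

theorem good_nu (T : Multiset (DihedralGroup n)) : ∀ U, Good (U + T.map nu) → Good (U + T) := by
  induction T using Multiset.induction with
  | empty => simp
  | cons a T ih =>
    intro U h
    have h' : Good (a ::ₘ (U + T.map nu)) := by
      simp only [Multiset.map_cons, Multiset.add_cons] at h
      cases a with
      | sr i => exact h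
      | r i =>
        simp only [nu_r] at h
        rcases nrm_or i with e | e <;> rw [e] at h
        · exact h
        · exact good_flip h
    have := ih (a ::ₘ U) (by simpa using h')
    simpa using this

theorem lift_map {α β : Type*} (f : α → β) (S : Multiset α) :
    ∀ T, T ≤ S.map f → ∃ T0 ≤ S, T0.map f = T := by
  classical
  induction S using Multiset.induction with
  | empty => intro T h; refine ⟨0, by simp, ?_⟩; simpa [eq_comm] using h
  | cons a S ih =>
    intro T h
    rw [Multiset.map_cons] at h
    by_cases hm : f a ∈ T
    · obtain ⟨T, rfl⟩ := Multiset.exists_cons_of_mem hm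
      rw [Multiset.cons_le_cons_iff] at h
      obtain ⟨T0, h1, rfl⟩ := ih T h
      exact ⟨a ::ₘ T0, by simpa using h1, by simp⟩
    · rw [Multiset.le_cons_of_notMem hm] at h
      obtain ⟨T0, h1, rfl⟩ := ih T h
      exact ⟨T0, h1.trans (Multiset.le_cons_self _ _), rfl⟩

theorem good_lift {S T : Multiset (DihedralGroup n)} (h : T ≤ S.map nu) (hT : Good T) :
    ∃ T0 ≤ S, card T0 = card T ∧ Good T0 ∧ rc T0 = rc T := by
  obtain ⟨T0, h1, rfl⟩ := lift_map _ _ _ h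
  refine ⟨T0, h1, by simp, ?_, by simp⟩
  have := good_nu T0 0 (by simpa using hT)
  simpa using this

theorem exists_sub_card {α : Type*} (S : Multiset α) : ∀ k, k ≤ card S → ∃ T ≤ S, card T = k := by
  intro k hk
  induction S using Quotient.inductionOn with
  | h l =>
    refine ⟨((l.take k : List α) : Multiset α), ?_, ?_⟩
    · exact Multiset.coe_le.2 (List.take_sublist _ _).subperm
    · simpa using hk

end DihAux

namespace DihAux

open Multiset DihedralGroup

variable {n : ℕ}

theorem egz_iter (h : ℕ) (hh : 0 < h) (c : ℕ) : ∀ X : Multiset (ZMod h), c * h + h - 1 ≤ card X →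
    ∃ Y ≤ X, card Y = c * h ∧ Y.sum = 0 := by
  classical
  induction c with
  | zero => intro X _; exact ⟨0, by simp, by simp, by simp⟩
  | succ c ih =>
    intro X hX
    rw [add_mul] at hX
    obtain ⟨Y, h1, h2, h3⟩ := ih X (by omega)
    obtain ⟨Z, rfl⟩ := Multiset.le_iff_exists_add.1 h1
    simp only [Multiset.card_add] at hX
    obtain ⟨W, h4, h5, h6⟩ := ZMod.erdos_ginzburg_ziv_multiset Z (by omega)
    refine ⟨Y + W, by simpa using h4, ?_, by simp [h3, h6]⟩
    rw [Multiset.card_add]; linarith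

theorem egz_sub [NeZero n] (H : AddSubgroup (ZMod n)) (d : ℕ) (hd : n ∣ d) (X : Multiset (ZMod n))
    (hX : ∀ x ∈ X, x ∈ H) (hc : d + Nat.card H - 1 ≤ card X) :
    ∃ Y ≤ X, card Y = d ∧ Y.sum = 0 := by
  have hH : Nat.card H ∣ d := by
    have := AddSubgroup.card_addSubgroup_dvd_card H
    rw [Nat.card_zmod] at this
    exact this.trans hd
  obtain ⟨c, rfl⟩ := hH
  have hcy : IsAddCyclic H := inferInstance
  let f := zmodAddCyclicAddEquiv hcy
  lift X to Multiset H using hX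
  obtain ⟨Y, h1, h2, h3⟩ := egz_iter (Nat.card H) Nat.card_pos c (X.map f.symm) (by
    simpa [mul_comm] using hc)
  obtain ⟨Y, h4, rfl⟩ := lift_map _ _ _ h1
  refine ⟨Y.map (↑), Multiset.map_le_map h4, by simpa [mul_comm] using h2, ?_⟩
  have h5 : f.symm Y.sum = 0 := by
    rw [← h3]; exact map_multiset_sum f.symm Y
  have h6 : Y.sum = 0 := by simpa using h5
  have := map_multiset_sum H.subtype Y
  rw [h6] at this
  simpa using this.symm

theorem signed (l : List (DihedralGroup n)) : ∃ A B, A + B = (l : Multiset _) ∧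
    ((Even (rc (l : Multiset (DihedralGroup n))) ∧ l.prod = r (vs A - vs B)) ∨
     (¬ Even (rc (l : Multiset (DihedralGroup n))) ∧ l.prod = sr (vs A - vs B))) := by
  induction l with
  | nil => exact ⟨0, 0, by simp [← r_zero]⟩
  | cons a l ih =>
    obtain ⟨A, B, h0, h⟩ := ih
    rw [List.prod_cons, ← Multiset.cons_coe, ← h0, rc_cons]
    rw [← h0] at h
    rcases h with ⟨h1, h2⟩ | ⟨h1, h2⟩
    · cases a with
      | r i => 
        refine ⟨r i ::ₘ A, B, by simp, Or.inl ⟨by simpa using h1, ?_⟩⟩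
        rw [h2]; simp; ring
      | sr i =>
        refine ⟨sr i ::ₘ A, B, by simp, Or.inr ⟨by simpa [Nat.even_add] using h1, ?_⟩⟩
        rw [h2]; simp; ring
    · cases a with
      | r i => 
        refine ⟨A, r i ::ₘ B, by simp, Or.inr ⟨by simpa using h1, ?_⟩⟩
        rw [h2]; simp; ring
      | sr i =>
        refine ⟨A, sr i ::ₘ B, by simp, Or.inl ⟨by simpa [Nat.even_add] using h1, ?_⟩⟩
        rw [h2]; simp; ring

theorem le_add_split {α : Type*} {T U V : Multiset α} (h : T ≤ U + V) :
    ∃ T1 T2, T1 ≤ U ∧ T2 ≤ V ∧ T = T1 + T2 := by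
  classical
  refine ⟨T ∩ U, T - U, Multiset.inter_le_right, ?_, ?_⟩
  · rw [Multiset.sub_le_iff_le_add, add_comm]; exact h
  · ext a; simp; omega

theorem pow_sum_lt (k : ℕ) {X : Multiset ℕ} (h : X ≤ Multiset.range k) :
    (X.map (fun i => 2 ^ i)).sum < 2 ^ k := by
  have h1 : ∑ i ∈ Finset.range k, 2 ^ i = 2 ^ k - 1 := by
    have := Nat.geomSum_eq (m := 2) le_rfl k
    simpa using this
  have h2 : (X.map (fun i => 2 ^ i)).sum ≤ ((Multiset.range k).map (fun i => 2 ^ i)).sum := by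
    obtain ⟨C, hC⟩ := Multiset.le_iff_exists_add.1 h
    rw [hC]; simp
  have h3 : ((Multiset.range k).map (fun i => 2 ^ i)).sum = 2 ^ k - 1 := h1
  have : 0 < 2 ^ k := by positivity
  omega

theorem lower (d : ℕ) (hn : 3 ≤ n) (hd : 0 < d) (hodd : Odd d) (ℓ : ℕ)
    (hl : ∀ S : Multiset (DihedralGroup n), ℓ ≤ Multiset.card S →
        ∃ T, T ≤ S ∧ T ≠ 0 ∧ d ∣ Multiset.card T ∧ IsOneProdSeq T) :
    2 * d + Nat.log 2 n ≤ ℓ := by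
  classical
  by_contra hlt
  push Not at hlt
  set k := Nat.log 2 n with hk
  let g : ℕ → DihedralGroup n := fun i => r (2 ^ i : ZMod n)
  obtain ⟨T, hT, hT0, hdT, l, hlT, hl1⟩ := hl (replicate (2 * d - 1) (sr 0) + (Multiset.range k).map g)
    (by simp; omega)
  obtain ⟨A, B, hAB, h⟩ := signed l
  rw [hlT] at hAB h
  rw [hl1] at h
  have hev : Even (rc T) ∧ vs A = vs B := by
    rcases h with ⟨h1, h2⟩ | ⟨h1, h2⟩
    · rw [one_def] at h2
      injection h2 with h3
      exact ⟨h1, (sub_eq_zero.1 h3.symm)⟩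
    · rw [one_def] at h2; cases h2
  obtain ⟨hev, hv⟩ := hev
  obtain ⟨T1, T2, h1, h2, rfl⟩ := le_add_split hT
  rw [Multiset.le_replicate_iff] at h1
  obtain ⟨m, hc, h1⟩ := h1
  obtain ⟨I, hI, rfl⟩ := lift_map _ _ _ h2
  have hA : A ≤ T1 + I.map g := by rw [← hAB]; simp
  obtain ⟨A1, A2, h3, h4, rfl⟩ := le_add_split hA
  obtain ⟨X, hX, rfl⟩ := lift_map _ _ _ h4
  obtain ⟨Y, rfl⟩ := Multiset.le_iff_exists_add.1 hX
  obtain ⟨B1, rfl⟩ := Multiset.le_iff_exists_add.1 h3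
  have hB : B = B1 + Y.map g := by
    have : A1 + map g X + B = A1 + map g X + (B1 + Y.map g) := by
      rw [hAB, Multiset.map_add]; abel
    exact add_left_cancel this
  have hz : ∀ c (a : ℕ), c = replicate a (sr 0 : DihedralGroup n) → vs c = 0 ∧ rc c = card c := by
    rintro c a rfl
    induction a with
    | zero => simp
    | succ a ih => simp [replicate_succ, ih]; omega
  have hA1 : vs A1 = 0 := by
    have := h3
    rw [h1, Multiset.le_replicate_iff] at this
    obtain ⟨a, -, ha⟩ := this
    exact (hz A1 a ha).1
  have hB1 : vs B1 = 0 := by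
    have := (hz _ _ h1).1
    simpa [hA1] using this
  have hgs : ∀ X : Multiset ℕ, vs (X.map g) = (((X.map (fun i => 2 ^ i)).sum : ℕ) : ZMod n) := by
    intro X
    induction X using Multiset.induction with
    | empty => simp
    | cons a X ih => simp [ih, g]
  rw [hB] at hv
  simp only [vs_add, hA1, hB1, zero_add, hgs] at hv
  rw [ZMod.natCast_eq_natCast_iff] at hv
  have hkn : 2 ^ k ≤ n := Nat.pow_log_le_self 2 (by omega)
  have hX' := pow_sum_lt k ((Multiset.le_add_right X Y).trans hI)
  have hY' := pow_sum_lt k ((Multiset.le_add_left Y X).trans hI)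
  have hv2 := Nat.ModEq.eq_of_lt_of_lt hv (by omega) (by omega)
  have hnd : (X + Y).Nodup := Multiset.nodup_of_le hI (Multiset.nodup_range k)
  rw [Multiset.nodup_add] at hnd
  obtain ⟨hXn, hYn, hdis⟩ := hnd
  have := Finset.geomSum_injective (n := 2) le_rfl (a₁ := ⟨X, hXn⟩) (a₂ := ⟨Y, hYn⟩) (by
    simpa [Finset.sum] using hv2)
  have hXY : X = Y := by injection this
  subst hXY
  have hX0 : X = 0 := by
    rw [Multiset.disjoint_left] at hdis
    exact Multiset.eq_zero_of_forall_notMem fun a ha => hdis ha ha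
  subst hX0
  simp only [add_zero, Multiset.map_zero] at hdT hev hT0
  have hr := (hz _ _ h1).2
  rw [hr] at hev
  obtain ⟨c, hc'⟩ := hdT
  have : 0 < card (A1 + B1) := Multiset.card_pos.2 hT0
  have hce : Even c := by
    rw [hc', Nat.even_mul] at hev
    rcases hev with h | h
    · exact absurd h (by simpa using hodd)
    · exact h
  obtain ⟨c, rfl⟩ := hce
  have : c ≠ 0 := by rintro rfl; rw [hc'] at this; simp at this
  have : d * (c + c) ≥ d * 2 := Nat.mul_le_mul le_rfl (by omega)
  have : card (A1 + B1) = m := by rw [h1]; simp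
  omega

end DihAux

namespace DihAux

open Multiset DihedralGroup

variable {n : ℕ}

theorem pair_decomp {α : Type*} (S : Multiset α) :
    ∃ D P : Multiset α, S = D + (P + P) ∧ D.Nodup := by
  classical
  induction S using Multiset.induction with
  | empty => exact ⟨0, 0, by simp⟩
  | cons a S ih =>
    obtain ⟨D, P, rfl, hD⟩ := ih
    by_cases ha : a ∈ D
    · obtain ⟨D, rfl⟩ := Multiset.exists_cons_of_mem ha
      rw [Multiset.nodup_cons] at hD
      refine ⟨D, a ::ₘ P, ?_, hD.2⟩
      simp
    · exact ⟨a ::ₘ D, P, by simp, Multiset.nodup_cons.2 ⟨ha, hD⟩⟩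

theorem nodup_card_le {α : Type*} [DecidableEq α] {D S : Multiset α} (h : D ≤ S) (hD : D.Nodup) :
    card D ≤ S.toFinset.card := by
  rw [← Multiset.toFinset_card_of_nodup hD]
  exact Finset.card_le_card (Multiset.toFinset_subset.2 (Multiset.subset_of_le h))

theorem toFinset_card_mono {α : Type*} [DecidableEq α] {D S : Multiset α} (h : D ≤ S) :
    D.toFinset.card ≤ S.toFinset.card :=
  Finset.card_le_card (Multiset.toFinset_subset.2 (Multiset.subset_of_le h))

theorem dbl_mono {α : Type*} {A B : Multiset α} (h : A ≤ B) : A + A ≤ B + B := add_le_add h h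

theorem simple_fill (S : Multiset (DihedralGroup n)) (N : ℕ) (hN : Even N)
    (h : N + S.toFinset.card ≤ card S) : ∃ T ≤ S, card T = N ∧ Good T := by
  obtain ⟨D, P, rfl, hD⟩ := pair_decomp S
  have h1 := nodup_card_le (S := D + (P + P)) (by simp) hD
  obtain ⟨m, rfl⟩ := hN
  simp only [Multiset.card_add] at h
  obtain ⟨Q, hQ, hc⟩ := exists_sub_card P m (by omega)
  refine ⟨Q + Q, ?_, by simp [hc], Good.dbl Q⟩
  exact (dbl_mono hQ).trans (by simp)

theorem quad_set [NeZero n] (V : Finset (ZMod n)) (h : 2 * n < V.card * (V.card - 1)) :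
    ∃ a ∈ V, ∃ b ∈ V, ∃ c ∈ V, ∃ e ∈ V, a + b = c + e ∧ a ≠ b ∧ a ≠ c ∧ a ≠ e ∧ b ≠ c ∧ b ≠ e ∧
      c ≠ e := by
  have h1 := Finset.exists_lt_card_fiber_of_mul_lt_card_of_maps_to (s := V.offDiag)
    (t := (Finset.univ : Finset (ZMod n))) (f := fun p => p.1 + p.2) (n := 2) (by simp) (by
      rw [Finset.offDiag_card, Finset.card_univ, ZMod.card]
      rw [Nat.mul_sub_one] at h; omega)
  obtain ⟨s, -, h2⟩ := h1
  obtain ⟨⟨a, b⟩, hab⟩ := Finset.card_pos.1 (lt_trans (by norm_num) h2)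
  have h3 : ∃ p ∈ ((V.offDiag.filter (fun p => p.1 + p.2 = s)).erase (a, b)).erase (b, a), True := by
    have : 0 < (((V.offDiag.filter (fun p => p.1 + p.2 = s)).erase (a, b)).erase (b, a)).card := by
      have e1 := Finset.pred_card_le_card_erase (s := V.offDiag.filter (fun p => p.1 + p.2 = s))
        (a := (a, b))
      have e2 := Finset.pred_card_le_card_erase
        (s := (V.offDiag.filter (fun p => p.1 + p.2 = s)).erase (a, b)) (a := (b, a))
      omega
    obtain ⟨p, hp⟩ := Finset.card_pos.1 this
    exact ⟨p, hp, trivial⟩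
  obtain ⟨⟨c, e⟩, hce, -⟩ := h3
  simp only [Finset.mem_erase, Finset.mem_filter, Finset.mem_offDiag, ne_eq, Prod.mk.injEq] at hab hce
  obtain ⟨⟨ha, hb, hne⟩, hs⟩ := hab
  obtain ⟨n1, n2, ⟨hc, he, hne2⟩, hs2⟩ := hce
  refine ⟨a, ha, b, hb, c, hc, e, he, by rw [hs, hs2], hne, ?_, ?_, ?_, ?_, hne2⟩
  · rintro rfl
    exact n2 ⟨rfl, by linear_combination hs2 - hs⟩
  · rintro rfl
    exact n1 ⟨by linear_combination hs2 - hs, rfl⟩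
  · rintro rfl
    exact n1 ⟨rfl, by linear_combination hs2 - hs⟩
  · rintro rfl
    exact n2 ⟨by linear_combination hs2 - hs, rfl⟩

theorem quad_good [NeZero n] {D : Multiset (DihedralGroup n)} (hD : D.Nodup)
    (h : 2 * n < rc D * (rc D - 1)) : ∃ W ≤ D, Good W ∧ card W = 4 := by
  classical
  obtain ⟨X, Y, rfl⟩ := decomp D
  rw [Multiset.nodup_add] at hD
  have hY : Y.Nodup := Multiset.Nodup.of_map _ hD.2.1
  simp only [rc_add, rc_map_r, rc_map_sr, zero_add] at h
  obtain ⟨a, ha, b, hb, c, hc, e, he, hs, h1, h2, h3, h4, h5, h6⟩ := quad_set ⟨Y, hY⟩ h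
  refine ⟨(({a, b} + {c, e} : Multiset (ZMod n))).map sr, ?_, ?_, ?_⟩
  · refine le_trans (Multiset.map_le_map ?_) (Multiset.le_add_left _ _)
    rw [Multiset.le_iff_subset]
    · intro x hx
      simp at hx
      rcases hx with rfl | rfl | rfl | rfl <;> assumption
    · simp [*, h2.symm, h4.symm]
  · refine ⟨({a, b} : Multiset (ZMod n)).map sr, ({c, e} : Multiset (ZMod n)).map sr, by simp, ?_, ?_⟩
    · rw [vs_map_sr, vs_map_sr]; simpa using hs
    · rw [rc_map_sr, rc_map_sr]; simp
  · simp

theorem PH [NeZero n] {ι : Type*} (I : Finset ι) (U J : ι → Multiset (DihedralGroup n))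
    (L P : Multiset (DihedralGroup n)) (hU : ∀ i ∈ I, U i ≤ L) (hJ : ∀ i ∈ I, J i ≤ P) (c : ℕ)
    (hc : ∀ i ∈ I, rc (U i) + 2 * rc (J i) = c)
    (inj : ∀ i ∈ I, ∀ j ∈ I, U i = U j → vs (J i + J i) = vs (J j + J j) → i = j)
    (hn : n < I.card) :
    ∃ K ≤ L, K ≠ 0 ∧ ∃ J' ≤ P, Good (K + (J' + J')) := by
  classical
  obtain ⟨i, hi, j, hj, hij, he⟩ := Finset.exists_ne_map_eq_of_card_lt_of_maps_to
    (s := I) (t := (Finset.univ : Finset (ZMod n))) (f := fun i => vs (U i + (J i + J i)))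
    (by simpa [ZMod.card] using hn) (by intro x _; simp)
  have hle : ∀ A B C : Multiset (DihedralGroup n), A ≤ C → B ≤ C → (A - B) + (B - A) ≤ C := by
    intro A B C h1 h2
    rw [Multiset.le_iff_count] at *
    intro a; have := h1 a; have := h2 a
    simp; omega
  have hmx : ∀ A B : Multiset (DihedralGroup n), (A - B) + B = (B - A) + A := by
    intro A B; ext a; simp; omega
  have hv : ∀ A B : Multiset (DihedralGroup n), vs (A - B) + vs B = vs (B - A) + vs A := by
    intro A B; have := congrArg vs (hmx A B); simpa using this
  have hr : ∀ A B : Multiset (DihedralGroup n), rc (A - B) + rc B = rc (B - A) + rc A := by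
    intro A B; have := congrArg rc (hmx A B); simpa using this
  refine ⟨(U i - U j) + (U j - U i), hle _ _ _ (hU i hi) (hU j hj), ?_,
    (J i - J j) + (J j - J i), hle _ _ _ (hJ i hi) (hJ j hj), ?_⟩
  · intro h0
    have h1 : U i = U j := by
      ext a
      have := congrArg (Multiset.count a) h0
      simp at this; omega
    refine hij (inj i hi j hj h1 ?_)
    simp only [vs_add, h1] at he
    simpa using he
  · refine ⟨(U i - U j) + ((J i - J j) + (J i - J j)), (U j - U i) + ((J j - J i) + (J j - J i)),
      by ext a; simp only [Multiset.count_add]; ring, ?_, ?_⟩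
    · have e1 := hv (U i) (U j)
      have e2 := hv (J i) (J j)
      simp only [vs_add] at he ⊢
      linear_combination e1 + 2 * e2 + he
    · have e1 := hr (U i) (U j)
      have e2 := hr (J i) (J j)
      have e3 := hc i hi
      have e4 := hc j hj
      simp only [rc_add]
      omega

theorem val_le_of_subset {α : Type*} [DecidableEq α] {L : Multiset α} {X : Finset α} (h : X ⊆ L.toFinset) : X.val ≤ L := by
  rw [Multiset.le_iff_subset X.nodup]
  intro a ha
  simpa using h ha

theorem rot_good [NeZero n] {L : Multiset (DihedralGroup n)} (hL : L.Nodup) (h0 : rc L = 0)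
    (h : n < 2 ^ card L) : ∃ K ≤ L, K ≠ 0 ∧ Good K := by
  classical
  obtain ⟨K, h1, h2, J', h3, h4⟩ := PH L.toFinset.powerset (fun X => X.val) (fun _ => 0) L 0
    (by intro X hX; exact val_le_of_subset (Finset.mem_powerset.1 hX)) (by simp) 0
    (by intro X hX; 
        have := rc_mono (val_le_of_subset (Finset.mem_powerset.1 hX))
        simp; omega)
    (by intro X _ Y _ h _; exact Finset.val_injective h)
    (by rw [Finset.card_powerset, Multiset.toFinset_card_of_nodup hL]; exact h)
  have : J' = 0 := by simpa using h3
  subst this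
  exact ⟨K, h1, h2, by simpa using h4⟩

theorem rc_pos_iff {T : Multiset (DihedralGroup n)} (h : rc T ≠ 0) : ∃ g ∈ T, rf g = 1 := by
  by_contra hh
  push Not at hh
  apply h
  unfold rc
  rw [Multiset.sum_eq_zero_iff]
  intro x hx
  obtain ⟨g, hg, rfl⟩ := Multiset.mem_map.1 hx
  have := hh g hg; have := rf_le g; omega

theorem rc_eq_card_sub {T S : Multiset (DihedralGroup n)} (h : T ≤ S) (hS : rc S = card S) :
    rc T = card T := by
  obtain ⟨C, rfl⟩ := Multiset.le_iff_exists_add.1 h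
  have := rc_le_card T; have := rc_le_card C
  simp at hS; omega

theorem X_refl [NeZero n] {L Q : Multiset (DihedralGroup n)} (hL : L.Nodup) (hf : rc L ≠ 0)
    (h : n < 2 ^ (card L - 1)) (hQ : rc Q = card Q) (hq : rc L - 1 ≤ 2 * card Q + 1) :
    ∃ K ≤ L, K ≠ 0 ∧ ∃ J' ≤ Q, Good (K + (J' + J')) := by
  classical
  obtain ⟨x, hx, hx1⟩ := rc_pos_iff hf
  obtain ⟨L, rfl⟩ := Multiset.exists_cons_of_mem hx
  rw [Multiset.nodup_cons] at hL
  have hex : ∀ m, ∃ J, m ≤ card Q → J ≤ Q ∧ card J = m := by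
    intro m
    by_cases hm : m ≤ card Q
    · obtain ⟨J, h1, h2⟩ := exists_sub_card Q m hm
      exact ⟨J, fun _ => ⟨h1, h2⟩⟩
    · exact ⟨0, fun h => absurd h hm⟩
  choose Jf hJf using hex
  simp only [rc_cons, hx1] at hq hf
  have hq' : rc L ≤ 2 * card Q + 1 := by omega
  let U : Finset (DihedralGroup n) → Multiset (DihedralGroup n) := fun X =>
    if rc X.val % 2 = rc L % 2 then X.val else x ::ₘ X.val
  have hUx : ∀ X ∈ L.toFinset.powerset, rc (U X) ≤ rc L ∧ rc (U X) % 2 = rc L % 2 := by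
    intro X hX
    have h1 := rc_mono (val_le_of_subset (Finset.mem_powerset.1 hX))
    simp only [U]
    split
    · exact ⟨h1, by assumption⟩
    · rw [rc_cons, hx1]; constructor <;> omega
  obtain ⟨K, h1, h2, J', h3, h4⟩ := PH L.toFinset.powerset U
    (fun X => Jf ((rc L - rc (U X)) / 2)) (x ::ₘ L) Q
    (by
      intro X hX
      have := val_le_of_subset (Finset.mem_powerset.1 hX)
      simp only [U]; split
      · exact this.trans (Multiset.le_cons_self _ _)
      · simpa using this)
    (by
      intro X hX
      exact (hJf _ (by omega)).1) (rc L)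
    (by
      intro X hX
      obtain ⟨e1, e2⟩ := hUx X hX
      obtain ⟨e3, e4⟩ := hJf ((rc L - rc (U X)) / 2) (by omega)
      have e5 := rc_eq_card_sub e3 hQ
      omega)
    (by
      intro X hX Y hY hXY _
      have key : ∀ X ∈ L.toFinset.powerset, (U X).erase x = X.val := by
        intro X hX
        have hxX : x ∉ X.val := fun hm => hL.1 (by
          simpa using Finset.mem_powerset.1 hX hm)
        simp only [U]; split
        · exact Multiset.erase_of_notMem hxX
        · simp
      have := congrArg (fun M => Multiset.erase M x) hXY
      simp only [key X hX, key Y hY] at this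
      exact Finset.val_injective this)
    (by
      rw [Finset.card_powerset, Multiset.toFinset_card_of_nodup hL.2]
      simpa using h)
  exact ⟨K, h1, h2, J', h3, h4⟩

theorem choose_bound (f : ℕ) (hf : 2 ≤ f) : 2 ^ f ≤ f * Nat.choose f (f / 2) := by
  have h := Nat.sum_range_choose f
  rw [Finset.sum_range_succ, Finset.range_eq_Ico, Finset.sum_eq_sum_Ico_succ_bot (by omega)] at h
  have h1 : ∑ i ∈ Finset.Ico (0 + 1) f, Nat.choose f i ≤ (f - 1) * Nat.choose f (f / 2) := by
    refine (Finset.sum_le_card_nsmul _ _ (Nat.choose f (f/2)) ?_).trans ?_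
    · intro i _; exact Nat.choose_le_middle i f
    · simp
  have h2 : 2 ≤ Nat.choose f (f / 2) := by
    have := Nat.choose_le_middle 1 f
    simp at this; omega
  simp at h
  obtain ⟨g, rfl⟩ : ∃ g, f = g + 1 := ⟨f - 1, by omega⟩
  simp only [Nat.add_sub_cancel] at h1
  rw [add_mul]
  simp at h h1
  omega

/-- doubled subset sums -/
def Zs (J : Multiset (DihedralGroup n)) : Finset (ZMod n) :=
  (J.powerset.map (fun A => vs (A + A))).toFinset

theorem mem_Zs {J : Multiset (DihedralGroup n)} {z : ZMod n} :
    z ∈ Zs J ↔ ∃ A ≤ J, vs (A + A) = z := by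
  simp only [Zs, Multiset.mem_toFinset, Multiset.mem_map, Multiset.mem_powerset]

theorem rc_eq_card_of {T : Multiset (DihedralGroup n)} (h : ∀ g ∈ T, rf g = 1) : rc T = card T := by
  induction T using Multiset.induction with
  | empty => simp
  | cons a T ih =>
    have h1 := ih fun g hg => h g (by simp [hg])
    have h2 := h a (by simp)
    simp [h1, h2]; omega

theorem rc_eq_zero_of {T : Multiset (DihedralGroup n)} (h : ∀ g ∈ T, rf g = 0) : rc T = 0 := by
  induction T using Multiset.induction with
  | empty => simp
  | cons a T ih =>
    have h1 := ih fun g hg => h g (by simp [hg])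
    have h2 := h a (by simp)
    simp [h1, h2]

theorem split_rf (L : Multiset (DihedralGroup n)) :
    ∃ A B, L = A + B ∧ (∀ g ∈ A, rf g = 0) ∧ (∀ g ∈ B, rf g = 1) := by
  obtain ⟨X, Y, rfl⟩ := decomp L
  refine ⟨_, _, rfl, ?_, ?_⟩
  · intro g hg
    obtain ⟨i, _, rfl⟩ := Multiset.mem_map.1 hg; simp
  · intro g hg
    obtain ⟨i, _, rfl⟩ := Multiset.mem_map.1 hg; simp

theorem X_rot [NeZero n] {L J : Multiset (DihedralGroup n)} (hL : L.Nodup) (hf : 2 ≤ rc L)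
    (h : n < 2 ^ (card L - 1)) (hJ : rc J = 0) (hq : rc L ≤ 2 * (Zs J).card) :
    ∃ K ≤ L, K ≠ 0 ∧ ∃ J' ≤ J, Good (K + (J' + J')) := by
  classical
  obtain ⟨R, F, rfl, hR, hF⟩ := split_rf L
  rw [Multiset.nodup_add] at hL
  obtain ⟨hRn, hFn, hdis⟩ := hL
  have hr0 := rc_eq_zero_of hR
  have hf0 := rc_eq_card_of hF
  simp only [rc_add, hr0, hf0, zero_add, Multiset.card_add] at hf h hq
  have hex : ∀ z, ∃ A, z ∈ Zs J → A ≤ J ∧ vs (A + A) = z := by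
    intro z
    by_cases hz : z ∈ Zs J
    · obtain ⟨A, h1⟩ := mem_Zs.1 hz
      exact ⟨A, fun _ => h1⟩
    · exact ⟨0, fun h => absurd h hz⟩
  choose Jf hJf using hex
  set f := card F with hfdef
  refine PH (R.toFinset.powerset ×ˢ (F.toFinset.powersetCard (f / 2) ×ˢ Zs J))
    (fun p => p.1.val + p.2.1.val) (fun p => Jf p.2.2) (R + F) J ?_ ?_ (f / 2) ?_ ?_ ?_
  · rintro ⟨A, B, z⟩ hi
    simp only [Finset.mem_product, Finset.mem_powerset, Finset.mem_powersetCard] at hi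
    exact add_le_add (val_le_of_subset hi.1) (val_le_of_subset hi.2.1.1)
  · rintro ⟨A, B, z⟩ hi
    simp only [Finset.mem_product, Finset.mem_powerset, Finset.mem_powersetCard] at hi
    exact (hJf z hi.2.2).1
  · rintro ⟨A, B, z⟩ hi
    simp only [Finset.mem_product, Finset.mem_powerset, Finset.mem_powersetCard] at hi
    have e1 := rc_mono (hJf z hi.2.2).1
    have e2 := rc_mono (val_le_of_subset hi.1)
    have e3 := rc_eq_card_sub (val_le_of_subset hi.2.1.1) hf0
    have e4 : card B.val = f / 2 := hi.2.1.2
    simp only [rc_add]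
    omega
  · rintro ⟨A, B, z⟩ hi ⟨A', B', z'⟩ hi' hU hz
    simp only [Finset.mem_product, Finset.mem_powerset, Finset.mem_powersetCard] at hi hi' hU hz
    have e1 : z = z' := by rw [← (hJf z hi.2.2).2, hz, (hJf z' hi'.2.2).2]
    have fR : ∀ (A B : Finset (DihedralGroup n)), A ⊆ R.toFinset → B ⊆ F.toFinset →
        (A.val + B.val).filter (fun g => rf g = 0) = A.val ∧
        (A.val + B.val).filter (fun g => rf g = 1) = B.val := by
      intro A B hA hB
      have a1 : ∀ g ∈ A.val, rf g = 0 := fun g hg => hR g (by simpa using hA hg)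
      have b1 : ∀ g ∈ B.val, rf g = 1 := fun g hg => hF g (by simpa using hB hg)
      rw [Multiset.filter_add, Multiset.filter_add, Multiset.filter_eq_self.2 a1,
        Multiset.filter_eq_self.2 b1, (Multiset.filter_eq_nil (s := B.val)).2, (Multiset.filter_eq_nil (s := A.val)).2]
      · simp
      · intro g hg; rw [a1 g hg]; simp
      · intro g hg; rw [b1 g hg]; simp
    have k1 := fR A B hi.1 hi.2.1.1
    have k2 := fR A' B' hi'.1 hi'.2.1.1
    rw [hU] at k1
    have e2 : A = A' := Finset.val_injective (k1.1.symm.trans k2.1)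
    have e3 : B = B' := Finset.val_injective (k1.2.symm.trans k2.2)
    rw [e1, e2, e3]
  · rw [Finset.card_product, Finset.card_product, Finset.card_powerset, Finset.card_powersetCard,
      Multiset.toFinset_card_of_nodup hRn, Multiset.toFinset_card_of_nodup hFn, ← hfdef]
    have hb := choose_bound f hf
    have h2 : 2 ^ (card R + f) ≤ 2 ^ card R * (Nat.choose f (f/2) * (Zs J).card) * 2 := by
      calc 2 ^ (card R + f) = 2 ^ card R * 2 ^ f := pow_add _ _ _
        _ ≤ 2 ^ card R * (f * Nat.choose f (f / 2)) := Nat.mul_le_mul le_rfl hb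
        _ ≤ 2 ^ card R * ((2 * (Zs J).card) * Nat.choose f (f / 2)) :=
          Nat.mul_le_mul le_rfl (Nat.mul_le_mul hq le_rfl)
        _ = _ := by ring
    have h3 : 2 ^ (card R + f) = 2 ^ (card R + f - 1) * 2 := by
      rw [← pow_succ]; congr 1; omega
    omega

end DihAux

namespace DihAux

open Multiset DihedralGroup

variable {n : ℕ}

theorem Zs_mono {A B : Multiset (DihedralGroup n)} (h : A ≤ B) : Zs A ⊆ Zs B := by
  intro z hz
  obtain ⟨C, h1, h2⟩ := mem_Zs.1 hz
  exact mem_Zs.2 ⟨C, h1.trans h, h2⟩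

theorem zero_mem_Zs (A : Multiset (DihedralGroup n)) : 0 ∈ Zs A := mem_Zs.2 ⟨0, by simp⟩

theorem chain2 (M : Multiset (DihedralGroup n)) (j : ℕ) :
    (∃ J ≤ M, card J ≤ j ∧ j + 1 ≤ (Zs J).card) ∨
    (∃ J C, J + C = M ∧ card J < j ∧ (Zs J).card ≤ j ∧
      ∀ g ∈ C, ∀ z ∈ Zs J, z + 2 * vl g ∈ Zs J) := by
  classical
  induction j with
  | zero =>
    left
    refine ⟨0, by simp, by simp, ?_⟩
    have : 0 < (Zs (0 : Multiset (DihedralGroup n))).card := Finset.card_pos.2 ⟨0, zero_mem_Zs _⟩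
    omega
  | succ j ih =>
    rcases ih with ⟨J, h1, h2, h3⟩ | ⟨J, C, h1, h2, h3, h4⟩
    · obtain ⟨C, rfl⟩ := Multiset.le_iff_exists_add.1 h1
      by_cases hb : j + 2 ≤ (Zs J).card
      · left; exact ⟨J, h1, by omega, hb⟩
      by_cases hc : ∀ g ∈ C, ∀ z ∈ Zs J, z + 2 * vl g ∈ Zs J
      · right; exact ⟨J, C, rfl, by omega, by omega, hc⟩
      · left
        push Not at hc
        obtain ⟨g, hg, z, hz, hzg⟩ := hc
        obtain ⟨C, rfl⟩ := Multiset.exists_cons_of_mem hg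
        refine ⟨g ::ₘ J, ?_, by simpa using h2, ?_⟩
        · rw [Multiset.add_cons, Multiset.cons_le_cons_iff]; simp
        · have hsub : insert (z + 2 * vl g) (Zs J) ⊆ Zs (g ::ₘ J) := by
            rw [Finset.insert_subset_iff]
            refine ⟨?_, Zs_mono (Multiset.le_cons_self _ _)⟩
            obtain ⟨A, a1, a2⟩ := mem_Zs.1 hz
            refine mem_Zs.2 ⟨g ::ₘ A, by simpa using a1, ?_⟩
            rw [← a2]; simp; ring
          have := Finset.card_le_card hsub
          rw [Finset.card_insert_of_notMem hzg] at this
          omega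
    · right; exact ⟨J, C, h1, by omega, by omega, h4⟩

theorem iter_mem {Z : Finset (ZMod n)} {h : ZMod n} (hh : ∀ z ∈ Z, z + h ∈ Z) (m : ℕ) :
    ∀ z ∈ Z, z + m * h ∈ Z := by
  induction m with
  | zero => simp
  | succ m ih =>
    intro z hz
    have := hh _ (ih z hz)
    convert this using 1
    push_cast; ring

theorem stuck_mem (hodd : Odd n) {Z : Finset (ZMod n)} {h : ZMod n} (hh : ∀ z ∈ Z, z + 2 * h ∈ Z) :
    ∀ z ∈ Z, z + h ∈ Z := by
  intro z hz
  obtain ⟨m, hm⟩ := hodd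
  have := iter_mem hh (m + 1) z hz
  convert this using 2
  have h1 : ((2 * m + 1 : ℕ) : ZMod n) = 0 := by rw [← hm]; simp
  push_cast at h1 ⊢
  linear_combination -h * h1

theorem stuck_closure [NeZero n] (hodd : Odd n) {Z : Finset (ZMod n)} (h0 : 0 ∈ Z) (s : Set (ZMod n))
    (hs : ∀ h ∈ s, ∀ z ∈ Z, z + 2 * h ∈ Z) :
    Nat.card (AddSubgroup.closure s) ≤ Z.card := by
  have key : ∀ h ∈ AddSubgroup.closure s, ∀ z ∈ Z, z + h ∈ Z := by
    intro h hh
    induction hh using AddSubgroup.closure_induction with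
    | mem x hx => exact stuck_mem hodd (hs x hx)
    | zero => simp
    | add x y _ _ hx hy => intro z hz; rw [← add_assoc]; exact hy _ (hx _ hz)
    | neg x _ hx =>
      intro z hz
      have := iter_mem hx (n - 1) z hz
      convert this using 2
      rw [Nat.cast_sub (NeZero.one_le)]; simp
  have : Nat.card (AddSubgroup.closure s) ≤ Nat.card Z := by
    apply Nat.card_le_card_of_injective (fun x => (⟨x.1, by simpa using key x.1 x.2 0 h0⟩ : Z))
    intro x y hxy
    exact Subtype.ext (congrArg (fun w : Z => (w : ZMod n)) hxy)
  simpa using this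

/-- small odd signed zero-sum subsequence -/
def OddOut (k : ℕ) (S : Multiset (DihedralGroup n)) : Prop :=
  ∃ O ≤ S, Good O ∧ Odd (card O) ∧ ((rc O ≠ 0 ∧ card O ≤ 2 * k + 1) ∨ card O ≤ k + 1)

theorem OddOut.mono {k : ℕ} {S T : Multiset (DihedralGroup n)} (h : S ≤ T) (hS : OddOut k S) :
    OddOut k T := by
  obtain ⟨O, h1, h2⟩ := hS
  exact ⟨O, h1.trans h, h2⟩

theorem card_sub_rc {A B : Multiset (DihedralGroup n)} (h : A ≤ B) :
    card A + rc B ≤ card B + rc A := by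
  obtain ⟨C, rfl⟩ := Multiset.le_iff_exists_add.1 h
  have := rc_le_card C
  simp; omega

theorem stuck_odd (hodd : Odd n) {J C : Multiset (DihedralGroup n)} (hM : rc (J + C) = 0)
    (hC : C ≠ 0) (hs : ∀ g ∈ C, ∀ z ∈ Zs J, z + 2 * vl g ∈ Zs J) :
    ∃ O ≤ (J + C) + (J + C), Good O ∧ Odd (card O) ∧ card O ≤ 2 * card J + 1 := by
  obtain ⟨g, hg⟩ := Multiset.exists_mem_of_ne_zero hC
  have h1 := stuck_mem hodd (hs g hg) 0 (zero_mem_Zs J)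
  rw [zero_add] at h1
  obtain ⟨A, hA, hv⟩ := mem_Zs.1 h1
  have hgC : {g} ≤ C := by simpa using hg
  simp at hM
  have r1 := rc_mono hgC
  have r2 := rc_mono hA
  have r3 := Multiset.card_le_card hA
  refine ⟨{g} + (A + A), ?_, ⟨{g}, A + A, rfl, ?_, ?_⟩, ?_, ?_⟩
  · calc {g} + (A + A) ≤ C + (J + J) := add_le_add hgC (dbl_mono hA)
      _ ≤ C + (J + J) + C := Multiset.le_add_right _ _
      _ = _ := by abel
  · rw [hv]; simp
  · rw [rc_add]; omega
  · exact ⟨card A, by simp; ring⟩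
  · simp; omega

theorem X_main [NeZero n] (hodd : Odd n) {k : ℕ} (hk : n < 2 ^ (k + 1))
    {L P : Multiset (DihedralGroup n)} (hL : L.Nodup) (hc : card L = k + 2) (hf : 2 ≤ rc L)
    (hP : k ≤ card P) :
    OddOut k (L + (P + P)) ∨ ∃ K ≤ L, ∃ J ≤ P, 2 ≤ card K ∧ Even (card K) ∧ card J + card J ≤ k + 1 ∧
      Good (K + (J + J)) := by
  classical
  have hrL := rc_le_card L
  have main : OddOut k (L + (P + P)) ∨ ∃ K ≤ L, K ≠ 0 ∧ ∃ J ≤ P, 2 * card J ≤ rc L - 1 ∧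
      Good (K + (J + J)) := by
    obtain ⟨R, F, rfl, hR, hF⟩ := split_rf P
    have hr0 := rc_eq_zero_of hR
    have hf0 := rc_eq_card_of hF
    rw [Multiset.card_add] at hP
    set q := (rc L - 1) / 2 with hq
    by_cases hFq : q ≤ card F
    · obtain ⟨Q, hQ, hQc⟩ := exists_sub_card F q hFq
      obtain ⟨K, h1, h2, J, h3, h4⟩ := X_refl hL (by omega) (by rw [hc]; exact hk)
        (rc_eq_card_sub hQ hf0) (by omega)
      right
      have := Multiset.card_le_card h3
      exact ⟨K, h1, h2, J, h3.trans (hQ.trans (Multiset.le_add_left _ _)), by omega, h4⟩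
    · rcases chain2 R q with ⟨J, h1, h2, h3⟩ | ⟨J, C, h1, h2, h3, h4⟩
      · obtain ⟨K, g1, g2, J', g3, g4⟩ := X_rot hL hf (by rw [hc]; exact hk)
          (J := J) (by have := rc_mono h1; omega) (by omega)
        right
        have := Multiset.card_le_card g3
        exact ⟨K, g1, g2, J', g3.trans (h1.trans (Multiset.le_add_right _ _)), by omega, g4⟩
      · left
        have hCc : card J + card C = card R := by rw [← h1]; simp
        obtain ⟨O, o1, o2, o3, o4⟩ := stuck_odd hodd (J := J) (C := C) (by rw [h1]; exact hr0)
          (by rintro rfl; simp at hCc; omega) h4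
        refine ⟨O, ?_, o2, o3, Or.inr (by omega)⟩
        rw [h1] at o1
        refine o1.trans ((dbl_mono (Multiset.le_add_right R F)).trans (Multiset.le_add_left _ _))
  rcases main with h | ⟨K, hK, hK0, J, hJ, hJc, hG⟩
  · exact Or.inl h
  have hKc := Multiset.card_le_card hK
  have hKt := card_sub_rc hK
  have hKp : 0 < card K := Multiset.card_pos.2 hK0
  rcases Nat.even_or_odd (card K) with he | ho
  · right
    refine ⟨K, hK, J, hJ, ?_, he, by omega, hG⟩
    obtain ⟨m, hm⟩ := he
    omega
  · left
    have hev := hG.even_rc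
    simp only [rc_add] at hev
    have hrJ := rc_le_card J
    have hrK := rc_le_card K
    obtain ⟨m, hm⟩ := ho
    obtain ⟨s, hs⟩ := hev
    refine ⟨K + (J + J), add_le_add hK (dbl_mono hJ), hG, ⟨m + card J, by simp; omega⟩, ?_⟩
    simp only [rc_add, Multiset.card_add]
    by_cases hz : rc K + (rc J + rc J) = 0
    · right; omega
    · left; refine ⟨hz, by omega⟩

theorem phase2 [NeZero n] (hodd : Odd n) {k : ℕ} (hk : n < 2 ^ (k + 1)) (e : ℕ) :
    ∀ L P : Multiset (DihedralGroup n), L.Nodup → card L ≤ k + 1 + 2 * e → card L ≤ rc L + k →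
      e * (k + 1) + k ≤ 2 * card P →
    OddOut k (L + (P + P)) ∨ ∃ W L' P', Good W ∧ Even (card W) ∧ W + L' + (P' + P') = L + (P + P) ∧
      card L' ≤ k + 1 ∧ k ≤ 2 * card P' := by
  induction e with
  | zero => 
    intro L P h1 h2 h3 h4
    right
    exact ⟨0, L, P, Good.zero, by simp, by simp, by simpa using h2, by simpa using h4⟩
  | succ e ih =>
    intro L P h1 h2 h3 h4
    by_cases hs : card L ≤ k + 1
    · right
      refine ⟨0, L, P, Good.zero, by simp, by simp, hs, ?_⟩
      have : 0 ≤ (e + 1) * (k + 1) := Nat.zero_le _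
      omega
    have hmul : (e + 1) * (k + 1) = e * (k + 1) + (k + 1) := by ring
    rw [hmul] at h4
    obtain ⟨L1, hL1, hc1⟩ := exists_sub_card L (k + 2) (by omega)
    have ht := card_sub_rc hL1
    rcases X_main hodd hk (Multiset.nodup_of_le hL1 h1) hc1 (by omega) (P := P) (by omega) with
      hO | ⟨K, hK, J, hJ, hK2, hKe, hJc, hG⟩
    · left; exact hO.mono (add_le_add hL1 le_rfl)
    · have hKL := hK.trans hL1
      obtain ⟨L2, rfl⟩ := Multiset.le_iff_exists_add.1 hKL
      obtain ⟨P2, rfl⟩ := Multiset.le_iff_exists_add.1 hJ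
      simp only [Multiset.card_add, rc_add] at h2 h3 h4
      have hrk := rc_le_card K
      rcases ih L2 P2 (Multiset.nodup_of_le (Multiset.le_add_left _ _) h1) (by omega) (by omega)
        (by omega) with hO | ⟨W, L', P', w1, w2, w3, w4, w5⟩
      · left
        refine hO.mono ?_
        calc L2 + (P2 + P2) ≤ (L2 + (P2 + P2)) + (K + (J + J)) := Multiset.le_add_right _ _
          _ = _ := by abel
      · right
        refine ⟨K + (J + J) + W, L', P', hG.add w1, ?_, ?_, w4, w5⟩
        · simp only [Multiset.card_add]
          obtain ⟨a, ha⟩ := hKe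
          obtain ⟨b, hb⟩ := w2
          exact ⟨a + card J + b, by omega⟩
        · calc K + (J + J) + W + L' + (P' + P') = K + (J + J) + (W + L' + (P' + P')) := by abel
            _ = _ := by rw [w3]; abel

theorem phase1 [NeZero n] {k : ℕ} (hk : n < 2 ^ (k + 1)) (m : ℕ) :
    ∀ L : Multiset (DihedralGroup n), L.Nodup → card L ≤ m →
    OddOut k L ∨ ∃ W L', Good W ∧ Even (card W) ∧ W + L' = L ∧ card L' ≤ rc L' + k ∧
      rc L' * (rc L' - 1) ≤ 2 * n := by
  induction m with
  | zero =>
    intro L _ h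
    have : L = 0 := by simpa using h
    subst this
    right; exact ⟨0, 0, Good.zero, by simp, by simp, by simp, by simp⟩
  | succ m ih =>
    intro L hL hc
    have recu : ∀ W ≤ L, Good W → W ≠ 0 → Even (card W) →
        OddOut k L ∨ ∃ W L', Good W ∧ Even (card W) ∧ W + L' = L ∧ card L' ≤ rc L' + k ∧
        rc L' * (rc L' - 1) ≤ 2 * n := by
      intro W hW hG h0 he
      obtain ⟨L2, rfl⟩ := Multiset.le_iff_exists_add.1 hW
      have : 0 < card W := Multiset.card_pos.2 h0
      rw [Multiset.card_add] at hc
      rcases ih L2 (Multiset.nodup_of_le (Multiset.le_add_left _ _) hL) (by omega) with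
        hO | ⟨W', L', w1, w2, w3, w4⟩
      · left; exact hO.mono (Multiset.le_add_left _ _)
      · right
        refine ⟨W + W', L', hG.add w1, ?_, ?_, w4⟩
        · rw [Multiset.card_add]; exact he.add w2
        · rw [add_assoc, w3]
    by_cases h1 : card L ≤ rc L + k
    · by_cases h2 : rc L * (rc L - 1) ≤ 2 * n
      · right; exact ⟨0, L, Good.zero, by simp, by simp, h1, h2⟩
      · obtain ⟨W, w1, w2, w3⟩ := quad_good hL (by omega)
        exact recu W w1 w2 (by rintro rfl; simp at w3) (by rw [w3]; decide)
    · obtain ⟨R, F, rfl, hR, hF⟩ := split_rf L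
      have hr0 := rc_eq_zero_of hR
      have hf0 := rc_eq_card_of hF
      simp only [Multiset.card_add, rc_add] at h1
      obtain ⟨R1, hR1, hR1c⟩ := exists_sub_card R (k + 1) (by omega)
      obtain ⟨K, k1, k2, k3⟩ := rot_good (Multiset.nodup_of_le (hR1.trans (Multiset.le_add_right _ _)) hL)
        (by have := rc_mono hR1; omega) (by rw [hR1c]; exact hk)
      have hKL : K ≤ R + F := k1.trans (hR1.trans (Multiset.le_add_right _ _))
      rcases Nat.even_or_odd (card K) with he | ho
      · exact recu K hKL k3 k2 he
      · left
        refine ⟨K, hKL, k3, ho, Or.inr ?_⟩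
        rw [← hR1c]; exact Multiset.card_le_card k1

theorem even_lemma [NeZero n] (hodd : Odd n) {k : ℕ} (hk : n < 2 ^ (k + 1))
    (S : Multiset (DihedralGroup n)) (N : ℕ) (hN : Even N) (hS : card S = N + k)
    (he : ∀ L ≤ S, L.Nodup → card L ≤ rc L + k → rc L * (rc L - 1) ≤ 2 * n →
      ∃ e, card L ≤ k + 1 + 2 * e ∧ e * (k + 1) + k + S.toFinset.card ≤ card S) :
    OddOut k S ∨ ∃ T ≤ S, card T = N ∧ Good T := by
  obtain ⟨D, P, rfl, hD⟩ := pair_decomp S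
  have hDc := nodup_card_le (S := D + (P + P)) (by simp) hD
  rcases phase1 hk (card D) D hD le_rfl with hO | ⟨W, L, w1, w2, rfl, w4, w5⟩
  · left; exact hO.mono (by simp)
  have hLn := Multiset.nodup_of_le (Multiset.le_add_left _ _) hD
  obtain ⟨e, e1, e2⟩ := he L ((Multiset.le_add_left L W).trans (Multiset.le_add_right _ _)) hLn w4 w5
  simp only [Multiset.card_add] at e2 hDc hS
  rcases phase2 hodd hk e L P hLn e1 w4 (by omega) with hO | ⟨W', L', P', v1, v2, v3, v4, v5⟩
  · left; refine hO.mono ?_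
    rw [add_assoc]; exact Multiset.le_add_left _ _
  right
  have hcard := congrArg card v3
  simp only [Multiset.card_add] at hcard
  obtain ⟨a, ha⟩ := w2
  obtain ⟨b, hb⟩ := v2
  obtain ⟨m, rfl⟩ := hN
  obtain ⟨Q, hQ, hQc⟩ := exists_sub_card P' (m - a - b) (by omega)
  refine ⟨W + (W' + (Q + Q)), ?_, ?_, w1.add (v1.add (Good.dbl Q))⟩
  · have : W + L + (P + P) = W + (W' + L' + (P' + P')) := by rw [v3]; abel
    rw [this]
    refine add_le_add le_rfl (add_le_add (Multiset.le_add_right _ _) (dbl_mono hQ))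
  · simp only [Multiset.card_add]; omega

end DihAux

namespace DihAux

open Multiset DihedralGroup

variable {n : ℕ}

/-- all rotations are in normal form -/
def Nm (T : Multiset (DihedralGroup n)) : Prop := ∀ i : ZMod n, r i ∈ T → i.val ≤ n / 2

theorem Nm.mono {S T : Multiset (DihedralGroup n)} (h : Nm T) (hS : S ≤ T) : Nm S :=
  fun i hi => h i (Multiset.mem_of_le hS hi)

theorem nrm_val [NeZero n] (i : ZMod n) : (nrm i).val ≤ n / 2 := by
  unfold nrm
  split
  · assumption
  · rename_i h
    have h1 := ZMod.val_lt i
    rw [ZMod.neg_val]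
    split <;> omega

theorem nm_map [NeZero n] (S : Multiset (DihedralGroup n)) : Nm (S.map nu) := by
  intro i hi
  obtain ⟨g, _, hg⟩ := Multiset.mem_map.1 hi
  cases g with
  | r j => simp at hg; rw [← hg]; exact nrm_val j
  | sr j => simp at hg

theorem card_small [NeZero n] (s : Finset (ZMod n)) (h : ∀ i ∈ s, i.val ≤ n / 2) :
    s.card ≤ n / 2 + 1 := by
  have := Finset.card_le_card_of_injOn (s := s) (t := Finset.range (n / 2 + 1)) (fun i => i.val)
    (by intro i hi; simpa [Nat.lt_succ_iff] using h i hi)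
    (by intro i _ j _ hij; exact ZMod.val_injective n hij)
  simpa using this

theorem nm_card [NeZero n] {D : Multiset (DihedralGroup n)} (hD : D.Nodup) (h : Nm D) :
    card D ≤ rc D + (n / 2 + 1) := by
  obtain ⟨X, Y, rfl⟩ := decomp D
  rw [Multiset.nodup_add] at hD
  have hX : X.Nodup := Multiset.Nodup.of_map _ hD.1
  have := card_small ⟨X, hX⟩ (by
    intro i hi
    apply h
    rw [Multiset.mem_add]; left
    exact Multiset.mem_map_of_mem _ hi)
  have h2 : card X ≤ n / 2 + 1 := this
  simp; omega

theorem rc_nodup_le [NeZero n] {D : Multiset (DihedralGroup n)} (hD : D.Nodup) : rc D ≤ n := by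
  obtain ⟨X, Y, rfl⟩ := decomp D
  rw [Multiset.nodup_add] at hD
  have hY : Y.Nodup := Multiset.Nodup.of_map _ hD.2.1
  have := Finset.card_le_univ (⟨Y, hY⟩ : Finset (ZMod n))
  rw [ZMod.card] at this
  have h2 : card Y ≤ n := this
  simpa using h2

theorem fillF [NeZero n] {k d : ℕ} (hodd : Odd n) (hk : 1 ≤ k) (hnd : n ≤ d) (m : ℕ) :
    ∀ S : Multiset (DihedralGroup n), Nm S → Even m → d + k + m ≤ card S →
    ∃ T ≤ S, Good T ∧ (card T = m ∨ card T = m + 2) := by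
  induction m using Nat.strong_induction_on with
  | _ m ih =>
    intro S hS he hc
    by_cases h0 : m = 0
    · exact ⟨0, by simp, Good.zero, by simp [h0]⟩
    obtain ⟨a, rfl⟩ := he
    by_cases hnp : S.Nodup
    · have h1 := nm_card hnp hS
      obtain ⟨b, hb⟩ := hodd
      have h2 : b + 3 ≤ rc S := by omega
      obtain ⟨W, w1, w2, w3⟩ := quad_good hnp (by
        have : (b + 3) * (b + 2) ≤ rc S * (rc S - 1) := Nat.mul_le_mul h2 (by omega)
        nlinarith)
      by_cases ha : a = 1
      · subst ha
        exact ⟨W, w1, w2, by simp [w3]⟩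
      · obtain ⟨S', rfl⟩ := Multiset.le_iff_exists_add.1 w1
        simp only [Multiset.card_add] at hc
        obtain ⟨T, t1, t2, t3⟩ := ih (a + a - 4) (by omega) S' (hS.mono (Multiset.le_add_left _ _))
          ⟨a - 2, by omega⟩ (by omega)
        refine ⟨W + T, add_le_add le_rfl t1, w2.add t2, ?_⟩
        simp only [Multiset.card_add]; omega
    · rw [Multiset.nodup_iff_le] at hnp
      push Not at hnp
      obtain ⟨g, hg⟩ := hnp
      obtain ⟨S', rfl⟩ := Multiset.le_iff_exists_add.1 hg
      simp at hc
      obtain ⟨T, t1, t2, t3⟩ := ih (a + a - 2) (by omega) S' (hS.mono (Multiset.le_add_left _ _))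
          ⟨a - 1, by omega⟩ (by omega)
      refine ⟨({g} + {g}) + T, ?_, (Good.dbl {g}).add t2, ?_⟩
      · exact add_le_add le_rfl t1
      · simp; omega

theorem fill_triple [NeZero n] {k d : ℕ} (hodd : Odd n) (hk : 1 ≤ k) (hn : 3 ≤ n) (hnd : n ≤ d)
    (hk2 : n < 2 ^ (k + 1)) (hd : Odd d) (S : Multiset (DihedralGroup n)) (hS : Nm S)
    (hc : card S + 3 = 2 * d + k) : ∃ T ≤ S, Good T ∧ card T + 3 = d := by
  by_cases h3 : d = 3
  · exact ⟨0, by simp, Good.zero, by simp [h3]⟩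
  have hnp : ¬ S.Nodup := by
    intro hnp
    have h1 := nm_card hnp hS
    have h2 := rc_nodup_le hnp
    have h4 : 4 ≤ n → 2 ≤ k := by
      intro h; by_contra hh
      have : k = 1 := by omega
      subst this; omega
    obtain ⟨b, rfl⟩ := hodd
    obtain ⟨c, rfl⟩ := hd
    omega
  rw [Multiset.nodup_iff_le] at hnp
  push Not at hnp
  obtain ⟨g, hg⟩ := hnp
  obtain ⟨S', rfl⟩ := Multiset.le_iff_exists_add.1 hg
  simp at hc
  obtain ⟨c, rfl⟩ := hd
  obtain ⟨T, t1, t2, t3⟩ := fillF (d := 2 * c + 1) (k := k) hodd hk hnd (2 * c - 4) S'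
    (hS.mono (Multiset.le_add_left _ _)) ⟨c - 2, by omega⟩ (by omega)
  rcases t3 with t3 | t3
  · refine ⟨({g} + {g}) + T, add_le_add le_rfl t1, (Good.dbl {g}).add t2, ?_⟩
    simp; omega
  · exact ⟨T, t1.trans (Multiset.le_add_left _ _), t2, by omega⟩

/-- the first outcome of the main theorem -/
def Out (d : ℕ) (N : Multiset (DihedralGroup n)) : Prop :=
  ∃ T ≤ N, Good T ∧ rc T ≠ 0 ∧ (card T = d ∨ card T = 2 * d)

theorem triple_out [NeZero n] {k d : ℕ} (hodd : Odd n) (hk : 1 ≤ k) (hn : 3 ≤ n) (hnd : n ≤ d)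
    (hk2 : n < 2 ^ (k + 1)) (hd : Odd d) (N : Multiset (DihedralGroup n)) (hN : Nm N)
    (hc : card N = 2 * d + k) {T : Multiset (DihedralGroup n)} (hT : T ≤ N) (hG : Good T)
    (hr : rc T ≠ 0) (h3 : card T = 3) : Out d N := by
  obtain ⟨S, rfl⟩ := Multiset.le_iff_exists_add.1 hT
  simp only [Multiset.card_add] at hc
  obtain ⟨T', t1, t2, t3⟩ := fill_triple hodd hk hn hnd hk2 hd S (hN.mono (Multiset.le_add_left _ _))
    (by omega)
  refine ⟨T + T', add_le_add le_rfl t1, hG.add t2, by simp; omega, Or.inl ?_⟩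
  simp; omega

theorem odd_out {k d : ℕ} (hd : Odd d) (N : Multiset (DihedralGroup n))
    (hc : card N = 2 * d + k) (hm : N.toFinset.card ≤ d + k)
    {O : Multiset (DihedralGroup n)} (hO : O ≤ N) (hG : Good O)
    (hr : rc O ≠ 0) (ho : Odd (card O)) (hle : card O ≤ d) : Out d N := by
  obtain ⟨S, rfl⟩ := Multiset.le_iff_exists_add.1 hO
  simp only [Multiset.card_add] at hc
  have h1 := toFinset_card_mono (Multiset.le_add_left S O)
  obtain ⟨T', t1, t2, t3⟩ := simple_fill S (d - card O) (by
    obtain ⟨a, ha⟩ := ho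
    obtain ⟨b, hb⟩ := hd
    exact ⟨b - a, by omega⟩) (by omega)
  refine ⟨O + T', add_le_add le_rfl t1, hG.add t3, by simp; omega, Or.inl ?_⟩
  simp; omega

theorem even_out [NeZero n] {k d : ℕ} (hodd : Odd n) (hk2 : n < 2 ^ (k + 1)) (hd : Odd d)
    {E S : Multiset (DihedralGroup n)} 
    (hc : card (E + S) = 2 * d + k) (hm : (E + S).toFinset.card ≤ d + k) (h2k : 2 * k + 1 ≤ d)
    (hG : Good E) (hr : rc E ≠ 0) (hE : Even (card E))
    (hodd2 : ∀ c, Odd c → c ≤ k + 1 → c + card E ≤ d)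
    (he : ∀ L ≤ S, L.Nodup → card L ≤ rc L + k → rc L * (rc L - 1) ≤ 2 * n →
      ∃ e, card L ≤ k + 1 + 2 * e ∧ e * (k + 1) + k + S.toFinset.card ≤ card S) : Out d (E + S) := by
  have h1 := hodd2 1 (by decide) (by omega)
  have hc' := hc
  simp only [Multiset.card_add] at hc'
  rcases even_lemma hodd hk2 S (2 * d - card E) (by
    obtain ⟨a, ha⟩ := hE; exact ⟨d - a, by omega⟩) (by omega) he with ⟨O, o1, o2, o3, o4⟩ | ⟨T, t1, t2, t3⟩
  · rcases o4 with ⟨o4, o5⟩ | o4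
    · exact odd_out hd _ hc hm (o1.trans (Multiset.le_add_left _ _)) o2 o4 o3 (by omega)
    · refine odd_out hd _ hc hm (add_le_add le_rfl o1) (hG.add o2) (by simp; omega) ?_ ?_
      · rw [Multiset.card_add]; exact hE.add_odd o3
      · have := hodd2 _ o3 o4
        rw [Multiset.card_add]; omega
  · refine ⟨E + T, add_le_add le_rfl t1, hG.add t3, by simp; omega, Or.inr ?_⟩
    simp; omega

theorem ar0 (k e f n : ℕ) (hk : 1 ≤ k) (h : 2 * e + k ≤ f) (hf : f * (f - 1) ≤ 2 * n) :
    e * (k + 1) ≤ n := by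
  by_cases he : e = 0
  · simp [he]
  · obtain ⟨g, rfl⟩ : ∃ g, f = g + 1 := ⟨f - 1, by omega⟩
    simp at hf
    have h1 : (k + 1) * (2 * e) ≤ (g + 1) * g := Nat.mul_le_mul (by omega) (by omega)
    nlinarith

theorem refl_out [NeZero n] {k d : ℕ} (hodd : Odd n) (hk : 1 ≤ k) (hnd : n ≤ d)
    (hk2 : n < 2 ^ (k + 1)) (N : Multiset (DihedralGroup n)) (hd : 0 < d)
    (hc : card N = 2 * d + k) (hr : rc N = card N) : Out d N := by
  have hm : N.toFinset.card ≤ n := by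
    have := rc_nodup_le (Multiset.nodup_dedup N)
    rwa [rc_eq_card_sub (Multiset.dedup_le N) hr] at this
  rcases even_lemma hodd hk2 N (2 * d) (by simp) hc (by
    intro L hL hLn h1 h2
    have h3 := rc_eq_card_sub hL hr
    refine ⟨(card L - k) / 2, by omega, ?_⟩
    by_cases hlk : k ≤ card L
    · have := ar0 k ((card L - k) / 2) (rc L) n hk (by omega) h2
      omega
    · have : (card L - k) / 2 = 0 := by omega
      rw [this]; omega) with ⟨O, o1, o2, o3, o4⟩ | ⟨T, t1, t2, t3⟩
  · have h3 := rc_eq_card_sub o1 hr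
    have h4 := o2.even_rc
    rw [h3] at h4
    exact absurd h4 (by simpa using o3)
  · have h3 := rc_eq_card_sub t1 hr
    exact ⟨T, t1, t3, by omega, Or.inr t2⟩

theorem sq_le_two_pow (k : ℕ) (hk : 3 ≤ k) : (k + 1) ^ 2 ≤ 2 ^ (k + 1) := by
  induction k, hk using Nat.le_induction with
  | base => norm_num
  | succ k hk ih => rw [pow_succ 2 (k + 1)]; nlinarith

theorem lin_le_two_pow (k : ℕ) (hk : 6 ≤ k) : 6 * k + 9 ≤ 2 ^ k := by
  induction k, hk using Nat.le_induction with
  | base => norm_num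
  | succ k hk ih => rw [pow_succ 2 k]; omega

theorem ar_big (n k f : ℕ) (h1 : 2 ^ k ≤ n) (hk : 6 ≤ k) (hf : f * (f - 1) ≤ 2 * n) :
    4 * (f / 2 * (k + 1)) + 4 * k + 7 ≤ 5 * n := by
  have h3 := sq_le_two_pow k (by omega)
  have h4 := lin_le_two_pow k hk
  rw [pow_succ 2 k] at h3
  by_cases h0 : f = 0
  · subst h0; simp; omega
  obtain ⟨g, rfl⟩ : ∃ g, f = g + 1 := ⟨f - 1, by omega⟩
  simp at hf
  have h5 : 2 * ((g + 1) / 2) ≤ g + 1 := by omega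
  have h6 : 2 * ((g + 1) / 2) * (k + 1) ≤ (g + 1) * (k + 1) := Nat.mul_le_mul h5 le_rfl
  have h7 : 2 * (g * (k + 1)) ≤ g ^ 2 + (k + 1) ^ 2 := by
    have := two_mul_le_add_sq g (k + 1); linarith
  nlinarith

theorem ar1 (n k f : ℕ) (hn : 3 ≤ n) (h1 : 2 ^ k ≤ n) (h2 : n < 2 ^ (k + 1))
    (hf : f * (f - 1) ≤ 2 * n) (hf2 : 2 * f + 1 ≤ n) : 4 * (f / 2 * (k + 1)) + 11 ≤ 5 * n := by
  by_cases hk : 6 ≤ k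
  · have := ar_big n k f h1 hk hf; omega
  · push Not at hk
    have hf3 : f < 12 := by
      by_contra hh
      have : 12 * 11 ≤ f * (f - 1) := Nat.mul_le_mul (by omega) (by omega)
      have : 2 ^ (k + 1) ≤ 2 ^ 6 := Nat.pow_le_pow_right (by norm_num) (by omega)
      omega
    interval_cases k <;> interval_cases f <;> simp at * <;> omega

theorem ar2 (n k f : ℕ) (hk3 : 3 ≤ k) (hn : 2 * k + 5 ≤ n) (h1 : 2 ^ k + 1 ≤ n) (h2 : n < 2 ^ (k + 1))
    (hf : f * (f - 1) ≤ 2 * n) (hf2 : 2 * f + 1 ≤ n) :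
    4 * (f / 2 * (k + 1)) + 4 * k + 7 ≤ 5 * n := by
  by_cases hk : 6 ≤ k
  · exact ar_big n k f (by omega) hk hf
  · push Not at hk
    have hf3 : f < 12 := by
      by_contra hh
      have : 12 * 11 ≤ f * (f - 1) := Nat.mul_le_mul (by omega) (by omega)
      have : 2 ^ (k + 1) ≤ 2 ^ 6 := Nat.pow_le_pow_right (by norm_num) (by omega)
      omega
    interval_cases k <;> interval_cases f <;> simp at * <;> omega

end DihAux

namespace DihAux

open Multiset DihedralGroup

variable {n : ℕ}

/-- no short odd good triple with reflections -/
def NoTri (N : Multiset (DihedralGroup n)) : Prop :=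
  ∀ T ≤ N, Good T → rc T ≠ 0 → card T ≠ 3

theorem notri_diff {N : Multiset (DihedralGroup n)} (h : NoTri N) {u a b : ZMod n}
    (hu : r u ∈ N) (ha : sr a ∈ N) (hb : sr b ∈ N) (hab : a ≠ b) : u ≠ a - b := by
  rintro rfl
  refine h ({sr a} + (r (a - b) ::ₘ {sr b})) ?_ ?_ (by simp) (by simp)
  · rw [Multiset.le_iff_subset]
    · intro x hx
      simp at hx
      rcases hx with rfl | rfl | rfl <;> assumption
    · simp [hab]
  · exact ⟨{sr a}, r (a - b) ::ₘ {sr b}, rfl, by simp, by simp⟩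

theorem notri_zero {N : Multiset (DihedralGroup n)} (h : NoTri N) 
    (hu : r 0 ∈ N) (a : ZMod n) : ¬ sr a ::ₘ sr a ::ₘ 0 ≤ N := by
  intro ha
  refine h (sr a ::ₘ sr a ::ₘ {r 0}) ?_ ?_ (by simp) (by simp)
  · rw [Multiset.le_iff_count] at ha ⊢
    intro x
    have h1 := ha x
    have h2 : 1 ≤ count (r 0) N := Multiset.one_le_count_iff_mem.2 hu
    by_cases hx : x = r 0
    · subst hx
      have h3 : (r 0 : DihedralGroup n) ≠ sr a := by intro h; cases h
      rw [Multiset.count_cons_of_ne h3, Multiset.count_cons_of_ne h3, Multiset.count_singleton_self]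
      exact h2
    · simpa [-r_zero, Multiset.count_cons, Multiset.count_singleton, hx] using h1
  · exact ⟨{sr a}, sr a ::ₘ {r 0}, by simp, by simp [-r_zero], by simp [-r_zero]⟩

theorem struct [NeZero n] (hodd : Odd n) {N : Multiset (DihedralGroup n)} (hN : Nm N)
    (h : NoTri N) {u : ZMod n} (hu0 : u ≠ 0) (hu : r u ∈ N) (hr : rc N ≠ 0) :
    (∀ L ≤ N, L.Nodup → 2 * rc L + 1 ≤ n) ∧ 4 * N.toFinset.card ≤ 3 * n + 3 := by
  classical
  set A : Finset (ZMod n) := Finset.univ.filter (fun i => sr i ∈ N) with hA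
  set U : Finset (ZMod n) := Finset.univ.filter (fun i => r i ∈ N) with hU
  have hmA : ∀ i, i ∈ A ↔ sr i ∈ N := by intro i; simp [hA]
  have hmU : ∀ i, i ∈ U ↔ r i ∈ N := by intro i; simp [hU]
  have hNc : N.toFinset.card ≤ A.card + U.card := by
    have : N.toFinset ⊆ A.image sr ∪ U.image r := by
      intro g hg
      rw [Multiset.mem_toFinset] at hg
      cases g with
      | r i => 
        rw [Finset.mem_union]; right
        exact Finset.mem_image_of_mem _ ((hmU i).2 hg)
      | sr i =>
        rw [Finset.mem_union]; left
        exact Finset.mem_image_of_mem _ ((hmA i).2 hg)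
    refine (Finset.card_le_card this).trans ((Finset.card_union_le _ _).trans ?_)
    exact add_le_add Finset.card_image_le Finset.card_image_le
  have h2A : 2 * A.card + 1 ≤ n := by
    have hdis : Disjoint A (A.image (fun a => a + u)) := by
      rw [Finset.disjoint_left]
      intro a ha hb
      obtain ⟨b, hb, hab⟩ := Finset.mem_image.1 hb
      refine notri_diff h hu ((hmA a).1 ha) ((hmA b).1 hb) ?_ ?_
      · intro e
        rw [e] at hab
        simp at hab
        exact hu0 hab
      · rw [← hab]; simp
    have h1 := Finset.card_le_univ (A ∪ A.image (fun a => a + u))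
    rw [Finset.card_union_of_disjoint hdis, ZMod.card,
      Finset.card_image_of_injective _ (add_left_injective u)] at h1
    obtain ⟨b, hb⟩ := hodd
    omega
  constructor
  · intro L hL hLn
    obtain ⟨X, Y, rfl⟩ := decomp L
    rw [Multiset.nodup_add] at hLn
    have hY : Y.Nodup := Multiset.Nodup.of_map _ hLn.2.1
    have : (⟨Y, hY⟩ : Finset (ZMod n)).card ≤ A.card := by
      apply Finset.card_le_card
      intro i hi
      rw [hmA]
      apply Multiset.mem_of_le hL
      rw [Multiset.mem_add]; right
      exact Multiset.mem_map_of_mem _ hi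
    have h2 : card Y ≤ A.card := this
    simp; omega
  · obtain ⟨g, hg, hg1⟩ := rc_pos_iff hr
    cases g with
    | r i => simp at hg1
    | sr a =>
    set B := (A.erase a).image (fun x => nrm (x - a)) with hB
    have hAB : A.card ≤ 2 * B.card + 1 := by
      have h1 : (A.erase a).card ≤ 2 * B.card := by
        refine Finset.card_le_mul_card_image _ 2 ?_
        intro b _
        have : {x ∈ A.erase a | nrm (x - a) = b} ⊆ {a + b, a - b} := by
          intro x hx
          rw [Finset.mem_filter] at hx
          have hx2 := hx.2
          rw [Finset.mem_insert, Finset.mem_singleton]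
          rcases nrm_or (x - a) with e | e
          · left; rw [← hx2, e]; ring
          · right; rw [← hx2, e]; ring
        exact (Finset.card_le_card this).trans Finset.card_le_two
      have h2 := Finset.pred_card_le_card_erase (s := A) (a := a)
      omega
    have hdis : Disjoint U B := by
      rw [Finset.disjoint_left]
      intro x hx hxB
      obtain ⟨y, hy, hyx⟩ := Finset.mem_image.1 hxB
      rw [Finset.mem_erase] at hy
      have hx' := (hmU x).1 hx
      have hy' := (hmA y).1 hy.2
      rcases nrm_or (y - a) with e | e
      · exact notri_diff h hx' hy' hg hy.1 (by rw [← hyx, e])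
      · exact notri_diff h hx' hg hy' hy.1.symm (by rw [← hyx, e]; ring)
    have hc := card_small (U ∪ B) (by
      intro i hi
      rw [Finset.mem_union] at hi
      rcases hi with hi | hi
      · exact hN i ((hmU i).1 hi)
      · obtain ⟨y, hy, rfl⟩ := Finset.mem_image.1 hi
        exact nrm_val _)
    rw [Finset.card_union_of_disjoint hdis] at hc
    obtain ⟨b, hb⟩ := hodd
    omega

/-- the second outcome of the main theorem -/
def Out2 (d : ℕ) (N : Multiset (DihedralGroup n)) : Prop :=
  ∃ H : AddSubgroup (ZMod n), ∃ Y ≤ N, rc Y = 0 ∧ (∀ g ∈ Y, vl g ∈ H) ∧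
    d + Nat.card H - 1 ≤ card Y

theorem two_k_le (k : ℕ) (hk : 1 ≤ k) : 2 * k ≤ 2 ^ k := by
  induction k, hk using Nat.le_induction with
  | base => norm_num
  | succ k hk ih => rw [pow_succ 2 k]; omega

theorem three_k_le (k : ℕ) (hk : 4 ≤ k) : 3 * k + 3 ≤ 2 ^ k := by
  induction k, hk using Nat.le_induction with
  | base => norm_num
  | succ k hk ih => rw [pow_succ 2 k]; omega

theorem out_pair [NeZero n] {k d : ℕ} (hodd : Odd n) (hk : 1 ≤ k) (hn : 3 ≤ n) (hnd : n ≤ d)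
    (hk1 : 2 ^ k + 1 ≤ n) (hk2 : n < 2 ^ (k + 1)) (hd : Odd d) (N : Multiset (DihedralGroup n))
    (hc : card N = 2 * d + k)
    (hs1 : ∀ L ≤ N, L.Nodup → 2 * rc L + 1 ≤ n) (hs2 : 4 * N.toFinset.card ≤ 3 * n + 3)
    (a : ZMod n) (ha : sr a ::ₘ sr a ::ₘ 0 ≤ N) : Out d N := by
  have h2k := two_k_le k hk
  obtain ⟨S, rfl⟩ := Multiset.le_iff_exists_add.1 ha
  have hmS := toFinset_card_mono (Multiset.le_add_left S (sr a ::ₘ sr a ::ₘ 0))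
  have hcS : card S + 2 = 2 * d + k := by
    rw [Multiset.card_add] at hc; simp at hc; omega
  refine even_out hodd hk2 hd hc (by omega) (by omega) (Good.dbl {sr a}) (by simp) (by simp) ?_ ?_
  · intro c hco hck
    simp
    by_cases hk3 : 3 ≤ k
    · have h3 : k + 2 ≤ 2 ^ k := by
        have : ∀ j, 3 ≤ j → j + 2 ≤ 2 ^ j := by
          intro j hj
          induction j, hj using Nat.le_induction with
          | base => norm_num
          | succ k hk ih => rw [pow_succ 2 k]; omega
        exact this k hk3
      omega
    · obtain ⟨b, rfl⟩ := hco
      interval_cases k <;> simp at * <;> omega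
  · intro L hL hLn h1 h2
    refine ⟨rc L / 2, by omega, ?_⟩
    have h3 := hs1 L (hL.trans (Multiset.le_add_left _ _)) hLn
    have := ar1 n k (rc L) hn (by omega) hk2 h2 h3
    omega

theorem out_iv [NeZero n] {k d : ℕ} (hodd : Odd n) (hk : 1 ≤ k) (hn : 3 ≤ n) (hnd : n ≤ d)
    (hk1 : 2 ^ k + 1 ≤ n) (hk2 : n < 2 ^ (k + 1)) (hd : Odd d) (N : Multiset (DihedralGroup n))
    (hc : card N = 2 * d + k)
    (hs1 : ∀ L ≤ N, L.Nodup → 2 * rc L + 1 ≤ n) (hs2 : 4 * N.toFinset.card ≤ 3 * n + 3)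
    (hF : k + 2 ≤ rc N)
    (hnp : ∀ a : ZMod n, ¬ sr a ::ₘ sr a ::ₘ 0 ≤ N) : Out d N ∨ Out2 d N := by
  classical
  have h2k := two_k_le k hk
  obtain ⟨R, F, rfl, hR, hF1⟩ := split_rf N
  have hr0 := rc_eq_zero_of hR
  have hf0 := rc_eq_card_of hF1
  have hFn : F.Nodup := by
    rw [Multiset.nodup_iff_le]
    intro g hg
    have hgF : g ∈ F := Multiset.mem_of_le hg (by simp)
    cases g with
    | r i => have := hF1 _ hgF; simp at this
    | sr i => exact hnp i (hg.trans (Multiset.le_add_left _ _))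
  have hv := hs1 F (Multiset.le_add_left _ _) hFn
  rw [rc_add] at hF
  have hn5 : 2 * k + 5 ≤ n := by omega
  have hFc : k + 2 ≤ card F := by omega
  have hk3 : 3 ≤ k := by
    by_contra hh
    have : k = 1 ∨ k = 2 := by omega
    rcases this with rfl | rfl <;> omega
  obtain ⟨D, P, rfl, hD⟩ := pair_decomp R
  have hDF : (D + F).Nodup := by
    rw [Multiset.nodup_add]
    refine ⟨hD, hFn, ?_⟩
    rw [Multiset.disjoint_left]
    intro g g1 g2
    have e1 := hR g (by simp [g1])
    have e2 := hF1 g g2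
    omega
  have hDFc := nodup_card_le (S := D + (P + P) + F) (add_le_add (Multiset.le_add_right D (P + P)) le_rfl) hDF
  simp only [Multiset.card_add, rc_add] at hc hr0 hDFc
  set q := (k + 1) / 2 with hq
  have hPN : P + P ≤ D + (P + P) + F := (Multiset.le_add_left _ _).trans (Multiset.le_add_right _ _)
  rcases chain2 P q with ⟨J, j1, j2, j3⟩ | ⟨J, C, rfl, j2, j3, j4⟩
  · left
    obtain ⟨L, l1, l2⟩ := exists_sub_card F (k + 2) (by omega)
    have l3 := rc_eq_card_sub l1 hf0
    have hrJ : rc J = 0 := by have := rc_mono j1; omega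
    obtain ⟨K, k1, k2, J', k3, k4⟩ := X_rot (J := J) (Multiset.nodup_of_le l1 hFn) (by omega)
      (by rw [l2]; exact hk2) hrJ (by omega)
    have k5 := rc_eq_card_sub (k1.trans l1) hf0
    have k6 : 0 < card K := Multiset.card_pos.2 k2
    have k7 : rc J' = 0 := by have := rc_mono k3; omega
    have k8 := Multiset.card_le_card k3
    have k9 := Multiset.card_le_card k1
    have hev := k4.even_rc
    simp only [rc_add, k7, k5, add_zero] at hev
    have hEN : K + (J' + J') ≤ D + (P + P) + F := by
      have : K + (J' + J') ≤ F + (P + P) := add_le_add (k1.trans l1) (dbl_mono (k3.trans j1))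
      refine this.trans ?_
      calc F + (P + P) ≤ D + (F + (P + P)) := Multiset.le_add_left _ _
        _ = _ := by abel
    obtain ⟨S, hS⟩ := Multiset.le_iff_exists_add.1 hEN
    have hcS := congrArg card hS
    simp only [Multiset.card_add] at hcS
    have hSm : S.toFinset.card + card K ≤ (D + (P + P) + F).toFinset.card := by
      rw [← Multiset.toFinset_card_of_nodup (Multiset.nodup_of_le (k1.trans l1) hFn),
        ← Finset.card_union_of_disjoint]
      · apply Finset.card_le_card
        rw [hS]
        intro g hg
        simp only [Finset.mem_union, Multiset.mem_toFinset, Multiset.mem_add] at hg ⊢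
        tauto
      · rw [Finset.disjoint_left]
        intro g g1 g2
        rw [Multiset.mem_toFinset] at g1 g2
        have g3 := hF1 g (Multiset.mem_of_le (k1.trans l1) g2)
        cases g with
        | r i => simp at g3
        | sr i =>
          apply hnp i
          rw [hS]
          have e1 : ({sr i} : Multiset (DihedralGroup n)) ≤ K + (J' + J') := by simp [g2]
          have e2 : ({sr i} : Multiset (DihedralGroup n)) ≤ S := by simp [g1]
          exact add_le_add e1 e2
    obtain ⟨w, hw⟩ := hev
    rw [hS]
    rw [hS] at hs2 hs1
    refine even_out hodd hk2 hd ?_ ?_ (by omega) k4 ?_ ?_ ?_ ?_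
    · simp only [Multiset.card_add]; omega
    · omega
    · simp only [rc_add]; omega
    · simp only [Multiset.card_add]; exact ⟨w + card J', by omega⟩
    · intro c hco hck
      simp only [Multiset.card_add]
      obtain ⟨b, rfl⟩ := hco
      by_cases hk4 : 4 ≤ k
      · have := three_k_le k hk4
        omega
      · have : k = 3 := by omega
        subst this
        omega
    · intro L hL hLn h1 h2
      refine ⟨rc L / 2, by omega, ?_⟩
      have h3 := hs1 L (hL.trans (Multiset.le_add_left _ _)) hLn
      have := ar2 n k (rc L) hk3 hn5 hk1 hk2 h2 h3
      rw [← hS] at hs2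
      omega
  · right
    simp only [Multiset.card_add, rc_add] at *
    refine ⟨AddSubgroup.closure {x | ∃ g ∈ C, vl g = x}, C + C, ?_, ?_, ?_, ?_⟩
    · exact (dbl_mono (Multiset.le_add_left C J)).trans hPN
    · rw [rc_add]; omega
    · intro g hg
      apply AddSubgroup.subset_closure
      exact ⟨g, by simpa using hg, rfl⟩
    · have := stuck_closure hodd (zero_mem_Zs J) {x | ∃ g ∈ C, vl g = x} (by
        rintro x ⟨g, hg, rfl⟩
        exact j4 g hg)
      rw [Multiset.card_add]
      omega

theorem core [NeZero n] {k d : ℕ} (hodd : Odd n) (hk : 1 ≤ k) (hn : 3 ≤ n) (hnd : n ≤ d)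
    (hk1 : 2 ^ k + 1 ≤ n) (hk2 : n < 2 ^ (k + 1)) (hd : Odd d) (N : Multiset (DihedralGroup n))
    (hN : Nm N) (hc : card N = 2 * d + k) : Out d N ∨ Out2 d N := by
  classical
  by_cases hT : NoTri N
  swap
  · left
    unfold NoTri at hT
    push Not at hT
    obtain ⟨T, t1, t2, t3, t4⟩ := hT
    exact triple_out hodd hk hn hnd hk2 hd N hN hc t1 t2 t3 t4
  obtain ⟨R, F, hRF, hR, hF1⟩ := split_rf N
  have hr0 := rc_eq_zero_of hR
  have hf0 := rc_eq_card_of hF1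
  have hcc : card R + card F = 2 * d + k := by rw [← hc, hRF]; simp
  have hRN : R ≤ N := by rw [hRF]; simp
  have hFN : F ≤ N := by rw [hRF]; simp
  have hrN : rc N = card F := by rw [hRF, rc_add, hr0, hf0, zero_add]
  by_cases hbig : d + n - 1 ≤ card R
  · right
    exact ⟨⊤, R, hRN, hr0, by simp, by simpa using hbig⟩
  by_cases hR0 : R = 0
  · left
    apply refl_out hodd hk hnd hk2 N (by omega) hc
    rw [hrN, hc, ← hcc, hR0]; simp
  by_cases hz : ∀ u : ZMod n, r u ∈ N → u = 0
  · right
    obtain ⟨g, hg⟩ := Multiset.exists_mem_of_ne_zero hR0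
    have h0 : (r 0 : DihedralGroup n) ∈ N := by
      have hgN := Multiset.mem_of_le hRN hg
      cases g with
      | r i => rw [hz i hgN] at hgN; exact hgN
      | sr i => have := hR _ hg; simp at this
    have hFn : F.Nodup := by
      rw [Multiset.nodup_iff_le]
      intro g hg
      have hgF : g ∈ F := Multiset.mem_of_le hg (by simp)
      cases g with
      | r i => have := hF1 _ hgF; simp at this
      | sr i => exact notri_zero hT h0 i (hg.trans hFN)
    have := rc_nodup_le hFn
    refine ⟨⊥, R, hRN, hr0, ?_, ?_⟩
    · intro g hg
      have hgN := Multiset.mem_of_le hRN hg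
      cases g with
      | r i => simpa using hz i hgN
      | sr i => have := hR _ hg; simp at this
    · simp; omega
  · push Not at hz
    obtain ⟨u, hu, hu0⟩ := hz
    obtain ⟨s1, s2⟩ := struct hodd hN hT hu0 hu (by omega)
    by_cases hp : ∃ a : ZMod n, sr a ::ₘ sr a ::ₘ 0 ≤ N
    · obtain ⟨a, ha⟩ := hp
      left; exact out_pair hodd hk hn hnd hk1 hk2 hd N hc s1 s2 a ha
    · push Not at hp
      exact out_iv hodd hk hn hnd hk1 hk2 hd N hc s1 s2 (by omega) hp

theorem upper {d : ℕ} (hn : 3 ≤ n) (hd : 0 < d) (hodd : Odd d) (hnd : n ∣ d)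
    (S : Multiset (DihedralGroup n)) (hS : 2 * d + Nat.log 2 n ≤ Multiset.card S) :
    ∃ T, T ≤ S ∧ T ≠ 0 ∧ d ∣ Multiset.card T ∧ IsOneProdSeq T := by
  haveI : NeZero n := ⟨by omega⟩
  have hnodd : Odd n := Odd.of_dvd_nat hodd hnd
  set k := Nat.log 2 n with hkdef
  have hk2 : n < 2 ^ (k + 1) := Nat.lt_pow_succ_log_self (by norm_num) n
  have hk1 : 2 ^ k ≤ n := Nat.pow_log_le_self 2 (by omega)
  have hk : 1 ≤ k := by
    by_contra hh
    have : k = 0 := by omega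
    rw [this] at hk2; simp at hk2; omega
  have hk1' : 2 ^ k + 1 ≤ n := by
    rcases Nat.lt_or_ge (2 ^ k) n with h | h
    · omega
    · have he : n = 2 ^ k := le_antisymm h hk1
      have : Even n := by rw [he]; exact (Nat.even_pow.2 ⟨by decide, by omega⟩)
      exact absurd hnodd (by simpa using this)
  obtain ⟨S0, hS0, hc⟩ := exists_sub_card S (2 * d + k) hS
  rcases core hnodd hk hn (Nat.le_of_dvd hd hnd) hk1' hk2 hodd (S0.map nu) (nm_map S0) (by simpa using hc) with
    ⟨T, t1, t2, t3, t4⟩ | ⟨H, Y, y1, y2, y3, y4⟩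
  · obtain ⟨T0, g1, g2, g3, g4⟩ := good_lift t1 t2
    refine ⟨T0, g1.trans hS0, ?_, ?_, g3.isOne (by omega)⟩
    · rintro rfl; simp at g4; omega
    · rw [g2]; rcases t4 with h | h <;> rw [h] <;> simp
  · obtain ⟨Y0, h1, rfl⟩ := lift_map _ _ _ y1
    obtain ⟨X, Z, rfl⟩ := decomp Y0
    have hZ : Z = 0 := by
      rw [rc_map_nu] at y2
      simpa using y2
    subst hZ
    simp only [Multiset.map_zero, add_zero] at *
    obtain ⟨W, w1, w2, w3⟩ := egz_sub H d hnd X (by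
      intro x hx
      have := y3 (r (nrm x)) (by
        rw [Multiset.map_map]
        exact Multiset.mem_map.2 ⟨x, hx, rfl⟩)
      simp at this
      rcases nrm_or x with e | e <;> rw [e] at this
      · exact this
      · simpa using this) (by simpa using y4)
    refine ⟨W.map r, (Multiset.map_le_map w1).trans (h1.trans hS0), ?_, ?_, isOne_rot W w3⟩
    · intro h
      have : W = 0 := by simpa using h
      rw [this] at w2; simp at w2; omega
    · simp [w2]

end DihAux

/-- Let `n ≥ 3` and `d` be positive integers with `d` odd and `n ∣ d`.  Then
`s_{dℕ}(D_{2n}) = 2d + ⌊log₂ n⌋`. -/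
theorem stmt3 (n d : ℕ) (hn : 3 ≤ n) (hd : 0 < d) (hodd : Odd d) (hnd : n ∣ d) :
    IsLeast {ℓ : ℕ | ∀ S : Multiset (DihedralGroup n), ℓ ≤ Multiset.card S →
        ∃ T, T ≤ S ∧ T ≠ 0 ∧ d ∣ Multiset.card T ∧ IsOneProdSeq T}
      (2 * d + Nat.log 2 n) := by
  constructor
  · intro S hS
    exact DihAux.upper hn hd hodd hnd S hS
  · intro ℓ hl
    exact DihAux.lower d hn hd hodd ℓ hl
end

section
/- Let n ≥ 3 and d be positive integers with gcd(n, d) = 1. Then s_{dℕ}(D_{2n}) = nd + 1. -/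
open DihedralGroup

lemma aux_decomp {n : ℕ} (S : Multiset (DihedralGroup n)) :
    ∃ A B : List (ZMod n), S = ((A.map r ++ B.map sr : List (DihedralGroup n)) : Multiset _) := by
  induction S using Multiset.induction with
  | empty => exact ⟨[], [], rfl⟩
  | cons a S ih =>
    obtain ⟨A, B, rfl⟩ := ih
    cases a with
    | r i => exact ⟨i :: A, B, rfl⟩
    | sr i =>
      refine ⟨A, i :: B, ?_⟩
      rw [Multiset.cons_coe, Multiset.coe_eq_coe, List.map_cons]
      exact List.perm_middle.symm

lemma aux_prod_r {n : ℕ} (A : List (ZMod n)) : (A.map (r : ZMod n → DihedralGroup n)).prod = r A.sum := by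
  induction A with
  | nil => rfl
  | cons a A ih => simp [ih]

lemma aux_prod_sr {n : ℕ} (k : ℕ) : ∀ (B : List (ZMod n)), B.length = 2 * k →
    ∃ i, (B.map (sr : ZMod n → DihedralGroup n)).prod = r i := by
  induction k with
  | zero => 
    intro B h
    have : B = [] := List.length_eq_zero_iff.mp (by simpa using h)
    subst this
    exact ⟨0, rfl⟩
  | succ k ih =>
    intro B h
    match B, h with
    | a :: b :: t, h =>
      obtain ⟨i, hi⟩ := ih t (by simp at h; omega)
      exact ⟨b - a + i, by simp [hi]; ring⟩
    | [a], h => simp at h; omega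
    | [], h => simp at h

lemma aux_seg {G : Type*} [Group G] (L : List (List G)) (i j : ℕ) (hij : i ≤ j)
    (h : (L.take i).flatten.prod = (L.take j).flatten.prod) :
    ((L.take j).drop i).flatten.prod = 1 := by
  have h1 : L.take j = L.take i ++ (L.take j).drop i := by
    conv_lhs => rw [← List.take_append_drop i (L.take j)]
    rw [List.take_take, min_eq_left hij]
  rw [h1, List.flatten_append, List.prod_append] at h
  exact (left_eq_mul.mp h)

lemma aux_flatten_rot {n : ℕ} (L : List (List (DihedralGroup n)))
    (h : ∀ l ∈ L, ∃ i, l.prod = r i) : ∃ i, L.flatten.prod = r i := by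
  induction L with
  | nil => exact ⟨0, rfl⟩
  | cons a L ih =>
    obtain ⟨i, hi⟩ := h a (by simp)
    obtain ⟨j, hj⟩ := ih (fun l hl => h l (by simp [hl]))
    exact ⟨i + j, by simp [hi, hj]⟩

lemma aux_flatten_len {α : Type*} (d : ℕ) (L : List (List α))
    (h : ∀ l ∈ L, l.length = d) : L.flatten.length = L.length * d := by
  induction L with
  | nil => simp
  | cons a L ih =>
    have := h a (by simp)
    have := ih (fun l hl => h l (by simp [hl]))
    simp only [List.flatten_cons, List.length_append, List.length_cons, *]
    ring

/-- Davenport constant of the rotation group, applied to blocks. -/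
lemma aux_dav {n d : ℕ} (hn : 3 ≤ n) (hd : 0 < d) (L : List (List (DihedralGroup n)))
    (hL : L.length = n) (h : ∀ l ∈ L, l.length = d ∧ ∃ i, l.prod = r i) :
    ∃ T : Multiset (DihedralGroup n), T ≤ (L.flatten : Multiset _) ∧ T ≠ 0 ∧
      d ∣ Multiset.card T ∧ IsOneProdSeq T := by
  have : NeZero n := ⟨by omega⟩
  have hP : ∀ k : ℕ, ∃ i, (L.take k).flatten.prod = r i := fun k =>
    aux_flatten_rot _ (fun l hl => (h l (List.mem_of_mem_take hl)).2)
  choose P hP using hP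
  obtain ⟨i, j, hne, he⟩ := Fintype.exists_ne_map_eq_of_card_lt
    (fun k : Fin (n + 1) => P k) (by simp [ZMod.card])
  have key : ∀ i j : ℕ, i < j → j ≤ n → P i = P j → ∃ T : Multiset (DihedralGroup n),
      T ≤ (L.flatten : Multiset _) ∧ T ≠ 0 ∧ d ∣ Multiset.card T ∧ IsOneProdSeq T := by
    intro i j hij hj hp
    have h1 := aux_seg L i j hij.le (by rw [hP, hP, hp])
    have h2 := aux_flatten_len d ((L.take j).drop i)
      (fun l hl => (h l (List.mem_of_mem_take (List.mem_of_mem_drop hl))).1)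
    refine ⟨(((L.take j).drop i).flatten : List _), ?_, ?_, ?_, _, rfl, h1⟩
    · exact Multiset.coe_le.mpr
        (List.Sublist.flatten ((List.drop_sublist _ _).trans (List.take_sublist _ _))).subperm
    · intro h0
      rw [Multiset.coe_eq_zero] at h0
      rw [h0] at h2
      simp at h2
      omega
    · rw [Multiset.coe_card, h2]; exact dvd_mul_left _ _
  have hne' : (i : ℕ) ≠ j := fun h => hne (Fin.ext h)
  rcases lt_or_gt_of_ne hne' with hlt | hlt
  · exact key i j hlt (by omega) he
  · exact key j i hlt (by omega) he.symm

/-- Extracting blocks of length `d` with rotation product. -/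
lemma aux_blocks {n d : ℕ} (hd : 0 < d) (k : ℕ) : ∀ (A B : List (ZMod n)),
    k * d + 1 ≤ A.length + B.length → (d % 2 = 1 → k ≤ A.length) →
    ∃ L : List (List (DihedralGroup n)), L.length = k ∧
      (∀ l ∈ L, l.length = d ∧ ∃ i, l.prod = r i) ∧
      (L.flatten : Multiset (DihedralGroup n)) ≤
        ((A.map r ++ B.map sr : List (DihedralGroup n)) : Multiset (DihedralGroup n)) := by
  induction k with
  | zero => intro A B _ _; exact ⟨[], rfl, by simp, by simp⟩
  | succ k ih =>
    intro A B h1 h2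
    obtain ⟨e, he⟩ : ∃ e, e = min (d - d % 2) (B.length - B.length % 2) := ⟨_, rfl⟩
    have hkd : k ≤ k * d := Nat.le_mul_of_pos_right k hd
    rw [Nat.succ_mul] at h1
    generalize hK : k * d = K at *
    have he2 : e % 2 = 0 := by omega
    have heB : e ≤ B.length := by omega
    have hed : e ≤ d := by omega
    have heA : d - e ≤ A.length := by omega
    obtain ⟨L, hL1, hL2, hL3⟩ := ih (A.drop (d - e)) (B.drop e)
      (by simp only [List.length_drop]; omega)
      (by intro hdo; simp only [List.length_drop]; have := h2 hdo; omega)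
    refine ⟨((A.take (d - e)).map r ++ (B.take e).map sr) :: L, by simp [hL1], ?_, ?_⟩
    · intro l hl
      rcases List.mem_cons.mp hl with rfl | hl
      · refine ⟨by simp; omega, ?_⟩
        obtain ⟨i, hi⟩ := aux_prod_sr (e / 2) (B.take e) (by simp; omega)
        exact ⟨(A.take (d - e)).sum + i, by rw [List.prod_append, aux_prod_r, hi, r_mul_r]⟩
      · exact hL2 l hl
    · have hA : A.map (r : ZMod n → DihedralGroup n) =
          (A.take (d - e)).map r ++ (A.drop (d - e)).map r := by
        rw [← List.map_append, List.take_append_drop]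
      have hB : B.map (sr : ZMod n → DihedralGroup n) =
          (B.take e).map sr ++ (B.drop e).map sr := by
        rw [← List.map_append, List.take_append_drop]
      rw [hA, hB, List.flatten_cons]
      simp only [← Multiset.coe_add] at hL3 ⊢
      calc _ ≤ _ := add_le_add_right hL3 _
        _ = _ := by abel

lemma aux_pairs {n : ℕ} [NeZero n] (k : ℕ) : ∀ B : Multiset (ZMod n),
    n + 2 * k ≤ Multiset.card B + 1 →
    ∃ l : List (DihedralGroup n), l.length = 2 * k ∧ l.prod = 1 ∧
      (l : Multiset _) ≤ B.map sr := by
  induction k with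
  | zero => intro B _; exact ⟨[], rfl, rfl, by simp⟩
  | succ k ih =>
    intro B h
    have hnd : ¬ B.Nodup := by
      intro hnd
      have := Finset.card_le_univ (⟨B, hnd⟩ : Finset (ZMod n))
      simp [ZMod.card] at this
      omega
    rw [Multiset.nodup_iff_ne_cons_cons] at hnd
    push Not at hnd
    obtain ⟨a, t, rfl⟩ := hnd
    obtain ⟨l, h1, h2, h3⟩ := ih t (by simp at h; omega)
    refine ⟨sr a :: sr a :: l, by simp [h1]; omega, by simp [h2], ?_⟩
    simp only [Multiset.map_cons, ← Multiset.cons_coe]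
    exact Multiset.cons_le_cons _ (Multiset.cons_le_cons _ h3)

lemma aux_one {n : ℕ} [NeZero n] (A B : List (ZMod n)) (hB : 1 ≤ B.length)
    (h : n + 1 ≤ A.length + B.length) :
    ∃ l : List (DihedralGroup n), l ≠ [] ∧ l.prod = 1 ∧
      (l : Multiset (DihedralGroup n)) ≤
        ((A.map r ++ B.map sr : List (DihedralGroup n)) : Multiset (DihedralGroup n)) := by
  by_cases hnd : (B : Multiset (ZMod n)).Nodup
  swap
  · rw [Multiset.nodup_iff_ne_cons_cons] at hnd
    push Not at hnd
    obtain ⟨a, t, ht⟩ := hnd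
    refine ⟨[sr a, sr a], by simp, by simp, ?_⟩
    rw [← Multiset.coe_add]
    refine le_trans ?_ (Multiset.le_add_left _ _)
    rw [← Multiset.map_coe, ht]
    simp only [Multiset.map_cons, ← Multiset.cons_coe]
    exact Multiset.cons_le_cons _ (Multiset.cons_le_cons _ (by simp))
  have key : ∀ i j : ℕ, ∀ b c : ZMod n, i ≤ j → j ≤ A.length → b ∈ B → c ∈ B →
      (i, b) ≠ (j, c) → (A.take i).sum + b = (A.take j).sum + c →
      ∃ l : List (DihedralGroup n), l ≠ [] ∧ l.prod = 1 ∧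
      (l : Multiset (DihedralGroup n)) ≤
        ((A.map r ++ B.map sr : List (DihedralGroup n)) : Multiset (DihedralGroup n)) := by
    intro i j b c hij hj hb hc hne he
    have h1 : A.take j = A.take i ++ (A.take j).drop i := by
      conv_lhs => rw [← List.take_append_drop i (A.take j)]
      rw [List.take_take, min_eq_left hij]
    rw [h1, List.sum_append] at he
    have he' : b = ((A.take j).drop i).sum + c := by linear_combination he
    have hsub : (((A.take j).drop i).map (r : ZMod n → DihedralGroup n)).Sublist (A.map r) :=
      ((List.drop_sublist _ _).trans (List.take_sublist _ _)).map _
    by_cases hbc : b = c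
    · subst hbc
      have h0 : ((A.take j).drop i).sum = 0 := by simpa using he'
      refine ⟨((A.take j).drop i).map r, ?_, by rw [aux_prod_r, h0]; rfl, ?_⟩
      · intro hnil
        have := congrArg List.length hnil
        simp at this
        apply hne
        have : i = j := by omega
        rw [this]
      · exact Multiset.coe_le.mpr (hsub.trans (List.sublist_append_left _ _)).subperm
    · refine ⟨((A.take j).drop i).map r ++ [sr b, sr c], by simp, ?_, ?_⟩
      · rw [List.prod_append, aux_prod_r]
        simp only [List.prod_cons, List.prod_nil, mul_one, sr_mul_sr, r_mul_r]
        rw [one_def]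
        congr 1
        linear_combination -he'
      · rw [← Multiset.coe_add, ← Multiset.coe_add]
        refine add_le_add (Multiset.coe_le.mpr hsub.subperm) ?_
        have h2 : ((([b, c] : List (ZMod n))) : Multiset (ZMod n)) ≤ (B : Multiset (ZMod n)) := by
          rw [Multiset.le_iff_subset (by simp [hbc])]
          intro x hx
          simp at hx
          rcases hx with rfl | rfl <;> simpa
        have := Multiset.map_le_map (f := (sr : ZMod n → DihedralGroup n)) h2
        simpa using this
  have hcard : B.toFinset.card = B.length := List.toFinset_card_of_nodup (by simpa using hnd)
  obtain ⟨x, hx, y, hy, hne, he⟩ := Finset.exists_ne_map_eq_of_card_lt_of_maps_to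
    (s := (Finset.range (A.length + 1)) ×ˢ B.toFinset) (t := (Finset.univ : Finset (ZMod n)))
    (f := fun p => (A.take p.1).sum + p.2)
    (by
      rw [Finset.card_product, hcard, Finset.card_univ, ZMod.card, Finset.card_range]
      nlinarith)
    (by intro x _; simp)
  simp only [Finset.mem_product, Finset.mem_range, List.mem_toFinset] at hx hy
  rcases le_total x.1 y.1 with hle | hle
  · exact key x.1 y.1 x.2 y.2 hle (by omega) hx.2 hy.2 hne he
  · exact key y.1 x.1 y.2 x.2 hle (by omega) hy.2 hx.2 hne.symm he.symm

lemma aux_upper (n d : ℕ) (hn : 3 ≤ n) (hd : 0 < d) (S : Multiset (DihedralGroup n))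
    (hS : n * d + 1 ≤ Multiset.card S) :
    ∃ T, T ≤ S ∧ T ≠ 0 ∧ d ∣ Multiset.card T ∧ IsOneProdSeq T := by
  have : NeZero n := ⟨by omega⟩
  obtain ⟨A, B, rfl⟩ := aux_decomp S
  simp only [Multiset.coe_card, List.length_append, List.length_map] at hS
  by_cases hc : d % 2 = 1 → n ≤ A.length
  · obtain ⟨L, h1, h2, h3⟩ := aux_blocks hd n A B hS hc
    obtain ⟨T, hT, hT'⟩ := aux_dav hn hd L h1 h2
    exact ⟨T, hT.trans h3, hT'⟩
  push Not at hc
  obtain ⟨hodd, hA⟩ := hc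
  by_cases hd1 : d = 1
  · subst hd1
    obtain ⟨l, h1, h2, h3⟩ := aux_one A B (by omega) (by omega)
    exact ⟨l, h3, by simpa using h1, by simp, l, rfl, h2⟩
  · have hd3 : 3 ≤ d := by omega
    obtain ⟨l, h1, h2, h3⟩ := aux_pairs d (B : Multiset (ZMod n)) (by
      simp only [Multiset.coe_card]
      obtain ⟨m, rfl⟩ := Nat.exists_eq_add_of_le hn
      obtain ⟨c, rfl⟩ := Nat.exists_eq_add_of_le hd3
      nlinarith [Nat.zero_le (m * c)])
    refine ⟨l, h3.trans ?_, ?_, ?_, l, rfl, h2⟩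
    · rw [← Multiset.coe_add, Multiset.map_coe]
      exact Multiset.le_add_left _ _
    · intro h0
      rw [Multiset.coe_eq_zero] at h0
      rw [h0] at h1
      simp at h1
      omega
    · rw [Multiset.coe_card, h1]; exact dvd_mul_left _ _

lemma aux_lower (n d : ℕ) (hn : 3 ≤ n) (hd : 0 < d) (hgcd : Nat.gcd n d = 1)
    (T : Multiset (DihedralGroup n))
    (hT : T ≤ (sr 0) ::ₘ Multiset.replicate (n * d - 1) (r 1)) (h0 : T ≠ 0)
    (hdT : d ∣ Multiset.card T) (h1 : IsOneProdSeq T) : False := by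
  have hpos : 0 < n * d := by positivity
  obtain ⟨l, rfl, hl⟩ := h1
  by_cases hm : (sr 0 : DihedralGroup n) ∈ (l : Multiset (DihedralGroup n))
  · obtain ⟨t, ht⟩ := Multiset.exists_cons_of_mem hm
    rw [ht] at hT
    have ht2 := (Multiset.cons_le_cons_iff _).mp hT
    obtain ⟨k, -, rfl⟩ := Multiset.le_replicate_iff.mp ht2 |>.imp fun k hk => (⟨trivial, hk.2⟩ : True ∧ _)
    obtain ⟨l1, l2, rfl⟩ := List.append_of_mem (by simpa using hm)
    have h3 : ((l1 ++ l2 : List (DihedralGroup n)) : Multiset (DihedralGroup n)) = Multiset.replicate k (r 1) := by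
      rw [← Multiset.cons_inj_right (sr 0), ← ht, Multiset.cons_coe, Multiset.coe_eq_coe]
      exact List.perm_middle.symm
    have h4 : l1 ++ l2 = List.replicate k (r 1) := by
      rw [← Multiset.coe_replicate, Multiset.coe_eq_coe, List.perm_replicate] at h3
      exact h3
    have h5 := List.append_eq_replicate_iff.mp h4
    rw [h5.2.1, h5.2.2] at hl
    simp only [List.prod_append, List.prod_cons, List.prod_replicate, r_one_pow, sr_mul_r,
      r_mul_sr, one_def] at hl
    cases hl
  · have hT2 := (Multiset.le_cons_of_notMem hm).mp hT
    obtain ⟨k, hk, hk2⟩ := Multiset.le_replicate_iff.mp hT2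
    rw [← Multiset.coe_replicate, Multiset.coe_eq_coe, List.perm_replicate] at hk2
    subst hk2
    rw [List.prod_replicate, r_one_pow, one_def] at hl
    have hk3 : ((k : ℕ) : ZMod n) = 0 := by injection hl
    rw [ZMod.natCast_eq_zero_iff] at hk3
    simp at hdT h0
    have := Nat.le_of_dvd (by omega) (Nat.Coprime.mul_dvd_of_dvd_of_dvd hgcd hk3 hdT)
    omega


/-- Let `n ≥ 3` and `d` be positive integers with `gcd(n, d) = 1`.  Then
`s_{dℕ}(D_{2n}) = nd + 1`. -/
theorem stmt4 (n d : ℕ) (hn : 3 ≤ n) (hd : 0 < d) (hgcd : Nat.gcd n d = 1) :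
    IsLeast {ℓ : ℕ | ∀ S : Multiset (DihedralGroup n), ℓ ≤ Multiset.card S →
        ∃ T, T ≤ S ∧ T ≠ 0 ∧ d ∣ Multiset.card T ∧ IsOneProdSeq T}
      (n * d + 1) := by
  refine ⟨fun S hS => aux_upper n d hn hd S hS, ?_⟩
  intro ℓ hℓ
  by_contra hlt
  push Not at hlt
  have hpos : 0 < n * d := by positivity
  obtain ⟨T, hT, h0, hdT, h1⟩ := hℓ
    ((DihedralGroup.sr 0) ::ₘ Multiset.replicate (n * d - 1) (DihedralGroup.r 1)) (by simp; omega)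
  exact aux_lower n d hn hd hgcd T hT h0 hdT h1
end

section
/- Let p and q be primes with p ≥ 3 and p | q − 1, let s be an integer whose multiplicative order modulo q equals p, and let G_{pq} = ⟨x, y : x^p = y^q = 1, yx = xy^s⟩ be the corresponding nonabelian metacyclic group of order pq. Then for every positive integer k, s_{kpℕ}(G_{pq}) = lcm(kp, q) + p − 2 + gcd(kp, q). -/
section Generic
open scoped Classical

theorem ms_exists_sub {ι : Type*} (S : Multiset ι) (n : ℕ) (h : n ≤ Multiset.card S) :
    ∃ T, T ≤ S ∧ Multiset.card T = n := by
  induction S using Quotient.inductionOn with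
  | _ l =>
    refine ⟨(l.take n : List ι), ?_, ?_⟩
    · exact (List.take_sublist n l).subperm
    · simpa using h

/-- intermediate submultiset -/
theorem ms_exists_between {ι : Type*} (A S : Multiset ι) (n : ℕ) (hA : A ≤ S)
    (h1 : Multiset.card A ≤ n) (h : n ≤ Multiset.card S) :
    ∃ T, A ≤ T ∧ T ≤ S ∧ Multiset.card T = n := by
  obtain ⟨B, rfl⟩ := Multiset.le_iff_exists_add.1 hA
  rw [Multiset.card_add] at h
  obtain ⟨T, hT, hc⟩ := ms_exists_sub B (n - Multiset.card A) (by omega)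
  refine ⟨A + T, Multiset.le_add_right _ _, by gcongr, ?_⟩
  rw [Multiset.card_add]; omega

theorem pairs_lemma {ι κ : Type*} [DecidableEq κ] (f : ι → κ) (S : Multiset ι) (r : ℕ)
    (h2 : 2 * r ≤ Multiset.card S)
    (hc : ∀ c, r ≤ Multiset.card (S.filter (fun i => f i ≠ c))) :
    ∃ M : Multiset (ι × ι), Multiset.card M = r ∧
      M.map Prod.fst + M.map Prod.snd ≤ S ∧ ∀ m ∈ M, f m.1 ≠ f m.2 := by
  induction r with
  | zero => exact ⟨0, by simp⟩
  | succ r ih =>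
    obtain ⟨M, hM, hMS, hMf⟩ := ih (by omega) (fun c => by have := hc c; omega)
    obtain ⟨L, rfl⟩ := Multiset.le_iff_exists_add.1 hMS
    have hL : 2 ≤ Multiset.card L := by
      simp only [Multiset.card_add, Multiset.card_map, hM] at h2; omega
    obtain ⟨L2, hL2, hL2c⟩ := ms_exists_sub L 2 hL
    obtain ⟨u, v, rfl⟩ := Multiset.card_eq_two.1 hL2c
    obtain ⟨L', rfl⟩ := Multiset.le_iff_exists_add.1 hL2
    by_cases hall : ∀ w ∈ ({u, v} + L' : Multiset ι), f w = f u
    · have hfil : (({u, v} + L' : Multiset ι)).filter (fun i => f i ≠ f u) = 0 := by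
        rw [Multiset.filter_eq_nil]; intro a ha; simpa using hall a ha
      have h3 := hc (f u)
      rw [Multiset.filter_add, hfil, add_zero] at h3
      have key : ∃ m ∈ M, f m.1 ≠ f u ∧ f m.2 ≠ f u := by
        by_contra hno
        push Not at hno
        have : ∀ M : Multiset (ι × ι), (∀ m ∈ M, f m.1 ≠ f u → f m.2 = f u) →
            Multiset.card ((M.map Prod.fst + M.map Prod.snd).filter (fun i => f i ≠ f u))
              ≤ Multiset.card M := by
          intro M
          induction M using Multiset.induction with
          | empty => simp
          | cons a M ihM =>
            intro h
            have h1 := ihM (fun m hm => h m (Multiset.mem_cons_of_mem hm))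
            have h2 := h a (Multiset.mem_cons_self a M)
            simp only [Multiset.map_cons, Multiset.filter_add, Multiset.filter_cons, Multiset.card_add, Multiset.card_cons] at h1 ⊢
            split_ifs with h5 h6 h6
            · exact absurd (h2 h5) h6
            all_goals (simp only [Multiset.card_zero, Multiset.card_singleton]; omega)
        have := this M hno
        omega
      obtain ⟨m, hm, hm1, hm2⟩ := key
      obtain ⟨M', rfl⟩ := Multiset.exists_cons_of_mem hm
      refine ⟨(m.1, u) ::ₘ (m.2, v) ::ₘ M', ?_, ?_, ?_⟩
      · simpa using hM
      · refine le_trans (le_of_eq ?_) (Multiset.le_add_right _ L')|>.trans (le_of_eq (add_assoc _ _ _))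
        simp only [Multiset.map_cons]
        simp only [← Multiset.singleton_add, Multiset.insert_eq_cons]
        abel
      · intro w hw
        simp only [Multiset.mem_cons] at hw
        rcases hw with rfl | rfl | hw
        · exact hm1
        · have := hall v (by simp)
          simpa [this] using hm2
        · exact hMf w (Multiset.mem_cons_of_mem hw)
    · push Not at hall
      obtain ⟨w, hw, hwu⟩ := hall
      have huw : ({u, w} : Multiset ι) ≤ {u, v} + L' := by
        simp only [Multiset.insert_eq_cons, Multiset.cons_add] at hw ⊢
        rw [Multiset.cons_le_cons_iff, Multiset.singleton_le]
        rcases Multiset.mem_cons.1 hw with rfl | h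
        · exact absurd rfl hwu
        · exact h
      refine ⟨(u, w) ::ₘ M, by simp [hM], ?_, ?_⟩
      · refine le_trans (le_of_eq ?_) (add_le_add_right huw _)
        simp only [Multiset.map_cons]
        simp only [← Multiset.singleton_add, Multiset.insert_eq_cons]
        abel
      · intro m hm
        rcases Multiset.mem_cons.1 hm with rfl | hm
        · exact Ne.symm hwu
        · exact hMf m hm

theorem davenport {ι A : Type*} [AddCommGroup A] [Fintype A] (f : ι → A) (S : Multiset ι)
    (h : Fintype.card A ≤ Multiset.card S) :
    ∃ U, U ≤ S ∧ U ≠ 0 ∧ Multiset.card U ≤ Fintype.card A ∧ (U.map f).sum = 0 := by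
  obtain ⟨S', hS', hc⟩ := ms_exists_sub S _ h
  induction S' using Quotient.inductionOn with
  | _ l =>
    have hl : l.length = Fintype.card A := by simpa using hc
    obtain ⟨i, j, hij, he⟩ := Fintype.exists_ne_map_eq_of_card_lt
      (fun i : Fin (Fintype.card A + 1) => ((l.take i).map f).sum) (by simp)
    have main : ∀ i j : Fin (Fintype.card A + 1), i < j →
        ((l.take i).map f).sum = ((l.take j).map f).sum →
        ∃ U, U ≤ S ∧ U ≠ 0 ∧ Multiset.card U ≤ Fintype.card A ∧ (U.map f).sum = 0 := by
      intro i j hij he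
      have hij' : (i : ℕ) < j := hij
      have hj := j.2
      have hsub : ((l.take j).drop i).Sublist l :=
        (List.drop_sublist _ _).trans (List.take_sublist _ _)
      refine ⟨((l.take j).drop i : List ι), le_trans hsub.subperm hS', ?_, ?_, ?_⟩
      · intro h0
        have := congrArg Multiset.card h0
        simp at this
        omega
      · exact le_of_le_of_eq hsub.length_le hl
      · have h1 : l.take j = l.take i ++ (l.take j).drop i := by
          conv_lhs => rw [← List.take_append_drop i (l.take j)]
          rw [List.take_take, min_eq_left hij'.le]
        rw [h1] at he
        simpa using he
    rcases lt_or_gt_of_ne hij with h | h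
    · exact main i j h he
    · exact main j i h he.symm

theorem ms_minimal {ι : Type*} (P : Multiset ι → Prop) (U : Multiset ι) (hU : P U) :
    ∃ V, V ≤ U ∧ P V ∧ ∀ W, W ≤ V → P W → W = V := by
  induction U using Multiset.strongInductionOn with
  | _ U ih =>
    by_cases h : ∀ W, W ≤ U → P W → W = U
    · exact ⟨U, le_rfl, hU, h⟩
    · push Not at h
      obtain ⟨W, hW, hPW, hne⟩ := h
      obtain ⟨V, hV, h2⟩ := ih W (lt_of_le_of_ne hW hne) hPW
      exact ⟨V, hV.trans hW, h2⟩

theorem window {ι : Type*} (P : Multiset ι → Prop) (D : ℕ) (h0 : P 0)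
    (hadd : ∀ A B, P A → P B → P (A + B)) (S : Multiset ι)
    (hD : ∀ S' ≤ S, D ≤ Multiset.card S' → ∃ U, U ≤ S' ∧ U ≠ 0 ∧ Multiset.card U ≤ D ∧ P U)
    (L : ℕ) (hS : L + D ≤ Multiset.card S + 1) :
    ∃ T, T ≤ S ∧ P T ∧ L ≤ Multiset.card T ∧ Multiset.card T + 1 ≤ L + max D 1 := by
  induction L with
  | zero => exact ⟨0, by simp, h0, by simp, by simp⟩
  | succ L ih =>
    obtain ⟨T, hT, hPT, h1, h2⟩ := ih (by omega)
    by_cases h : L + 1 ≤ Multiset.card T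
    · exact ⟨T, hT, hPT, h, by omega⟩
    · obtain ⟨R, rfl⟩ := Multiset.le_iff_exists_add.1 hT
      rw [Multiset.card_add] at hS
      obtain ⟨U, hU, hU0, hUc, hPU⟩ := hD R (Multiset.le_add_left _ _) (by omega)
      have := Multiset.card_pos.2 hU0
      refine ⟨T + U, by gcongr, hadd _ _ hPT hPU, ?_, ?_⟩ <;> rw [Multiset.card_add] <;> omega

theorem egz_iter {ι : Type*} (n : ℕ) (hn : 0 < n) (f : ι → ZMod n) (r : ℕ) (S : Multiset ι)
    (hS : r * n + n ≤ Multiset.card S + 1) :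
    ∃ B : Multiset (Multiset ι), Multiset.card B = r ∧ B.sum ≤ S ∧
      ∀ b ∈ B, Multiset.card b = n ∧ (b.map f).sum = 0 := by
  induction r generalizing S with
  | zero => exact ⟨0, by simp⟩
  | succ r ih =>
    have hcard : 2 * n - 1 ≤ Multiset.card S := by
      rw [Nat.succ_mul] at hS; omega
    obtain ⟨t, ht, htc, hts⟩ : ∃ t ≤ S, Multiset.card t = n ∧ (t.map f).sum = 0 := by
      obtain ⟨t, hts, ht⟩ := ZMod.erdos_ginzburg_ziv (s := S.toEnumFinset)
        (fun i => f i.1) (by simpa using hcard)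
      exact ⟨t.1.map Prod.fst, Multiset.map_fst_le_of_subset_toEnumFinset hts, by simpa using ht⟩
    obtain ⟨R, rfl⟩ := Multiset.le_iff_exists_add.1 ht
    rw [Multiset.card_add, htc] at hS
    obtain ⟨B, hB, hBS, hBb⟩ := ih R (by rw [Nat.succ_mul] at hS; omega)
    refine ⟨t ::ₘ B, by simp [hB], by rw [Multiset.sum_cons]; gcongr, ?_⟩
    intro b hb
    rcases Multiset.mem_cons.1 hb with rfl | hb
    · exact ⟨htc, hts⟩
    · exact hBb b hb

end Generic

structure Coord (p q : ℕ) (G : Type*) [Group G] where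
  a : G → ZMod p
  b : G → ZMod q
  σ : ZMod p → ZMod q
  a_mul : ∀ g h, a (g * h) = a g + a h
  b_mul : ∀ g h, b (g * h) = b g * σ (a h) + b h
  σ_zero : σ 0 = 1
  σ_add : ∀ u v, σ (u + v) = σ u * σ v
  σ_inj : Function.Injective σ
  eq_one : ∀ g, a g = 0 → b g = 0 → g = 1

section CoordSec
open scoped Classical Pointwise
set_option linter.unusedSectionVars false

theorem cd_le {q : ℕ} (hq : q.Prime) (X Y Z : Finset (ZMod q)) (hX : X.Nonempty)
    (hY : Y.Nonempty) (m n : ℕ) (hm : min q m ≤ X.card) (hn : min q n ≤ Y.card)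
    (h : ∀ x ∈ X, ∀ y ∈ Y, x + y ∈ Z) : min q (m + n - 1) ≤ Z.card := by
  have h1 := ZMod.cauchy_davenport hq hX hY
  have h2 : (X + Y).card ≤ Z.card := by
    apply Finset.card_le_card
    intro z hz
    obtain ⟨x, hx, y, hy, rfl⟩ := Finset.mem_add.1 hz
    exact h x hx y hy
  have := hX.card_pos
  have := hY.card_pos
  have := hq.pos
  omega

namespace Coord
variable {p q : ℕ} [Fact p.Prime] [Fact q.Prime] {G : Type*} [Group G] (C : Coord p q G)

theorem a_one : C.a 1 = 0 := by
  have := C.a_mul 1 1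
  simpa using this

theorem b_one : C.b 1 = 0 := by
  have := C.b_mul 1 1
  simpa [C.a_one, C.σ_zero] using this

theorem σ_ne (u : ZMod p) : C.σ u ≠ 0 := by
  intro h
  have := C.σ_add u (-u)
  rw [h] at this
  simp [C.σ_zero] at this

theorem ext_ab {g h : G} (h1 : C.a g = C.a h) (h2 : C.b g = C.b h) : g = h := by
  have e1 : C.a (g * h⁻¹) = 0 := by
    have := C.a_mul (g * h⁻¹) h
    simp [h1] at this
    exact this
  have e2 : C.b (g * h⁻¹) = 0 := by
    have := C.b_mul (g * h⁻¹) h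
    simp [h2, C.σ_ne] at this
    exact this
  exact mul_inv_eq_one.1 (C.eq_one _ e1 e2)

/-- sum of the first coordinates -/
def asum (T : Multiset G) : ZMod p := (T.map C.a).sum

theorem asum_add (S T : Multiset G) : C.asum (S + T) = C.asum S + C.asum T := by
  simp [asum]

theorem a_prod (l : List G) : C.a l.prod = C.asum (l : Multiset G) := by
  induction l with
  | nil => simp [asum, a_one]
  | cons g l ih => simp [C.a_mul, ih, asum]

theorem a_prod' {l : List G} {T : Multiset G} (h : (l : Multiset G) = T) :
    C.a l.prod = C.asum T := by rw [a_prod, h]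

theorem b_prod_of_a (l : List G) (h : ∀ g ∈ l, C.a g = 0) : C.b l.prod = (l.map C.b).sum := by
  induction l with
  | nil => simp [b_one]
  | cons g l ih =>
    have h1 : C.a l.prod = 0 := by
      rw [a_prod, asum]
      apply Multiset.sum_eq_zero
      intro x hx
      obtain ⟨y, hy, rfl⟩ := Multiset.mem_map.1 hx
      exact h y (List.mem_cons_of_mem _ (by simpa using hy))
    rw [List.prod_cons, C.b_mul, h1, C.σ_zero, ih (fun x hx => h x (List.mem_cons_of_mem _ hx))]
    simp

theorem oneProd_zero : IsOneProdSeq (0 : Multiset G) := ⟨[], by simp⟩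

theorem oneProd_add {A B : Multiset G} (hA : IsOneProdSeq A) (hB : IsOneProdSeq B) :
    IsOneProdSeq (A + B) := by
  obtain ⟨l, rfl, h⟩ := hA
  obtain ⟨l', rfl, h'⟩ := hB
  exact ⟨l ++ l', by simp, by simp [h, h']⟩

theorem oneProd_of_N (T : Multiset G) (h : ∀ g ∈ T, C.a g = 0) (hb : (T.map C.b).sum = 0) :
    IsOneProdSeq T := by
  refine ⟨T.toList, by simp, C.eq_one _ ?_ ?_⟩
  · rw [C.a_prod' (T := T) (by simp), asum]
    apply Multiset.sum_eq_zero
    intro x hx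
    obtain ⟨y, hy, rfl⟩ := Multiset.mem_map.1 hx
    exact h y hy
  · rw [C.b_prod_of_a _ (by simpa using h), ← hb]
    conv_rhs => rw [← Multiset.coe_toList T]
    simp

theorem eq_one_of_commute {g h : G} (hc : Commute h g) (hg : C.a g ≠ 0) (hh : C.a h = 0) :
    h = 1 := by
  have h1 := congrArg C.b hc.eq
  rw [C.b_mul, C.b_mul, hh, C.σ_zero] at h1
  have h2 : C.b h * (C.σ (C.a g) - 1) = 0 := by linear_combination h1
  rcases mul_eq_zero.1 h2 with h3 | h3
  · exact C.eq_one _ hh h3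
  · exact absurd (C.σ_inj (by rw [C.σ_zero]; exact sub_eq_zero.1 h3)) hg

theorem oneProd_of_commute (T : Multiset G) (g : G) (hg : C.a g ≠ 0)
    (h : ∀ x ∈ T, Commute x g) (ha : C.asum T = 0) : IsOneProdSeq T := by
  refine ⟨T.toList, by simp, C.eq_one_of_commute (g := g) ?_ hg ?_⟩
  · apply Commute.list_prod_left
    simpa using h
  · rw [C.a_prod' (T := T) (by simp), ha]

/-- second coordinates of all ordered products -/
noncomputable def PB (T : Multiset G) : Finset (ZMod q) :=
  Finset.univ.filter fun b => ∃ l : List G, (l : Multiset G) = T ∧ C.b l.prod = b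

theorem mem_PB {T : Multiset G} {b : ZMod q} :
    b ∈ C.PB T ↔ ∃ l : List G, (l : Multiset G) = T ∧ C.b l.prod = b := by simp [PB]

theorem PB_nonempty (T : Multiset G) : (C.PB T).Nonempty :=
  ⟨C.b T.toList.prod, C.mem_PB.2 ⟨T.toList, by simp, rfl⟩⟩

theorem PB_add (A B : Multiset G) (m n : ℕ) (hm : min q m ≤ (C.PB A).card)
    (hn : min q n ≤ (C.PB B).card) : min q (m + n - 1) ≤ (C.PB (A + B)).card := by
  have hinj : Function.Injective (fun x : ZMod q => x * C.σ (C.asum B)) :=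
    mul_left_injective₀ (C.σ_ne _)
  refine cd_le Fact.out ((C.PB A).image (fun x => x * C.σ (C.asum B))) (C.PB B) _
    ((C.PB_nonempty A).image _) (C.PB_nonempty B) m n ?_ hn ?_
  · rwa [Finset.card_image_of_injective _ hinj]
  · intro x hx y hy
    obtain ⟨x', hx', rfl⟩ := Finset.mem_image.1 hx
    obtain ⟨l, hl, rfl⟩ := C.mem_PB.1 hx'
    obtain ⟨l', hl', rfl⟩ := C.mem_PB.1 hy
    refine C.mem_PB.2 ⟨l ++ l', by rw [← Multiset.coe_add, hl, hl'], ?_⟩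
    rw [List.prod_append, C.b_mul, C.a_prod' hl']

theorem PB_mono {A T : Multiset G} (h : A ≤ T) (m : ℕ) (hm : min q m ≤ (C.PB A).card) :
    min q m ≤ (C.PB T).card := by
  obtain ⟨B, rfl⟩ := Multiset.le_iff_exists_add.1 h
  have h1 := (C.PB_nonempty B).card_pos
  have := C.PB_add A B m 1 hm (by omega)
  simpa using this

theorem oneProd_of_PB {T : Multiset G} (h : q ≤ (C.PB T).card) (ha : C.asum T = 0) :
    IsOneProdSeq T := by
  have : C.PB T = Finset.univ := by
    apply Finset.eq_univ_of_card
    apply le_antisymm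
    · exact Finset.card_le_univ _
    · simpa [ZMod.card] using h
  have h0 : (0 : ZMod q) ∈ C.PB T := by rw [this]; simp
  obtain ⟨l, hl, hb⟩ := C.mem_PB.1 h0
  exact ⟨l, hl, C.eq_one _ (by rw [C.a_prod' hl, ha]) hb⟩

theorem PB_pairs (M : Multiset (G × G)) (h : ∀ m ∈ M, ¬ Commute m.1 m.2) :
    min q (Multiset.card M + 1) ≤ (C.PB (M.map Prod.fst + M.map Prod.snd)).card := by
  induction M using Multiset.induction with
  | empty =>
    have := (C.PB_nonempty (0 : Multiset G)).card_pos
    rw [Multiset.card_zero]; simp only [Multiset.map_zero, add_zero]; omega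
  | cons m M ih =>
    have h1 := ih (fun x hx => h x (Multiset.mem_cons_of_mem hx))
    have h2 : min q 2 ≤ (C.PB {m.1, m.2}).card := by
      have hm := h m (Multiset.mem_cons_self _ _)
      have hne : C.b (m.1 * m.2) ≠ C.b (m.2 * m.1) := by
        intro he
        exact hm (C.ext_ab (by rw [C.a_mul, C.a_mul, add_comm]) he)
      have : ({C.b (m.1 * m.2), C.b (m.2 * m.1)} : Finset (ZMod q)) ⊆ C.PB {m.1, m.2} := by
        intro z hz
        simp only [Finset.mem_insert, Finset.mem_singleton] at hz
        rcases hz with rfl | rfl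
        · exact C.mem_PB.2 ⟨[m.1, m.2], rfl, by simp⟩
        · exact C.mem_PB.2 ⟨[m.2, m.1], by rw [← Multiset.coe_eq_coe.2 (List.Perm.swap m.2 m.1 [])]; rfl, by simp⟩
      have h3 := Finset.card_le_card this
      rw [Finset.card_pair hne] at h3
      omega
    have h3 := C.PB_add _ _ _ _ h1 h2
    have e : (Multiset.map Prod.fst (m ::ₘ M) + Multiset.map Prod.snd (m ::ₘ M)) =
        (Multiset.map Prod.fst M + Multiset.map Prod.snd M) + {m.1, m.2} := by
      simp only [Multiset.map_cons]
      simp only [← Multiset.singleton_add, Multiset.insert_eq_cons]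
      abel
    rw [e]
    rw [Multiset.card_cons]
    exact h3

theorem PB_insert (v : G) (hv : C.a v ≠ 0) (M : Multiset G) (hM : ∀ n ∈ M, C.a n = 0 ∧ n ≠ 1) :
    min q (Multiset.card M + 1) ≤ (C.PB ({v} + M)).card := by
  induction M using Multiset.induction with
  | empty =>
    have := (C.PB_nonempty ({v} + 0 : Multiset G)).card_pos
    rw [Multiset.card_zero]; omega
  | cons n M ih =>
    have h1 := ih (fun x hx => hM x (Multiset.mem_cons_of_mem hx))
    obtain ⟨hn, hn1⟩ := hM n (Multiset.mem_cons_self _ _)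
    have hb : C.b n ≠ 0 := fun h => hn1 (C.eq_one _ hn h)
    have hasum : C.asum ({v} + M) = C.a v := by
      have : C.asum M = 0 := by
        apply Multiset.sum_eq_zero
        intro x hx
        obtain ⟨y, hy, rfl⟩ := Multiset.mem_map.1 hx
        exact (hM y (Multiset.mem_cons_of_mem hy)).1
      rw [asum_add, this]; simp [asum]
    have hne : C.b n ≠ C.b n * C.σ (C.a v) := by
      intro h
      have : C.σ (C.a v) = C.σ 0 := by
        rw [C.σ_zero]
        apply mul_left_cancel₀ hb
        rw [← h, mul_one]
      exact hv (C.σ_inj this)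
    have := cd_le (Fact.out) (C.PB ({v} + M)) {C.b n, C.b n * C.σ (C.a v)}
      (C.PB ({v} + n ::ₘ M)) (C.PB_nonempty _) (by simp) _ 2 h1
      (by rw [Finset.card_pair hne]; exact min_le_right _ _) (by
        intro x hx y hy
        obtain ⟨l, hl, rfl⟩ := C.mem_PB.1 hx
        simp only [Finset.mem_insert, Finset.mem_singleton] at hy
        rcases hy with rfl | rfl
        · refine C.mem_PB.2 ⟨l ++ [n], ?_, ?_⟩
          · rw [← Multiset.coe_add, hl, ← Multiset.singleton_add n M]
            simp only [Multiset.coe_singleton]; abel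
          · rw [List.prod_append, C.b_mul]; simp [hn, C.σ_zero]
        · refine C.mem_PB.2 ⟨n :: l, ?_, ?_⟩
          · rw [← Multiset.cons_coe, hl, ← Multiset.singleton_add n M, ← Multiset.singleton_add]
            abel
          · rw [List.prod_cons, C.b_mul, C.a_prod' hl, hasum, add_comm])
    rw [Multiset.card_cons]
    exact this

end Coord
end CoordSec

section DavenportG
open scoped Classical Pointwise
set_option linter.unusedSectionVars false
namespace Coord
variable {p q : ℕ} [Fact p.Prime] [Fact q.Prime] {G : Type*} [Group G] (C : Coord p q G)

/-- second coordinates of products of subsequences lying in the normal subgroup -/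
noncomputable def QB (T : Multiset G) : Finset (ZMod q) :=
  Finset.univ.filter fun b => ∃ l : List G, (l : Multiset G) ≤ T ∧ C.a l.prod = 0 ∧ C.b l.prod = b

theorem mem_QB {T : Multiset G} {b : ZMod q} :
    b ∈ C.QB T ↔ ∃ l : List G, (l : Multiset G) ≤ T ∧ C.a l.prod = 0 ∧ C.b l.prod = b := by
  simp [QB]

theorem zero_mem_QB (T : Multiset G) : (0 : ZMod q) ∈ C.QB T :=
  C.mem_QB.2 ⟨[], by simp, by simp [a_one], by simp [b_one]⟩

theorem QB_add (A B : Multiset G) (m n : ℕ) (hm : min q m ≤ (C.QB A).card)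
    (hn : min q n ≤ (C.QB B).card) : min q (m + n - 1) ≤ (C.QB (A + B)).card := by
  refine cd_le Fact.out (C.QB A) (C.QB B) _ ⟨0, C.zero_mem_QB A⟩ ⟨0, C.zero_mem_QB B⟩ m n hm hn ?_
  intro x hx y hy
  obtain ⟨l, hl, ha, rfl⟩ := C.mem_QB.1 hx
  obtain ⟨l', hl', ha', rfl⟩ := C.mem_QB.1 hy
  refine C.mem_QB.2 ⟨l ++ l', by rw [← Multiset.coe_add]; exact add_le_add hl hl', ?_, ?_⟩
  · rw [List.prod_append, C.a_mul, ha, ha', add_zero]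
  · rw [List.prod_append, C.b_mul, ha', C.σ_zero, mul_one]

/-- no nonempty 1-product subsequence -/
def Free (S : Multiset G) : Prop := ∀ T ≤ S, T ≠ 0 → ¬ IsOneProdSeq T

/-- minimal nonempty sequence with zero first-coordinate sum -/
def MinZ (U : Multiset G) : Prop :=
  (U ≠ 0 ∧ C.asum U = 0) ∧ ∀ W, W ≤ U → (W ≠ 0 ∧ C.asum W = 0) → W = U

theorem exists_minZ (S : Multiset G) (h : p ≤ Multiset.card S) : ∃ U, U ≤ S ∧ C.MinZ U := by
  obtain ⟨U, hU, hU0, -, hs⟩ := davenport C.a S (by simpa [ZMod.card] using h)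
  obtain ⟨V, hV, h1, h2⟩ := ms_minimal (fun W => W ≠ 0 ∧ C.asum W = 0) U ⟨hU0, hs⟩
  exact ⟨V, hV.trans hU, h1, h2⟩

/-- suffix sums -/
noncomputable def suf (L : List G) : Finset (ZMod p) :=
  (Finset.range L.length).image fun i => C.asum ((L.drop i : List G) : Multiset G)

theorem suf_card (L : List G) (h : C.MinZ (L : Multiset G)) : (C.suf L).card = L.length := by
  rw [suf, Finset.card_image_of_injOn, Finset.card_range]
  have main : ∀ i j, i < j → j < L.length →
      C.asum ((L.drop i : List G) : Multiset G) = C.asum ((L.drop j : List G) : Multiset G) →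
      False := by
    intro i j hij hj he
    set W := (L.drop i).take (j - i) with hW
    have h1 : L.drop i = W ++ L.drop j := by
      conv_lhs => rw [← List.take_append_drop (j - i) (L.drop i)]
      rw [List.drop_drop, show i + (j - i) = j by omega]
    have h2 : C.asum (W : Multiset G) = 0 := by
      rw [h1, ← Multiset.coe_add, asum_add] at he
      simpa using he
    have hlen : W.length = j - i := by rw [hW]; simp; omega
    have hsub : W.Sublist L := (List.take_sublist _ _).trans (List.drop_sublist _ _)
    have h3 := h.2 (W : Multiset G) hsub.subperm ⟨by
      intro h0
      have := congrArg Multiset.card h0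
      simp [hlen] at this
      omega, h2⟩
    have := congrArg Multiset.card h3
    simp only [Multiset.coe_card] at this
    omega
  intro i hi j hj he
  simp only [Finset.coe_range, Set.mem_Iio] at hi hj
  rcases lt_trichotomy i j with h' | h' | h'
  · exact (main i j h' hj he).elim
  · exact h'
  · exact (main j i h' hi he.symm).elim

theorem suf_split (L : List G) (c : ZMod p) (hc : c ∈ C.suf L) :
    ∃ L1 L2, L = L1 ++ L2 ∧ C.asum (L2 : Multiset G) = c := by
  obtain ⟨i, -, rfl⟩ := Finset.mem_image.1 hc
  exact ⟨L.take i, L.drop i, by simp, rfl⟩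

theorem PB_shift (U : Multiset G) (hU : C.MinZ U) (hf : ¬ IsOneProdSeq U) :
    Multiset.card U ≤ (C.PB U).card := by
  obtain ⟨L, rfl⟩ : ∃ L : List G, (L : Multiset G) = U := ⟨U.toList, by simp⟩
  have ha : C.a L.prod = 0 := by rw [C.a_prod, hU.1.2]
  have hb : C.b L.prod ≠ 0 := fun h => hf ⟨L, rfl, C.eq_one _ ha h⟩
  have hinj : Function.Injective (fun c : ZMod p => C.σ (-c) * C.b L.prod) := by
    intro c d h
    exact neg_injective (C.σ_inj (mul_right_cancel₀ hb h))
  have hsub : (C.suf L).image (fun c => C.σ (-c) * C.b L.prod) ⊆ C.PB (L : Multiset G) := by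
    intro z hz
    obtain ⟨c, hc, rfl⟩ := Finset.mem_image.1 hz
    obtain ⟨L1, L2, rfl, rfl⟩ := C.suf_split L c hc
    refine C.mem_PB.2 ⟨L2 ++ L1, Multiset.coe_eq_coe.2 List.perm_append_comm, ?_⟩
    rw [List.prod_append, C.a_mul] at ha
    rw [List.prod_append, List.prod_append, C.b_mul, C.b_mul, ← C.a_prod,
      ← eq_neg_of_add_eq_zero_left ha]
    have h1 : C.σ (C.a L1.prod) * C.σ (C.a L2.prod) = 1 := by rw [← C.σ_add, ha, C.σ_zero]
    linear_combination (-C.b L1.prod) * h1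
  have := Finset.card_le_card hsub
  rw [Finset.card_image_of_injective _ hinj, C.suf_card L hU] at this
  simpa using this

theorem QB_minZ (U : Multiset G) (hU : C.MinZ U) (hf : ¬ IsOneProdSeq U) :
    Multiset.card U + 1 ≤ (C.QB U).card := by
  have h0 : (0 : ZMod q) ∉ C.PB U := by
    intro h
    obtain ⟨l, hl, hb⟩ := C.mem_PB.1 h
    exact hf ⟨l, hl, C.eq_one _ (by rw [C.a_prod' hl, hU.1.2]) hb⟩
  have hsub : insert 0 (C.PB U) ⊆ C.QB U := by
    intro z hz
    rcases Finset.mem_insert.1 hz with rfl | hz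
    · exact C.zero_mem_QB U
    · obtain ⟨l, hl, hb⟩ := C.mem_PB.1 hz
      exact C.mem_QB.2 ⟨l, hl.le, by rw [C.a_prod' hl, hU.1.2], hb⟩
  have := Finset.card_le_card hsub
  rw [Finset.card_insert_of_notMem h0] at this
  have := C.PB_shift U hU hf
  omega

theorem exists_V (S : Multiset G) (hf : Free S) :
    ∃ V, V ≤ S ∧ Multiset.card S + 1 ≤ Multiset.card V + p ∧
      min q (Multiset.card V + 1) ≤ (C.QB V).card := by
  induction S using Multiset.strongInductionOn with
  | _ S ih =>
    by_cases h : p ≤ Multiset.card S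
    · obtain ⟨U, hU, hmin⟩ := C.exists_minZ S h
      obtain ⟨R, rfl⟩ := Multiset.le_iff_exists_add.1 hU
      have hR : R < U + R := by
        refine lt_of_le_of_ne (Multiset.le_add_left _ _) ?_
        intro he
        have := congrArg Multiset.card he
        have := Multiset.card_pos.2 hmin.1.1
        simp at *
        exact hmin.1.1 (by assumption)
      obtain ⟨V, hV, h1, h2⟩ := ih R hR (fun T hT => hf T (hT.trans hR.le))
      have h3 := C.QB_minZ U hmin (hf U hU hmin.1.1)
      refine ⟨U + V, by gcongr, ?_, ?_⟩
      · simp only [Multiset.card_add]; omega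
      · have := C.QB_add U V _ _ (le_trans (min_le_right _ _) h3) h2
        simp only [Multiset.card_add]
        convert this using 2
        omega
    · refine ⟨0, by simp, by simp; omega, ?_⟩
      have : 0 < (C.QB (0 : Multiset G)).card := Finset.card_pos.2 ⟨0, C.zero_mem_QB _⟩
      rw [Multiset.card_zero]; omega

/-- products of `U` with inserted elements of `Z` -/
noncomputable def YB (U : Multiset G) (K : Finset (ZMod p)) (Z : Multiset G) : Finset (ZMod q) :=
  Finset.univ.filter fun y => ∃ (L : List G) (M : Multiset G), (L : Multiset G) = U + M ∧ M ≤ Z ∧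
    (∀ c ∈ K, ∃ L1 L2, L = L1 ++ L2 ∧ C.asum (L2 : Multiset G) = c) ∧ C.b L.prod = y

theorem mem_YB {U : Multiset G} {K : Finset (ZMod p)} {Z : Multiset G} {y : ZMod q} :
    y ∈ C.YB U K Z ↔ ∃ (L : List G) (M : Multiset G), (L : Multiset G) = U + M ∧ M ≤ Z ∧
    (∀ c ∈ K, ∃ L1 L2, L = L1 ++ L2 ∧ C.asum (L2 : Multiset G) = c) ∧ C.b L.prod = y := by
  simp [YB]

theorem YB_nonempty (L : List G) (Z : Multiset G) :
    (C.YB (L : Multiset G) (C.suf L) Z).Nonempty :=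
  ⟨C.b L.prod, C.mem_YB.2 ⟨L, 0, by simp, by simp, fun c hc => C.suf_split L c hc, rfl⟩⟩

theorem YB_card (L : List G) (Z : Multiset G) (hZ : ∀ n ∈ Z, C.a n = 0 ∧ n ≠ 1) :
    min q (Multiset.card Z * (C.suf L).card + 1) ≤ (C.YB (L : Multiset G) (C.suf L) Z).card := by
  induction Z using Multiset.induction with
  | empty =>
    have := (C.YB_nonempty L 0).card_pos
    rw [Multiset.card_zero]; omega
  | cons n Z ih =>
    have h1 := ih (fun x hx => hZ x (Multiset.mem_cons_of_mem hx))
    obtain ⟨hn, hn1⟩ := hZ n (Multiset.mem_cons_self _ _)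
    have hb : C.b n ≠ 0 := fun h => hn1 (C.eq_one _ hn h)
    have hinj : Function.Injective (fun c : ZMod p => C.b n * C.σ c) := by
      intro c d h
      exact C.σ_inj (mul_left_cancel₀ hb h)
    have h0 : (0 : ZMod q) ∉ (C.suf L).image (fun c => C.b n * C.σ c) := by
      intro h
      obtain ⟨c, -, hc⟩ := Finset.mem_image.1 h
      exact mul_ne_zero hb (C.σ_ne c) hc
    have := cd_le (Fact.out) (C.YB (L : Multiset G) (C.suf L) Z)
      (insert 0 ((C.suf L).image (fun c => C.b n * C.σ c)))
      (C.YB (L : Multiset G) (C.suf L) (n ::ₘ Z)) (C.YB_nonempty L Z) (by simp) _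
      ((C.suf L).card + 1) h1
      (by rw [Finset.card_insert_of_notMem h0, Finset.card_image_of_injective _ hinj]
          exact min_le_right _ _) (by
        intro x hx y hy
        obtain ⟨L', M, hL', hM, hK, rfl⟩ := C.mem_YB.1 hx
        rcases Finset.mem_insert.1 hy with rfl | hy
        · exact C.mem_YB.2 ⟨L', M, hL', hM.trans (Multiset.le_cons_self _ _), hK, by simp⟩
        · obtain ⟨c, hc, rfl⟩ := Finset.mem_image.1 hy
          obtain ⟨L1, L2, rfl, h2⟩ := hK c hc
          refine C.mem_YB.2 ⟨L1 ++ n :: L2, n ::ₘ M, ?_, (Multiset.cons_le_cons_iff n).2 hM, ?_, ?_⟩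
          · rw [Multiset.coe_eq_coe.2 (List.perm_middle), ← Multiset.cons_coe, hL']
            simp
          · intro d hd
            obtain ⟨L1', L2', he, h3⟩ := hK d hd
            rcases List.append_eq_append_iff.1 he with ⟨as, e1, e2⟩ | ⟨as, e1, e2⟩
            · refine ⟨L1 ++ n :: as, L2', by simp [e2], h3⟩
            · refine ⟨L1', as ++ n :: L2, by simp [e1], ?_⟩
              rw [← h3, e2]
              simp [asum, hn]
          · rw [List.prod_append, List.prod_cons, List.prod_append, C.b_mul, C.b_mul, C.b_mul,
              C.a_mul, hn, zero_add, C.a_prod L2, h2]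
            ring)
    rw [Multiset.card_cons]
    convert this using 2
    ring_nf
    omega

theorem free_contra (C : Coord p q G) (S : Multiset G) (hf : Free S) (hS : p + q ≤ Multiset.card S + 1) : False := by
  have h1S : (1 : G) ∉ S := by
    intro h
    exact hf {1} (Multiset.singleton_le.2 h) (by simp) ⟨[1], rfl, by simp⟩
  set Z := S.filter (fun g => C.a g = 0) with hZ
  set S0 := S.filter (fun g => ¬ C.a g = 0) with hS0
  have hsum : Z + S0 = S := Multiset.filter_add_not _ _
  have hZa : ∀ n ∈ Z, C.a n = 0 ∧ n ≠ 1 := by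
    intro n hn
    obtain ⟨h1, h2⟩ := Multiset.mem_filter.1 hn
    exact ⟨h2, fun h => h1S (h ▸ h1)⟩
  have hZS : Z ≤ S := Multiset.filter_le _ _
  have hcard : Multiset.card Z + Multiset.card S0 = Multiset.card S := by
    rw [← hsum, Multiset.card_add]
  have hZq : Multiset.card Z < q := by
    by_contra h
    push Not at h
    obtain ⟨U, hU, hU0, -, hs⟩ := davenport C.b Z (by simpa [ZMod.card] using h)
    exact hf U (hU.trans hZS) hU0 (C.oneProd_of_N U
      (fun g hg => (hZa g (Multiset.mem_of_le hU hg)).1) hs)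
  obtain ⟨U, hU, hmin⟩ := C.exists_minZ S0 (by omega)
  obtain ⟨R, hR⟩ := Multiset.le_iff_exists_add.1 hU
  have hS0S : S0 ≤ S := Multiset.filter_le _ _
  have hRS : R ≤ S := le_trans (by rw [hR]; exact Multiset.le_add_left _ _) hS0S
  obtain ⟨V, hV, hVc, hVQ⟩ := C.exists_V R (fun T hT => hf T (hT.trans hRS))
  have hUf : ¬ IsOneProdSeq U := hf U (hU.trans hS0S) hmin.1.1
  have hUpos := Multiset.card_pos.2 hmin.1.1
  have hY : ∃ Y : Finset (ZMod q), Y.Nonempty ∧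
      min q (Multiset.card U + Multiset.card Z) ≤ Y.card ∧
      ∀ y ∈ Y, ∃ (L : List G) (M : Multiset G), (L : Multiset G) = U + M ∧ M ≤ Z ∧
        C.b L.prod = y := by
    by_cases hZ0 : Multiset.card Z = 0
    · refine ⟨C.PB U, C.PB_nonempty U, ?_, ?_⟩
      · have := C.PB_shift U hmin hUf
        omega
      · intro y hy
        obtain ⟨l, hl, hb⟩ := C.mem_PB.1 hy
        exact ⟨l, 0, by simpa using hl, by simp, hb⟩
    · obtain ⟨L, rfl⟩ : ∃ L : List G, (L : Multiset G) = U := ⟨U.toList, by simp⟩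
      refine ⟨C.YB (L : Multiset G) (C.suf L) Z, C.YB_nonempty L Z, ?_, ?_⟩
      · have h2 := C.YB_card L Z hZa
        rw [C.suf_card L hmin] at h2
        refine le_trans (min_le_min le_rfl ?_) h2
        have : 0 < L.length := by simpa using hUpos
        obtain ⟨e, he⟩ := Nat.exists_eq_succ_of_ne_zero hZ0
        rw [he, Multiset.coe_card]
        obtain ⟨u, hu⟩ := Nat.exists_eq_succ_of_ne_zero this.ne'
        rw [hu]
        simp only [Nat.succ_eq_add_one]
        nlinarith [Nat.zero_le (e * u)]
      · intro y hy
        obtain ⟨L', M, h1, h2, -, h3⟩ := C.mem_YB.1 hy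
        exact ⟨L', M, h1, h2, h3⟩
  obtain ⟨Y, hYn, hYc, hYm⟩ := hY
  have hfin := cd_le (Fact.out) Y (C.QB V) (Y + C.QB V) hYn ⟨0, C.zero_mem_QB V⟩ _ _ hYc hVQ
    (fun x hx y hy => Finset.add_mem_add hx hy)
  have hcR : Multiset.card S0 = Multiset.card U + Multiset.card R := by
    rw [hR, Multiset.card_add]
  have hq' : q ≤ (Y + C.QB V).card := by
    refine le_trans ?_ hfin
    apply le_min le_rfl
    omega
  have huniv : Y + C.QB V = Finset.univ := by
    apply Finset.eq_univ_of_card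
    apply le_antisymm
    · exact Finset.card_le_univ _
    · simpa [ZMod.card] using hq'
  have h0 : (0 : ZMod q) ∈ Y + C.QB V := by rw [huniv]; simp
  obtain ⟨y, hy, v, hv, hyv⟩ := Finset.mem_add.1 h0
  obtain ⟨L, M, hL, hM, hLy⟩ := hYm y hy
  obtain ⟨l, hl, hla, hlb⟩ := C.mem_QB.1 hv
  have haM : C.asum M = 0 := by
    apply Multiset.sum_eq_zero
    intro x hx
    obtain ⟨y, hy, rfl⟩ := Multiset.mem_map.1 hx
    exact (hZa y (Multiset.mem_of_le hM hy)).1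
  refine hf (U + M + (l : Multiset G)) ?_ ?_ ⟨L ++ l, ?_, ?_⟩
  · rw [← hsum, hR]
    calc U + M + (l : Multiset G) ≤ U + Z + R := add_le_add (add_le_add le_rfl hM) (hl.trans hV)
      _ = Z + (U + R) := by abel
  · intro h
    have := congrArg Multiset.card h
    simp only [Multiset.card_add, Multiset.card_zero] at this
    omega
  · rw [← Multiset.coe_add, hL]
  · apply C.eq_one
    · rw [List.prod_append, C.a_mul, hla, C.a_prod' hL, C.asum_add, haM, hmin.1.2]; simp
    · rw [List.prod_append, C.b_mul, hla, C.σ_zero, hLy, hlb, mul_one, hyv]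

theorem davenportG (C : Coord p q G) (S : Multiset G) (hS : p + q - 1 ≤ Multiset.card S) :
    ∃ U, U ≤ S ∧ U ≠ 0 ∧ Multiset.card U ≤ p + q - 1 ∧ IsOneProdSeq U := by
  obtain ⟨S', hS', hc⟩ := ms_exists_sub S _ hS
  by_contra hno
  push Not at hno
  apply C.free_contra S'
  · intro T hT hT0 h1
    exact hno T (hT.trans hS') hT0 (hc ▸ Multiset.card_le_card hT) h1
  · omega

end Coord
end DavenportG

section GoodSec
open scoped Classical Pointwise
set_option linter.unusedSectionVars false

theorem egz_iter' {ι : Type*} (n : ℕ) (hn : 0 < n) (f : ι → ZMod n) (r : ℕ) (S : Multiset ι)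
    (hS : r * n + n ≤ Multiset.card S + 1) :
    ∃ T, T ≤ S ∧ Multiset.card T = r * n ∧ (T.map f).sum = 0 := by
  obtain ⟨B, hB, hBS, hBb⟩ := egz_iter n hn f r S hS
  refine ⟨B.sum, hBS, ?_, ?_⟩
  · clear hBS hS
    induction B using Multiset.induction generalizing r with
    | empty => simp at hB; simp [← hB]
    | cons b B ih =>
      rw [Multiset.sum_cons, Multiset.card_add, (hBb b (Multiset.mem_cons_self _ _)).1,
        ih _ rfl (fun x hx => hBb x (Multiset.mem_cons_of_mem hx)), ← hB, Multiset.card_cons]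
      ring
  · clear hBS hS hB
    induction B using Multiset.induction with
    | empty => simp
    | cons b B ih =>
      rw [Multiset.sum_cons, Multiset.map_add, Multiset.sum_add,
        (hBb b (Multiset.mem_cons_self _ _)).2,
        ih (fun x hx => hBb x (Multiset.mem_cons_of_mem hx)), add_zero]

theorem ms_zip {ι : Type*} (A B : Multiset ι) (h : Multiset.card A = Multiset.card B) :
    ∃ M : Multiset (ι × ι), M.map Prod.fst = A ∧ M.map Prod.snd = B ∧
      ∀ m ∈ M, m.1 ∈ A ∧ m.2 ∈ B := by
  induction A using Multiset.induction generalizing B with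
  | empty =>
    have : B = 0 := by rw [← Multiset.card_eq_zero, ← h]; simp
    exact ⟨0, by simp [this]⟩
  | cons a A ih =>
    have : 0 < Multiset.card B := by rw [← h]; simp
    obtain ⟨b, hb⟩ := Multiset.card_pos_iff_exists_mem.1 this
    obtain ⟨B', rfl⟩ := Multiset.exists_cons_of_mem hb
    obtain ⟨M, h1, h2, h3⟩ := ih B' (by simpa using h)
    refine ⟨(a, b) ::ₘ M, by simp [h1], by simp [h2], ?_⟩
    intro m hm
    rcases Multiset.mem_cons.1 hm with rfl | hm
    · simp
    · exact ⟨Multiset.mem_cons_of_mem (h3 m hm).1, Multiset.mem_cons_of_mem (h3 m hm).2⟩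

theorem card_filter_split {ι : Type*} (P : ι → Prop) [DecidablePred P] (S : Multiset ι) :
    Multiset.card (S.filter P) + Multiset.card (S.filter (fun x => ¬ P x)) = Multiset.card S := by
  rw [← Multiset.card_add, Multiset.filter_add_not]

theorem card_filter_mono {ι : Type*} {P Q : ι → Prop} [DecidablePred P] [DecidablePred Q] (S : Multiset ι)
    (h : ∀ x ∈ S, P x → Q x) :
    Multiset.card (S.filter P) ≤ Multiset.card (S.filter Q) := by
  rw [← Multiset.countP_eq_card_filter, ← Multiset.countP_eq_card_filter]
  induction S using Multiset.induction with
  | empty => simp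
  | cons a S ih =>
    have h1 := ih (fun x hx => h x (Multiset.mem_cons_of_mem hx))
    have h2 := h a (Multiset.mem_cons_self _ _)
    rw [Multiset.countP_cons, Multiset.countP_cons]
    by_cases hP : P a
    · rw [if_pos hP, if_pos (h2 hP)]; omega
    · rw [if_neg hP]; omega

theorem card_filter_le {ι : Type*} (P : ι → Prop) [DecidablePred P] {S T : Multiset ι} (h : S ≤ T) :
    Multiset.card (S.filter P) ≤ Multiset.card (T.filter P) :=
  Multiset.card_le_card (Multiset.filter_le_filter _ h)

namespace Coord
variable {p q : ℕ} [Fact p.Prime] [Fact q.Prime] {G : Type*} [Group G] (C : Coord p q G)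

/-- there is a 1-product subsequence of length `p * q` -/
def Good (_C : Coord p q G) (S : Multiset G) : Prop :=
  ∃ T, T ≤ S ∧ Multiset.card T = p * q ∧ IsOneProdSeq T

theorem good_ones (S : Multiset G) (hS : p * q + p + q ≤ Multiset.card S + 2)
    (h : p + q ≤ Multiset.card (S.filter (fun x => x = 1)) + 2) : C.Good S := by
  have hp : 2 ≤ p := (Fact.out : p.Prime).two_le
  have hq : 2 ≤ q := (Fact.out : q.Prime).two_le
  have hones : ∀ O, O ≤ S.filter (fun x => x = 1) → IsOneProdSeq O := by
    intro O hO
    refine ⟨O.toList, by simp, List.prod_eq_one ?_⟩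
    intro x hx
    exact (Multiset.mem_filter.1 (Multiset.mem_of_le hO (by simpa using hx))).2
  have hsplit := card_filter_split (fun x => x = 1) S
  by_cases hbig : p * q ≤ Multiset.card (S.filter (fun x => x = 1))
  · obtain ⟨O, hO, hc⟩ := ms_exists_sub _ _ hbig
    exact ⟨O, hO.trans (Multiset.filter_le _ _), hc, hones O hO⟩
  · obtain ⟨T, hT, hT1, hT2, hT3⟩ := window (IsOneProdSeq (G := G)) (p + q - 1) (oneProd_zero)
      (fun A B hA hB => oneProd_add hA hB) (S.filter (fun x => ¬ x = 1))
      (fun S' _ h => C.davenportG S' h) (p * q - Multiset.card (S.filter (fun x => x = 1)))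
      (by omega)
    obtain ⟨O, hO, hc⟩ := ms_exists_sub (S.filter (fun x => x = 1)) (p * q - Multiset.card T)
      (by omega)
    refine ⟨O + T, ?_, ?_, oneProd_add (hones O hO) hT1⟩
    · rw [← Multiset.filter_add_not (fun x => x = 1) S]
      exact add_le_add hO hT
    · rw [Multiset.card_add]; omega

theorem good_N (S : Multiset G)
    (h : p * q + q ≤ Multiset.card (S.filter (fun x => C.a x = 0)) + 1) : C.Good S := by
  obtain ⟨T, hT, hc, hs⟩ := egz_iter' q (Fact.out : q.Prime).pos C.b p _ h
  refine ⟨T, hT.trans (Multiset.filter_le _ _), hc, C.oneProd_of_N T ?_ hs⟩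
  intro g hg
  exact (Multiset.mem_filter.1 (Multiset.mem_of_le hT hg)).2

theorem good_K (S : Multiset G) (g : G) (hg : C.a g ≠ 0)
    (h : p * q + p ≤ Multiset.card (S.filter (fun x => Commute x g)) + 1) : C.Good S := by
  obtain ⟨T, hT, hc, hs⟩ := egz_iter' p (Fact.out : p.Prime).pos C.a q _
    (by rw [mul_comm q p]; exact h)
  refine ⟨T, hT.trans (Multiset.filter_le _ _), by rw [hc, mul_comm],
    C.oneProd_of_commute T g hg ?_ hs⟩
  intro g hg
  exact (Multiset.mem_filter.1 (Multiset.mem_of_le hT hg)).2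

theorem asum_const (T : Multiset G) (c : ZMod p) (hc : Multiset.card T = p * q)
    (h : ∀ x ∈ T, C.a x = c) : C.asum T = 0 := by
  rw [asum, Multiset.map_congr rfl h, Multiset.map_const', Multiset.sum_replicate, hc]
  simp

theorem good_rep (S : Multiset G) (g : G) (hg : C.a g ≠ 0)
    (h : p * q ≤ Multiset.card (S.filter (fun x => x = g))) : C.Good S := by
  obtain ⟨T, hT, hc⟩ := ms_exists_sub _ _ h
  have hTg : ∀ x ∈ T, x = g := fun x hx =>
    (Multiset.mem_filter.1 (Multiset.mem_of_le hT hx)).2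
  refine ⟨T, hT.trans (Multiset.filter_le _ _), hc, C.oneProd_of_commute T g hg ?_ ?_⟩
  · intro x hx
    rw [hTg x hx]
  · exact C.asum_const T (C.a g) hc (fun x hx => by rw [hTg x hx])

theorem one_of_pairs (T : Multiset G) (M : Multiset (G × G)) (hM : q ≤ Multiset.card M + 1)
    (hMT : M.map Prod.fst + M.map Prod.snd ≤ T) (h : ∀ m ∈ M, ¬ Commute m.1 m.2)
    (ha : C.asum T = 0) : IsOneProdSeq T := by
  have := C.PB_mono hMT _ (C.PB_pairs M h)
  rw [min_eq_left hM] at this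
  exact C.oneProd_of_PB this ha

/-- possible sums of selections -/
noncomputable def SB (M : Multiset (G × G)) : Finset (ZMod p) :=
  Finset.univ.filter fun t => ∃ T, T ≤ M.map Prod.fst + M.map Prod.snd ∧
    Multiset.card T = Multiset.card M ∧ C.asum T = t

theorem mem_SB {M : Multiset (G × G)} {t : ZMod p} : t ∈ C.SB M ↔
    ∃ T, T ≤ M.map Prod.fst + M.map Prod.snd ∧
    Multiset.card T = Multiset.card M ∧ C.asum T = t := by simp [SB]

theorem SB_nonempty (M : Multiset (G × G)) : (C.SB M).Nonempty :=
  ⟨C.asum (M.map Prod.fst), C.mem_SB.2 ⟨_, Multiset.le_add_right _ _, by simp, rfl⟩⟩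

theorem SB_card (M : Multiset (G × G)) (h : ∀ m ∈ M, C.a m.1 ≠ C.a m.2) :
    min p (Multiset.card M + 1) ≤ (C.SB M).card := by
  induction M using Multiset.induction with
  | empty =>
    have := (C.SB_nonempty 0).card_pos
    rw [Multiset.card_zero]; omega
  | cons m M ih =>
    have h1 := ih (fun x hx => h x (Multiset.mem_cons_of_mem hx))
    have hm := h m (Multiset.mem_cons_self _ _)
    have e : (Multiset.map Prod.fst (m ::ₘ M) + Multiset.map Prod.snd (m ::ₘ M)) =
        (Multiset.map Prod.fst M + Multiset.map Prod.snd M) + ({m.1} + {m.2}) := by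
      simp only [Multiset.map_cons]
      simp only [← Multiset.singleton_add]
      abel
    have := cd_le (Fact.out) (C.SB M) {C.a m.1, C.a m.2} (C.SB (m ::ₘ M)) (C.SB_nonempty M)
      (by simp) _ 2 h1 (by rw [Finset.card_pair hm]; exact min_le_right _ _) (by
        intro x hx y hy
        obtain ⟨T, hT, hc, rfl⟩ := C.mem_SB.1 hx
        have main : ∀ g, ({g} : Multiset G) ≤ {m.1} + {m.2} → C.asum T + C.a g ∈ C.SB (m ::ₘ M) := by
          intro g hg
          refine C.mem_SB.2 ⟨T + {g}, ?_, by simp [hc], by rw [asum_add]; simp [asum]⟩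
          rw [e]
          exact add_le_add hT hg
        simp only [Finset.mem_insert, Finset.mem_singleton] at hy
        rcases hy with rfl | rfl
        · exact main _ (Multiset.le_add_right _ _)
        · exact main _ (Multiset.le_add_left _ _))
    rw [Multiset.card_cons]
    exact this

theorem exists_sel (M : Multiset (G × G)) (h : ∀ m ∈ M, C.a m.1 ≠ C.a m.2)
    (hM : p ≤ Multiset.card M + 1) (t : ZMod p) :
    ∃ T, T ≤ M.map Prod.fst + M.map Prod.snd ∧
    Multiset.card T = Multiset.card M ∧ C.asum T = t := by
  have h1 := C.SB_card M h
  rw [min_eq_left hM] at h1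
  have : C.SB M = Finset.univ := by
    apply Finset.eq_univ_of_card
    apply le_antisymm
    · exact Finset.card_le_univ _
    · simpa [ZMod.card] using h1
  exact C.mem_SB.1 (by rw [this]; simp)

theorem good_pairs (S : Multiset G) (hS : p * q + p ≤ Multiset.card S + 1)
    (f1 : 3 * p + 2 * q ≤ p * q + 6) (hp3 : 3 ≤ p)
    (M1 M2 : Multiset (G × G)) (h1 : Multiset.card M1 + 1 = p) (h2 : Multiset.card M2 + 1 = q)
    (hM : (M1.map Prod.fst + M1.map Prod.snd) + (M2.map Prod.fst + M2.map Prod.snd) ≤ S)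
    (hM1 : ∀ m ∈ M1, C.a m.1 ≠ C.a m.2) (hM2 : ∀ m ∈ M2, ¬ Commute m.1 m.2) : C.Good S := by
  obtain ⟨R, rfl⟩ := Multiset.le_iff_exists_add.1 hM
  simp only [Multiset.card_add, Multiset.card_map] at hS
  obtain ⟨R', hR', hc⟩ := ms_exists_sub R (p * q - 2 * (q - 1) - (p - 1)) (by omega)
  obtain ⟨T, hT, hTc, hTs⟩ := C.exists_sel M1 hM1 h1.ge
    (-(C.asum (M2.map Prod.fst + M2.map Prod.snd + R')))
  refine ⟨T + (M2.map Prod.fst + M2.map Prod.snd + R'), ?_, ?_, C.one_of_pairs _ M2 h2.ge ?_ hM2 ?_⟩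
  · calc _ ≤ (M1.map Prod.fst + M1.map Prod.snd) + (M2.map Prod.fst + M2.map Prod.snd + R) := by
          gcongr
      _ = _ := by abel
  · simp only [Multiset.card_add, Multiset.card_map]; omega
  · exact le_trans (Multiset.le_add_right _ R') (Multiset.le_add_left _ _)
  · rw [asum_add, hTs]; simp

theorem good_insert (S : Multiset G) (hS : p * q + p + q ≤ Multiset.card S + 2)
    (f1 : 3 * p + 2 * q ≤ p * q + 6) (hp3 : 3 ≤ p) (hpq : p + 1 ≤ q)
    (hm : p ≤ Multiset.card (S.filter (fun x => ¬ C.a x = 0)))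
    (he : q ≤ Multiset.card (S.filter (fun x => C.a x = 0 ∧ x ≠ 1)) + 1)
    (hz : p + q ≤ Multiset.card (S.filter (fun x => C.a x = 0)) + 2) : C.Good S := by
  have hsplit := card_filter_split (fun x => C.a x = 0) S
  obtain ⟨V, hV, hV1, hV2, hV3⟩ := window (fun T => C.asum T = 0) p (by simp [asum])
    (fun A B hA hB => by rw [asum_add, hA, hB, add_zero]) (S.filter (fun x => ¬ C.a x = 0))
    (fun S' _ h => by
      obtain ⟨U, hU, hU0, h3, hs⟩ := davenport C.a S' (by simpa [ZMod.card] using h)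
      exact ⟨U, hU, hU0, by simpa [ZMod.card] using h3, hs⟩)
    (max 1 (p * q - Multiset.card (S.filter (fun x => C.a x = 0)))) (by omega)
  obtain ⟨v, hv⟩ := Multiset.card_pos_iff_exists_mem.1 (show 0 < Multiset.card V by omega)
  have hva : C.a v ≠ 0 := (Multiset.mem_filter.1 (Multiset.mem_of_le hV hv)).2
  obtain ⟨E, hE, hEc⟩ := ms_exists_sub (S.filter (fun x => C.a x = 0 ∧ x ≠ 1)) (q - 1) (by omega)
  have hEa : ∀ n ∈ E, C.a n = 0 ∧ n ≠ 1 := fun n hn =>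
    (Multiset.mem_filter.1 (Multiset.mem_of_le hE hn)).2
  have hEZ : E ≤ S.filter (fun x => C.a x = 0) :=
    hE.trans (Multiset.monotone_filter_right _ (fun x hx => hx.1))
  have g2 : 2 * q + p ≤ p * q + 1 := by nlinarith
  obtain ⟨W, hW1, hW2, hW3⟩ := ms_exists_between E _ (p * q - Multiset.card V) hEZ
    (by omega) (by omega)
  refine ⟨W + V, ?_, by rw [Multiset.card_add]; omega, C.oneProd_of_PB (T := W + V) ?_ ?_⟩
  · rw [← Multiset.filter_add_not (fun x => C.a x = 0) S]
    exact add_le_add hW2 hV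
  · have h1 := C.PB_insert v hva E hEa
    rw [hEc] at h1
    have h2 : {v} + E ≤ W + V := by
      rw [add_comm]; exact add_le_add hW1 (Multiset.singleton_le.2 hv)
    have h3 := C.PB_mono h2 _ h1
    omega
  · have : C.asum W = 0 := by
      apply Multiset.sum_eq_zero
      intro x hx
      obtain ⟨y, hy, rfl⟩ := Multiset.mem_map.1 hx
      exact (Multiset.mem_filter.1 (Multiset.mem_of_le hW2 hy)).2
    rw [asum_add, this, hV1, add_zero]

theorem eq_of_commute {g h k : G} (hk : C.a k ≠ 0) (h1 : Commute g k) (h2 : Commute h k)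
    (ha : C.a g = C.a h) : g = h := by
  have e1 : C.a (g * h⁻¹) = 0 := by
    have := C.a_mul (g * h⁻¹) h
    simp [ha] at this
    exact this
  exact mul_inv_eq_one.1 (C.eq_one_of_commute (h1.mul_left h2.inv_left) hk e1)

theorem commute_iff {g h : G} :
    Commute g h ↔ C.b g * (C.σ (C.a h) - 1) = C.b h * (C.σ (C.a g) - 1) := by
  constructor
  · intro hc
    have h1 := congrArg C.b hc.eq
    rw [C.b_mul, C.b_mul] at h1
    linear_combination h1
  · intro h1
    refine C.ext_ab (by rw [C.a_mul, C.a_mul, add_comm]) ?_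
    rw [C.b_mul, C.b_mul]
    linear_combination h1

theorem comm_trans (C : Coord p q G) {f g k : G} (hg : g ≠ 1) (h1 : Commute f g)
    (h2 : Commute g k) : Commute f k := by
  by_cases ha : C.a g = 0
  · have hb : C.b g ≠ 0 := fun h => hg (C.eq_one _ ha h)
    rw [C.commute_iff, ha, C.σ_zero] at h1 h2
    have e1 : C.σ (C.a f) - 1 = 0 := by
      have : C.b g * (C.σ (C.a f) - 1) = 0 := by linear_combination -h1
      exact (mul_eq_zero.1 this).resolve_left hb
    have e2 : C.σ (C.a k) - 1 = 0 := by
      have : C.b g * (C.σ (C.a k) - 1) = 0 := by linear_combination h2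
      exact (mul_eq_zero.1 this).resolve_left hb
    rw [C.commute_iff, e1, e2]; simp
  · have hs : C.σ (C.a g) - 1 ≠ 0 := fun h => ha (C.σ_inj (by rw [C.σ_zero]; exact sub_eq_zero.1 h))
    rw [C.commute_iff] at h1 h2 ⊢
    apply mul_right_cancel₀ hs
    linear_combination (C.σ (C.a k) - 1) * h1 + (C.σ (C.a f) - 1) * h2

theorem good_g (S : Multiset G) (hS : p * q + p ≤ Multiset.card S + 1)
    (f1 : 3 * p + 2 * q ≤ p * q + 6) (hp3 : 3 ≤ p) (hpq : p + 1 ≤ q)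
    (g : G) (hg : C.a g ≠ 0)
    (h1 : p + q ≤ Multiset.card (S.filter (fun x => x = g)) + 2)
    (h2 : q ≤ Multiset.card (S.filter (fun x => ¬ Commute x g)) + 1)
    (h3 : p ≤ Multiset.card (S.filter (fun x => C.a x ≠ C.a g)) + 1)
    (h4 : p + q ≤ Multiset.card (S.filter (fun x => ¬ x = g)) + 2) : C.Good S := by
  set X := S.filter (fun x => ¬ x = g) with hX
  set Fc := X.filter (fun x => C.a x = C.a g) with hFc
  set W := X.filter (fun x => ¬ C.a x = C.a g) with hW
  have hXs : Fc + W = X := Multiset.filter_add_not _ _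
  have hWW : W = S.filter (fun x => C.a x ≠ C.a g) := by
    rw [hW, hX, Multiset.filter_filter]
    apply Multiset.filter_congr
    intro x _
    constructor
    · exact fun h => h.1
    · exact fun h => ⟨h, fun e => h (by rw [e])⟩
  have hFcn : ∀ x ∈ Fc, ¬ Commute x g := by
    intro x hx hc
    obtain ⟨hx1, hx2⟩ := Multiset.mem_filter.1 hx
    exact (Multiset.mem_filter.1 hx1).2 (C.eq_of_commute hg hc (Commute.refl g) hx2)
  have key : ∃ F1 W1, F1 + W1 ≤ X ∧ Multiset.card F1 = q - 1 ∧ Multiset.card W1 = p - 1 ∧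
      (∀ x ∈ F1, ¬ Commute x g) ∧ ∀ x ∈ W1, C.a x ≠ C.a g := by
    rw [← hWW] at h3
    by_cases hc : q - 1 ≤ Multiset.card Fc
    · obtain ⟨F1, hF1, hF1c⟩ := ms_exists_sub _ _ hc
      obtain ⟨W1, hW1, hW1c⟩ := ms_exists_sub W (p - 1) (by omega)
      refine ⟨F1, W1, by rw [← hXs]; exact add_le_add hF1 hW1, hF1c, hW1c, ?_, ?_⟩
      · exact fun x hx => hFcn x (Multiset.mem_of_le hF1 hx)
      · exact fun x hx => (Multiset.mem_filter.1 (Multiset.mem_of_le hW1 hx)).2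
    · set F := S.filter (fun x => ¬ Commute x g) with hF
      have hFcF : Fc ≤ F := by
        rw [hF, Multiset.le_filter]
        exact ⟨(Multiset.filter_le _ _).trans (Multiset.filter_le _ _), hFcn⟩
      have hFX : F ≤ X := by
        rw [hF, hX]
        apply Multiset.monotone_filter_right
        intro x hx e
        exact hx (by rw [e])
      obtain ⟨F1, hF1, hF2, hF1c⟩ := ms_exists_between Fc F (q - 1) hFcF (by omega) (by omega)
      obtain ⟨Y, hY⟩ := Multiset.le_iff_exists_add.1 (hF2.trans hFX)
      obtain ⟨F1', hF1'⟩ := Multiset.le_iff_exists_add.1 hF1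
      have hWY : W = F1' + Y := by
        rw [← hXs, hF1', add_assoc] at hY
        exact add_left_cancel hY
      have hXc : Multiset.card X = Multiset.card F1 + Multiset.card Y := by
        rw [← Multiset.card_add, ← hY]
      obtain ⟨W1, hW1, hW1c⟩ := ms_exists_sub Y (p - 1) (by omega)
      refine ⟨F1, W1, by rw [hY]; gcongr, hF1c, hW1c, ?_, ?_⟩
      · exact fun x hx => (Multiset.mem_filter.1 (Multiset.mem_of_le hF2 hx)).2
      · intro x hx
        have : x ∈ W := by
          rw [hWY]; exact Multiset.mem_add.2 (Or.inr (Multiset.mem_of_le hW1 hx))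
        exact (Multiset.mem_filter.1 this).2
  obtain ⟨F1, W1, hFW, hF1c, hW1c, hF1, hW1⟩ := key
  refine C.good_pairs S hS f1 hp3 (W1.map (fun x => (x, g))) (F1.map (fun x => (x, g)))
    (by rw [Multiset.card_map]; omega) (by rw [Multiset.card_map]; omega) ?_ ?_ ?_
  · simp only [Multiset.map_map, Function.comp_def, Multiset.map_id', Multiset.map_const', hF1c,
      hW1c]
    have hrep : Multiset.replicate (p - 1) g + Multiset.replicate (q - 1) g ≤
        S.filter (fun x => x = g) := by
      have hr : S.filter (fun x => x = g) =
          Multiset.replicate (Multiset.card (S.filter (fun x => x = g))) g :=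
        Multiset.eq_replicate_card.2 (fun b hb => (Multiset.mem_filter.1 hb).2)
      rw [hr, ← Multiset.replicate_add]
      apply Multiset.replicate_mono
      omega
    calc _ = (Multiset.replicate (p - 1) g + Multiset.replicate (q - 1) g) + (F1 + W1) := by abel
      _ ≤ S.filter (fun x => x = g) + X := add_le_add hrep hFW
      _ = S := Multiset.filter_add_not _ _
  · intro m hm
    obtain ⟨x, hx, rfl⟩ := Multiset.mem_map.1 hm
    exact hW1 x hx
  · intro m hm
    obtain ⟨x, hx, rfl⟩ := Multiset.mem_map.1 hm
    exact hF1 x hx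

end Coord
end GoodSec

section MainSec
open scoped Classical
set_option linter.unusedSectionVars false

namespace Coord
variable {p q : ℕ} [Fact p.Prime] [Fact q.Prime] {G : Type*} [Group G] (C : Coord p q G)

theorem good_3a (S : Multiset G) (hp3 : 3 ≤ p) (hpq : p + 1 ≤ q)
    (f1 : 3 * p + 2 * q ≤ p * q + 6) (c : ZMod p) (hc0 : c ≠ 0)
    (h : p * q + q ≤ Multiset.card (S.filter (fun x => C.a x = c))) : C.Good S := by
  set Sc := S.filter (fun x => C.a x = c) with hSc
  have hmem : ∀ x ∈ Sc, C.a x = c := fun x hx => (Multiset.mem_filter.1 hx).2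
  by_cases hg : ∀ g, q - 1 ≤ Multiset.card (Sc.filter (fun i => id i ≠ g))
  · obtain ⟨M, hM, hMS, hMn⟩ := pairs_lemma id Sc (q - 1) (by omega) hg
    have hMc : Multiset.card (M.map Prod.fst + M.map Prod.snd) = 2 * (q - 1) := by
      simp only [Multiset.card_add, Multiset.card_map, hM]; omega
    obtain ⟨T, hT1, hT2, hT3⟩ := ms_exists_between _ Sc (p * q) hMS (by rw [hMc]; omega) (by omega)
    refine ⟨T, hT2.trans (Multiset.filter_le _ _), hT3,
      C.one_of_pairs T M (by omega) hT1 ?_ ?_⟩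
    · intro m hm hcm
      have h1 : C.a m.1 = c := hmem _ (Multiset.mem_of_le hMS
        (Multiset.mem_add.2 (Or.inl (Multiset.mem_map_of_mem _ hm))))
      have h2 : C.a m.2 = c := hmem _ (Multiset.mem_of_le hMS
        (Multiset.mem_add.2 (Or.inr (Multiset.mem_map_of_mem _ hm))))
      exact hMn m hm (C.eq_of_commute (k := m.2) (by rw [h2]; exact hc0) hcm (Commute.refl _)
        (by show C.a m.1 = C.a m.2; rw [h1, h2]))
    · exact C.asum_const T c hT3 (fun x hx => hmem x (Multiset.mem_of_le hT2 hx))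
  · push Not at hg
    obtain ⟨g, hg⟩ := hg
    have hs := card_filter_split (fun x => x = g) Sc
    have hs2 : Multiset.card (Sc.filter (fun x => ¬ x = g)) < q - 1 := hg
    have hle := card_filter_le (fun x => x = g) (Multiset.filter_le (fun x => C.a x = c) S)
    rw [← hSc] at hle
    obtain ⟨x, hx⟩ := Multiset.card_pos_iff_exists_mem.1
      (show 0 < Multiset.card (Sc.filter (fun x => x = g)) by omega)
    obtain ⟨hx1, rfl⟩ := Multiset.mem_filter.1 hx
    exact C.good_rep S x (by rw [hmem x hx1]; exact hc0) (by omega)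

theorem good_3c (S : Multiset G) (hS : Multiset.card S + 2 = p * q + p + q)
    (hp3 : 3 ≤ p) (hpq : p + 1 ≤ q)
    (f1 : 3 * p + 2 * q ≤ p * q + 6) (f2 : 2 * p + 3 * q ≤ p * q + 6)
    (hh : Multiset.card (S.filter (fun x => x = 1)) + 3 ≤ p + q)
    (hz : Multiset.card (S.filter (fun x => C.a x = 0)) + 4 < 2 * (p + q))
    (hb : ∀ c, p - 1 ≤ Multiset.card (S.filter (fun x => C.a x ≠ c)))
    (k : G) (hk : C.a k ≠ 0)
    (hF : Multiset.card (S.filter (fun x => ¬ Commute x k)) + 4 ≤ q + 2 * p) : C.Good S := by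
  have hk1 : k ≠ 1 := fun h => hk (by rw [h, C.a_one])
  have hs := card_filter_split (fun x => Commute x k) S
  by_cases hK : p * q + p ≤ Multiset.card (S.filter (fun x => Commute x k)) + 1
  · exact C.good_K S k hk hK
  set F := S.filter (fun x => ¬ Commute x k) with hFd
  set K := S.filter (fun x => Commute x k) with hKd
  have hKs := card_filter_split (fun x => x = 1) K
  have hKl := card_filter_le (fun x => x = 1) (Multiset.filter_le (fun x => Commute x k) S)
  rw [← hKd] at hKl
  obtain ⟨F1, hF1, hF1c⟩ := ms_exists_sub F (q - 1) (by omega)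
  obtain ⟨K1, hK1, hK1c⟩ := ms_exists_sub (K.filter (fun x => ¬ x = 1)) (q - 1) (by omega)
  obtain ⟨M2, hM2a, hM2b, hM2m⟩ := ms_zip F1 K1 (by omega)
  have hM2c : Multiset.card M2 = q - 1 := by
    rw [← hF1c, ← hM2a, Multiset.card_map]
  have hM2 : ∀ m ∈ M2, ¬ Commute m.1 m.2 := by
    intro m hm hcm
    obtain ⟨h1, h2⟩ := hM2m m hm
    have h3 := (Multiset.mem_filter.1 (Multiset.mem_of_le hF1 h1)).2
    obtain ⟨h4, h5⟩ := Multiset.mem_filter.1 (Multiset.mem_of_le hK1 h2)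
    exact h3 (C.comm_trans h5 hcm (Multiset.mem_filter.1 h4).2)
  have hKF : F + K = S := by rw [add_comm]; exact Multiset.filter_add_not _ _
  obtain ⟨F2, hF2⟩ := Multiset.le_iff_exists_add.1 hF1
  obtain ⟨K2, hK2⟩ := Multiset.le_iff_exists_add.1 (hK1.trans (Multiset.filter_le _ _))
  have hSR : S = (F1 + K1) + (F2 + K2) := by rw [← hKF, hF2, hK2]; abel
  have hcF : Multiset.card F = Multiset.card F1 + Multiset.card F2 := by
    rw [← Multiset.card_add, ← hF2]
  have hcK : Multiset.card K = Multiset.card K1 + Multiset.card K2 := by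
    rw [← Multiset.card_add, ← hK2]
  have hcR : Multiset.card (F2 + K2) = Multiset.card F2 + Multiset.card K2 := Multiset.card_add _ _
  by_cases hR : ∀ c, p - 1 ≤ Multiset.card ((F2 + K2).filter (fun x => C.a x ≠ c))
  · obtain ⟨M1, hM1, hM1R, hM1n⟩ := pairs_lemma C.a (F2 + K2) (p - 1) (by omega) hR
    refine C.good_pairs S (by omega) f1 hp3 M1 M2 (by omega) (by omega) ?_ hM1n hM2
    rw [hM2a, hM2b, hSR, add_comm]
    gcongr
  · push Not at hR
    obtain ⟨c, hc⟩ := hR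
    have hc' : Multiset.card ((F2 + K2).filter (fun x => ¬ C.a x = c)) < p - 1 := hc
    have hRs := card_filter_split (fun x => C.a x = c) (F2 + K2)
    have hRS : F2 + K2 ≤ S := by rw [hSR]; exact Multiset.le_add_left _ _
    have hRl := card_filter_le (fun x => C.a x = c) hRS
    have hc0 : c ≠ 0 := by
      rintro rfl
      omega
    have hadd : Multiset.card ((F2 + K2).filter (fun x => C.a x = c)) =
        Multiset.card (F2.filter (fun x => C.a x = c)) +
        Multiset.card (K2.filter (fun x => C.a x = c)) := by
      rw [Multiset.filter_add, Multiset.card_add]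
    have hF2l : Multiset.card (F2.filter (fun x => C.a x = c)) ≤ Multiset.card F2 :=
      Multiset.card_le_card (Multiset.filter_le _ _)
    have hbig : p + q ≤ Multiset.card (K2.filter (fun x => C.a x = c)) + 2 := by omega
    obtain ⟨g, hg⟩ := Multiset.card_pos_iff_exists_mem.1
      (show 0 < Multiset.card (K2.filter (fun x => C.a x = c)) by omega)
    have hK2K : K2 ≤ K := by rw [hK2]; exact Multiset.le_add_left _ _
    have hK2c : ∀ x ∈ K2.filter (fun x => C.a x = c), C.a x = c ∧ Commute x k := by
      intro x hx
      obtain ⟨h1, h2⟩ := Multiset.mem_filter.1 hx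
      exact ⟨h2, (Multiset.mem_filter.1 (Multiset.mem_of_le hK2K h1)).2⟩
    obtain ⟨hga, hgk⟩ := hK2c g hg
    have hg0 : C.a g ≠ 0 := by rw [hga]; exact hc0
    have hg1 : g ≠ 1 := fun h => hg0 (by rw [h, C.a_one])
    have hle : K2.filter (fun x => C.a x = c) ≤ S.filter (fun x => x = g) := by
      rw [Multiset.le_filter]
      refine ⟨(Multiset.filter_le _ _).trans (hK2K.trans (Multiset.filter_le _ _)), ?_⟩
      intro x hx
      obtain ⟨h1, h2⟩ := hK2c x hx
      exact C.eq_of_commute hk h2 hgk (by rw [h1, hga])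
    have hle' := Multiset.card_le_card hle
    have hgs := card_filter_split (fun x => x = g) S
    by_cases hr : p * q ≤ Multiset.card (S.filter (fun x => x = g))
    · exact C.good_rep S g hg0 hr
    have hFl : Multiset.card F ≤ Multiset.card (S.filter (fun x => ¬ Commute x g)) := by
      apply card_filter_mono
      intro x _ hx hxg
      exact hx (C.comm_trans hg1 hxg hgk)
    have h3 := hb (C.a g)
    exact C.good_g S (by omega) f1 hp3 hpq g hg0 (by omega) (by omega) (by omega) (by omega)

theorem good_main (S : Multiset G) (hS : Multiset.card S + 2 = p * q + p + q)
    (hp3 : 3 ≤ p) (hpq : p + 1 ≤ q) : C.Good S := by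
  have f1 : 3 * p + 2 * q ≤ p * q + 6 := by nlinarith
  have f2 : 2 * p + 3 * q ≤ p * q + 6 := by nlinarith
  have f3 : 3 * p + 2 * q ≤ p * q + 5 := by nlinarith
  by_cases h1 : p + q ≤ Multiset.card (S.filter (fun x => x = 1)) + 2
  · exact C.good_ones S (by omega) h1
  have hzs := card_filter_split (fun x => C.a x = 0) S
  by_cases hz : 2 * (p + q) ≤ Multiset.card (S.filter (fun x => C.a x = 0)) + 4
  · by_cases hm : p ≤ Multiset.card (S.filter (fun x => ¬ C.a x = 0))
    · refine C.good_insert S (by omega) f1 hp3 hpq hm ?_ (by omega)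
      have h2 := card_filter_split (fun x => x = 1) (S.filter (fun x => C.a x = 0))
      have h3 := card_filter_le (fun x => x = 1) (Multiset.filter_le (fun x => C.a x = 0) S)
      have h4 : (S.filter (fun x => C.a x = 0)).filter (fun x => ¬ x = 1) =
          S.filter (fun x => C.a x = 0 ∧ x ≠ 1) := by
        rw [Multiset.filter_filter]
        apply Multiset.filter_congr
        intro x _
        exact and_comm
      rw [h4] at h2
      omega
    · exact C.good_N S (by omega)
  by_cases hb : ∀ c, p - 1 ≤ Multiset.card (S.filter (fun x => C.a x ≠ c))
  · obtain ⟨M1, hM1, hM1S, hM1n⟩ := pairs_lemma C.a S (p - 1) (by omega) hb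
    obtain ⟨S1, hS1⟩ := Multiset.le_iff_exists_add.1 hM1S
    have hS1c : Multiset.card S = 2 * (p - 1) + Multiset.card S1 := by
      rw [hS1, Multiset.card_add, Multiset.card_add, Multiset.card_map, Multiset.card_map, hM1]
      omega
    have hS1le : S1 ≤ S := by rw [hS1]; exact Multiset.le_add_left _ _
    have h11 := card_filter_split (fun x => x = 1) S1
    have h12 := card_filter_le (fun x => x = 1) hS1le
    set S1' := S1.filter (fun x => ¬ x = 1) with hS1'
    set col : G → Set G := fun g => {x | Commute x g} with hcol
    have hcoleq : ∀ g h : G, g ≠ 1 → h ≠ 1 → Commute g h → col g = col h := by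
      intro g h hg hh hc
      ext x
      exact ⟨fun hx => C.comm_trans hg hx hc, fun hx => C.comm_trans hh hx hc.symm⟩
    by_cases hk : ∀ κ, q - 1 ≤ Multiset.card (S1'.filter (fun x => col x ≠ κ))
    · obtain ⟨M2, hM2, hM2S, hM2n⟩ := pairs_lemma col S1' (q - 1) (by omega) hk
      refine C.good_pairs S (by omega) f1 hp3 M1 M2 (by omega) (by omega) ?_ hM1n ?_
      · rw [hS1]
        exact add_le_add le_rfl (hM2S.trans (Multiset.filter_le _ _))
      · intro m hm hcm
        have e1 := (Multiset.mem_filter.1 (Multiset.mem_of_le hM2S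
          (Multiset.mem_add.2 (Or.inl (Multiset.mem_map_of_mem _ hm))))).2
        have e2 := (Multiset.mem_filter.1 (Multiset.mem_of_le hM2S
          (Multiset.mem_add.2 (Or.inr (Multiset.mem_map_of_mem _ hm))))).2
        exact hM2n m hm (hcoleq _ _ e1 e2 hcm)
    · push Not at hk
      obtain ⟨κ, hκ⟩ := hk
      have hκ' : Multiset.card (S1'.filter (fun x => ¬ col x = κ)) < q - 1 := hκ
      have hκs := card_filter_split (fun x => col x = κ) S1'
      obtain ⟨k, hk⟩ := Multiset.card_pos_iff_exists_mem.1
        (show 0 < Multiset.card (S1'.filter (fun x => col x = κ)) by omega)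
      obtain ⟨hk1, hk2⟩ := Multiset.mem_filter.1 hk
      have hkne : k ≠ 1 := (Multiset.mem_filter.1 hk1).2
      have hnc : Multiset.card (S1.filter (fun x => ¬ Commute x k)) ≤
          Multiset.card (S1'.filter (fun x => ¬ col x = κ)) := by
        rw [hS1', Multiset.filter_filter]
        apply card_filter_mono
        intro x _ hx
        refine ⟨fun e => hx ?_, fun e => hx (by rw [e]; exact Commute.one_left k)⟩
        rw [← hk2] at e
        have : x ∈ col x := Commute.refl x
        rw [e] at this
        exact this
      have hcs := card_filter_split (fun x => Commute x k) S1
      by_cases hak : C.a k = 0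
      · exfalso
        have h5 : Multiset.card (S1.filter (fun x => Commute x k)) ≤
            Multiset.card (S1.filter (fun x => C.a x = 0)) := by
          apply card_filter_mono
          intro x _ hx
          by_contra hax
          exact hkne (C.eq_one_of_commute hx.symm hax hak)
        have h6 := card_filter_le (fun x => C.a x = 0) hS1le
        omega
      · refine C.good_3c S hS hp3 hpq f1 f2 (by omega) (by omega) hb k hak ?_
        have h7 : Multiset.card (S.filter (fun x => ¬ Commute x k)) ≤
            2 * (p - 1) + Multiset.card (S1.filter (fun x => ¬ Commute x k)) := by
          rw [hS1, Multiset.filter_add, Multiset.card_add]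
          gcongr
          refine (Multiset.card_le_card (Multiset.filter_le _ _)).trans ?_
          rw [Multiset.card_add, Multiset.card_map, Multiset.card_map, hM1]
          omega
        omega
  · push Not at hb
    obtain ⟨c, hc⟩ := hb
    have hc' : Multiset.card (S.filter (fun x => ¬ C.a x = c)) < p - 1 := hc
    have hcs := card_filter_split (fun x => C.a x = c) S
    refine C.good_3a S hp3 hpq f1 c ?_ (by omega)
    rintro rfl
    omega

theorem good_iter (C : Coord p q G) (hp3 : 3 ≤ p) (hpq : p + 1 ≤ q) (m : ℕ) (S : Multiset G)
    (hS : m * (p * q) + p + q ≤ Multiset.card S + 2) :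
    ∃ T, T ≤ S ∧ Multiset.card T = m * (p * q) ∧ IsOneProdSeq T := by
  induction m generalizing S with
  | zero => exact ⟨0, by simp, by simp, oneProd_zero⟩
  | succ m ih =>
    rw [Nat.succ_mul] at hS ⊢
    obtain ⟨S', hS', hc⟩ := ms_exists_sub S (p * q + p + q - 2) (by omega)
    obtain ⟨T, hT, hTc, hT1⟩ := C.good_main S' (by omega) hp3 hpq
    obtain ⟨R, rfl⟩ := Multiset.le_iff_exists_add.1 (hT.trans hS')
    rw [Multiset.card_add] at hS
    obtain ⟨T', hT', hTc', hT1'⟩ := ih R (by omega)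
    exact ⟨T + T', by gcongr, by rw [Multiset.card_add]; omega, oneProd_add hT1 hT1'⟩

theorem upper_coprime (C : Coord p q G) (k : ℕ) (hk : 0 < k) (S : Multiset G)
    (hS : k * q * p + p ≤ Multiset.card S + 1) :
    ∃ T, T ≤ S ∧ T ≠ 0 ∧ k * p ∣ Multiset.card T ∧ IsOneProdSeq T := by
  have hp : 0 < p := (Fact.out : p.Prime).pos
  have : NeZero k := ⟨hk.ne'⟩
  obtain ⟨B, hB, hBS, hBb⟩ := egz_iter p hp C.a (k * q) S hS
  obtain ⟨U, hU, hU0, -, hUs⟩ := davenport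
    (fun b : Multiset G => ((1 : ZMod k), C.b b.toList.prod)) B
    (by rw [Fintype.card_prod, ZMod.card, ZMod.card, hB])
  have hUb : ∀ b ∈ U, Multiset.card b = p ∧ C.asum b = 0 :=
    fun b hb => hBb b (Multiset.mem_of_le hU hb)
  have hcard : Multiset.card U.sum = Multiset.card U * p := by
    clear hUs hU0 hU
    induction U using Multiset.induction with
    | empty => simp
    | cons b U ih =>
      rw [Multiset.sum_cons, Multiset.card_add, (hUb b (Multiset.mem_cons_self _ _)).1,
        ih (fun x hx => hUb x (Multiset.mem_cons_of_mem hx)), Multiset.card_cons]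
      ring
  have hl : ∃ l : List G, (l : Multiset G) = U.sum ∧ C.a l.prod = 0 ∧
      C.b l.prod = (U.map (fun b : Multiset G => C.b b.toList.prod)).sum := by
    clear hUs hU0 hU hcard
    induction U using Multiset.induction with
    | empty => exact ⟨[], by simp, by simp [a_one], by simp [b_one]⟩
    | cons b U ih =>
      obtain ⟨l, h1, h2, h3⟩ := ih (fun x hx => hUb x (Multiset.mem_cons_of_mem hx))
      have hb : C.a b.toList.prod = 0 := by
        rw [C.a_prod' (T := b) (by simp)]; exact (hUb b (Multiset.mem_cons_self _ _)).2
      refine ⟨b.toList ++ l, ?_, ?_, ?_⟩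
      · rw [← Multiset.coe_add, h1]; simp
      · rw [List.prod_append, C.a_mul, hb, h2, add_zero]
      · rw [List.prod_append, C.b_mul, h2, C.σ_zero, h3]; simp
  have hs1 : (Multiset.card U : ZMod k) = 0 := by
    have := congrArg (AddMonoidHom.fst (ZMod k) (ZMod q)) hUs
    rw [map_multiset_sum, Multiset.map_map] at this
    simpa using this
  have hs2 : (U.map (fun b : Multiset G => C.b b.toList.prod)).sum = 0 := by
    have := congrArg (AddMonoidHom.snd (ZMod k) (ZMod q)) hUs
    rw [map_multiset_sum, Multiset.map_map] at this
    simpa [Function.comp_def] using this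
  obtain ⟨l, h1, h2, h3⟩ := hl
  refine ⟨U.sum, ?_, ?_, ?_, l, h1, C.eq_one _ h2 (by rw [h3, hs2])⟩
  · obtain ⟨V, rfl⟩ := Multiset.le_iff_exists_add.1 hU
    rw [Multiset.sum_add] at hBS
    exact (Multiset.le_add_right _ _).trans hBS
  · rw [← Multiset.card_pos, hcard]
    exact Nat.mul_pos (Multiset.card_pos.2 hU0) hp
  · rw [hcard]
    exact Nat.mul_dvd_mul_right ((ZMod.natCast_eq_zero_iff _ _).1 hs1) p

/-- structure of one-product subsequences of the extremal sequences -/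
theorem lower_aux (x y : G) (hxa : C.a x = 1) (hya : C.a y = 0) (hyb : C.b y = 1)
    (u v : ℕ) (T : Multiset G)
    (hT : T ≤ Multiset.replicate u 1 + Multiset.replicate v y + Multiset.replicate (p - 1) x)
    (h1 : IsOneProdSeq T) :
    ∃ u' v', u' ≤ u ∧ v' ≤ v ∧ q ∣ v' ∧ Multiset.card T = u' + v' := by
  have hp : 2 ≤ p := (Fact.out : p.Prime).two_le
  have hq : 2 ≤ q := (Fact.out : q.Prime).two_le
  have : Fact (1 < p) := ⟨hp⟩
  have : Fact (1 < q) := ⟨hq⟩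
  have hx1 : x ≠ 1 := fun h => by rw [h, a_one] at hxa; exact zero_ne_one hxa
  have hy1 : y ≠ 1 := fun h => by rw [h, b_one] at hyb; exact zero_ne_one hyb
  have hxy : x ≠ y := fun h => by rw [h, hya] at hxa; exact zero_ne_one hxa
  have hdec : T = Multiset.replicate (T.count 1) 1 + Multiset.replicate (T.count y) y +
      Multiset.replicate (T.count x) x := by
    ext g
    by_cases hg : g = 1 ∨ g = y ∨ g = x
    · rcases hg with rfl | rfl | rfl
      · simp [Multiset.count_replicate, hx1, hy1]
      · simp [Multiset.count_replicate, hy1.symm, hxy]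
      · simp [Multiset.count_replicate, hx1.symm, hxy.symm]
    · push Not at hg
      have : g ∉ T := by
        intro h
        have := Multiset.mem_of_le hT h
        simp only [Multiset.mem_add] at this
        rcases this with (h | h) | h
        · exact hg.1 (Multiset.eq_of_mem_replicate h)
        · exact hg.2.1 (Multiset.eq_of_mem_replicate h)
        · exact hg.2.2 (Multiset.eq_of_mem_replicate h)
      simp [Multiset.count_replicate, hg.1.symm, hg.2.1.symm, hg.2.2.symm, this]
  have c1 := Multiset.count_le_of_le 1 hT
  have c2 := Multiset.count_le_of_le y hT
  have c3 := Multiset.count_le_of_le x hT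
  simp [Multiset.count_replicate, hx1, hy1, hxy, hx1.symm, hy1.symm, hxy.symm] at c1 c2 c3
  obtain ⟨l, hl, hl1⟩ := h1
  have hx0 : T.count x = 0 := by
    have h2 := C.a_prod' hl
    rw [hl1, a_one, hdec, asum] at h2
    simp [hxa, hya, a_one] at h2
    have h3 : p ∣ T.count x := by
      rw [← ZMod.natCast_eq_zero_iff]; simpa using h2.symm
    exact Nat.eq_zero_of_dvd_of_lt h3 (by omega)
  rw [hx0] at hdec
  refine ⟨_, _, c1, c2, ?_, ?_⟩
  · have hlT : ∀ g ∈ l, C.a g = 0 := by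
      intro g hg
      have : g ∈ T := by rw [← hl]; exact hg
      rw [hdec] at this
      simp only [Multiset.mem_add] at this
      rcases this with (h | h) | h
      · rw [Multiset.eq_of_mem_replicate h, a_one]
      · rw [Multiset.eq_of_mem_replicate h, hya]
      · simp at h
    have h2 := C.b_prod_of_a l hlT
    have h3 : (l.map C.b).sum = (T.map C.b).sum := by rw [← hl]; simp
    rw [h3, hl1, b_one, hdec] at h2
    simp [hyb, b_one] at h2
    rw [← ZMod.natCast_eq_zero_iff]; simpa using h2.symm
  · conv_lhs => rw [hdec]
    simp

end Coord
end MainSec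

section FinalSec

theorem exists_coord {G : Type*} [Group G] [Fintype G] (p q s : ℕ)
    (hp : p.Prime) (hq : q.Prime) (hne : p ≠ q)
    (hs : orderOf (s : ZMod q) = p)
    (x y : G) (hx : orderOf x = p) (hy : orderOf y = q)
    (hrel : y * x = x * y ^ s)
    (hcard : Fintype.card G = p * q) :
    ∃ C : Coord p q G, C.a x = 1 ∧ C.a y = 0 ∧ C.b y = 1 := by
  have : Fact p.Prime := ⟨hp⟩
  have : Fact q.Prime := ⟨hq⟩
  have : Fact (1 < p) := ⟨hp.one_lt⟩
  have : Fact (1 < q) := ⟨hq.one_lt⟩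
  have hxp : ∀ m n : ℕ, (m : ZMod p) = n → x ^ m = x ^ n := by
    intro m n h
    rw [pow_eq_pow_iff_modEq, hx]
    exact (ZMod.natCast_eq_natCast_iff _ _ _).1 h
  have hyp : ∀ m n : ℕ, (m : ZMod q) = n → y ^ m = y ^ n := by
    intro m n h
    rw [pow_eq_pow_iff_modEq, hy]
    exact (ZMod.natCast_eq_natCast_iff _ _ _).1 h
  have hyx : ∀ b : ℕ, y ^ b * x = x * y ^ (b * s) := by
    intro b
    induction b with
    | zero => simp
    | succ b ih =>
      rw [pow_succ, mul_assoc, hrel, ← mul_assoc, ih, mul_assoc, ← pow_add, Nat.succ_mul]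
  have hyxc : ∀ c b : ℕ, y ^ b * x ^ c = x ^ c * y ^ (b * s ^ c) := by
    intro c
    induction c with
    | zero => simp
    | succ c ih =>
      intro b
      rw [pow_succ, ← mul_assoc, ih, mul_assoc, hyx, ← mul_assoc, mul_assoc b, ← pow_succ s c]
  let φ : ZMod p × ZMod q → G := fun t => x ^ t.1.val * y ^ t.2.val
  have hinj : Function.Injective φ := by
    rintro ⟨a, b⟩ ⟨a', b'⟩ h
    have h : x ^ a.val * y ^ b.val = x ^ a'.val * y ^ b'.val := h
    have h1 : (x ^ a'.val)⁻¹ * x ^ a.val = y ^ b'.val * (y ^ b.val)⁻¹ := by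
      rw [eq_mul_inv_iff_mul_eq, mul_assoc, h]; group
    set f := (x ^ a'.val)⁻¹ * x ^ a.val with hf
    have hf1 : f ∈ Subgroup.zpowers x := Subgroup.mul_mem _ (Subgroup.inv_mem _
      (Subgroup.npow_mem_zpowers _ _)) (Subgroup.npow_mem_zpowers _ _)
    have hf2 : f ∈ Subgroup.zpowers y := by
      rw [h1]
      exact Subgroup.mul_mem _ (Subgroup.npow_mem_zpowers _ _) (Subgroup.inv_mem _
      (Subgroup.npow_mem_zpowers _ _))
    have d1 : orderOf f ∣ p := by rw [← hx]; exact orderOf_dvd_of_mem_zpowers hf1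
    have d2 : orderOf f ∣ q := by rw [← hy]; exact orderOf_dvd_of_mem_zpowers hf2
    have hf0 : f = 1 := by
      rw [← orderOf_eq_one_iff]
      have := Nat.dvd_gcd d1 d2
      rw [(Nat.coprime_primes hp hq).2 hne] at this
      exact Nat.dvd_one.1 this
    have e1 : x ^ a.val = x ^ a'.val := by
      rw [hf0] at hf
      exact (inv_mul_eq_one.1 hf.symm).symm
    have e2 : y ^ b.val = y ^ b'.val := by
      rw [e1] at h; exact mul_left_cancel h
    rw [pow_eq_pow_iff_modEq, hx, ← ZMod.natCast_eq_natCast_iff] at e1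
    rw [pow_eq_pow_iff_modEq, hy, ← ZMod.natCast_eq_natCast_iff] at e2
    simp only [ZMod.natCast_val, ZMod.cast_id', id] at e1 e2
    rw [e1, e2]
  have hbij : Function.Bijective φ := by
    rw [Fintype.bijective_iff_injective_and_card]
    exact ⟨hinj, by rw [Fintype.card_prod, ZMod.card, ZMod.card, hcard]⟩
  let e := Equiv.ofBijective φ hbij
  have hs0 : (s : ZMod q) ^ p = 1 := by rw [← hs]; exact pow_orderOf_eq_one _
  have hmul : ∀ t u : ZMod p × ZMod q, φ t * φ u =
      φ (t.1 + u.1, t.2 * (s : ZMod q) ^ u.1.val + u.2) := by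
    rintro ⟨a, b⟩ ⟨c, d⟩
    show x ^ a.val * y ^ b.val * (x ^ c.val * y ^ d.val) =
      x ^ (a + c).val * y ^ (b * (s : ZMod q) ^ c.val + d).val
    rw [hxp (a + c).val (a.val + c.val) (by simp),
      hyp (b * (s : ZMod q) ^ c.val + d).val (b.val * s ^ c.val + d.val) (by simp), pow_add, pow_add]
    rw [mul_assoc, ← mul_assoc (y ^ b.val), hyxc]
    simp only [mul_assoc]
  have hsymm : ∀ g h : G, e.symm (g * h) = ((e.symm g).1 + (e.symm h).1,
      (e.symm g).2 * (s : ZMod q) ^ (e.symm h).1.val + (e.symm h).2) := by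
    intro g h
    rw [Equiv.symm_apply_eq]
    refine Eq.trans ?_ (hmul (e.symm g) (e.symm h))
    have h1 : φ (e.symm g) = g := e.apply_symm_apply g
    have h2 : φ (e.symm h) = h := e.apply_symm_apply h
    rw [h1, h2]
  have hex : e.symm x = (1, 0) := by
    rw [Equiv.symm_apply_eq]
    show x = x ^ (1 : ZMod p).val * y ^ (0 : ZMod q).val
    rw [ZMod.val_one, ZMod.val_zero]; simp
  have hey : e.symm y = (0, 1) := by
    rw [Equiv.symm_apply_eq]
    show y = x ^ (0 : ZMod p).val * y ^ (1 : ZMod q).val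
    rw [ZMod.val_one, ZMod.val_zero]; simp
  have hspow : ∀ m n : ℕ, (s : ZMod q) ^ m = (s : ZMod q) ^ (m % p + p * n) := by
    intro m n
    conv_lhs => rw [← Nat.mod_add_div m p]
    rw [pow_add, pow_add, pow_mul, pow_mul, hs0]; simp
  refine ⟨{ a := fun g => (e.symm g).1
            b := fun g => (e.symm g).2
            σ := fun u => (s : ZMod q) ^ u.val
            a_mul := fun g h => by rw [hsymm]
            b_mul := fun g h => by rw [hsymm]
            σ_zero := by simp
            σ_add := ?_
            σ_inj := ?_
            eq_one := ?_ }, ?_, ?_, ?_⟩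
  · intro u v
    show (s : ZMod q) ^ (u + v).val = (s : ZMod q) ^ u.val * (s : ZMod q) ^ v.val
    rw [← pow_add, ZMod.val_add, hspow (u.val + v.val) 0]; simp
  · intro u v h
    have h : (s : ZMod q) ^ u.val = (s : ZMod q) ^ v.val := h
    have hu := ZMod.val_lt u
    have hv := ZMod.val_lt v
    apply ZMod.val_injective p
    exact pow_injOn_Iio_orderOf (by rw [hs]; exact hu) (by rw [hs]; exact hv) h
  · intro g h1 h2
    have h3 : e.symm g = (0, 0) := Prod.ext h1 h2
    rw [Equiv.symm_apply_eq] at h3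
    rw [h3]
    show x ^ (0 : ZMod p).val * y ^ (0 : ZMod q).val = 1
    rw [ZMod.val_zero, ZMod.val_zero]; simp
  · show (e.symm x).1 = 1
    rw [hex]
  · show (e.symm y).1 = 0
    rw [hey]
  · show (e.symm y).2 = 1
    rw [hey]

end FinalSec

/-- Let `p, q` be primes with `p ≥ 3` and `p ∣ q − 1`, let `s` have multiplicative order
`p` modulo `q`, and let `G = G_{pq} = ⟨x, y : x^p = y^q = 1, yx = xy^s⟩` be the
corresponding nonabelian metacyclic group of order `pq`.  Then for every positive
integer `k`, `s_{kpℕ}(G_{pq}) = lcm(kp, q) + p − 2 + gcd(kp, q)`. -/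
theorem stmt5 {G : Type*} [Group G] [Fintype G] (p q s k : ℕ)
    (hp : p.Prime) (hq : q.Prime) (hp3 : 3 ≤ p) (hpq : p ∣ q - 1)
    (hs : orderOf (s : ZMod q) = p)
    (x y : G) (hx : orderOf x = p) (hy : orderOf y = q)
    (hrel : y * x = x * y ^ s)
    (hgen : Subgroup.closure {x, y} = (⊤ : Subgroup G))
    (hcard : Fintype.card G = p * q)
    (hk : 0 < k) :
    IsLeast {ℓ : ℕ | ∀ S : Multiset G, ℓ ≤ Multiset.card S →
        ∃ T, T ≤ S ∧ T ≠ 0 ∧ (k * p) ∣ Multiset.card T ∧ IsOneProdSeq T}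
      (Nat.lcm (k * p) q + p - 2 + Nat.gcd (k * p) q) := by
  have hq2 := hq.two_le
  have hpq1 : p + 1 ≤ q := by
    have := Nat.le_of_dvd (by omega) hpq
    omega
  have : Fact p.Prime := ⟨hp⟩
  have : Fact q.Prime := ⟨hq⟩
  obtain ⟨C, hCx, hCy, hCyb⟩ := exists_coord p q s hp hq (by omega) hs x y hx hy hrel hcard
  have hkp : 0 < k * p := Nat.mul_pos hk (by omega)
  by_cases hqk : q ∣ k
  · obtain ⟨m, rfl⟩ := hqk
    have hd : q ∣ q * m * p := ⟨m * p, by ring⟩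
    have e1 : m * (p * q) = q * m * p := by ring
    rw [Nat.gcd_eq_right hd, Nat.lcm_eq_left hd]
    constructor
    · intro S hS
      obtain ⟨T, hT, hTc, hT1⟩ := C.good_iter hp3 hpq1 m S (by rw [e1]; omega)
      refine ⟨T, hT, ?_, by rw [hTc, e1], hT1⟩
      rw [← Multiset.card_pos, hTc, e1]; exact hkp
    · intro ℓ hℓ
      by_contra hlt
      obtain ⟨T, hT, hT0, hTd, hT1⟩ := hℓ (Multiset.replicate (q * m * p - 1) 1 +
        Multiset.replicate (q - 1) y + Multiset.replicate (p - 1) x) (by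
          simp only [Multiset.card_add, Multiset.card_replicate]; omega)
      obtain ⟨u, v, hu, hv, hqv, hc⟩ := C.lower_aux x y hCx hCy hCyb _ _ T hT hT1
      have hv0 : v = 0 := Nat.eq_zero_of_dvd_of_lt hqv (by omega)
      have hpos := Multiset.card_pos.2 hT0
      have := Nat.le_of_dvd hpos hTd
      omega
  · have hco : Nat.Coprime (k * p) q := by
      apply Nat.Coprime.symm
      rw [Nat.Prime.coprime_iff_not_dvd hq]
      intro h
      rcases hq.dvd_mul.1 h with h | h
      · exact hqk h
      · have := Nat.le_of_dvd (by omega) h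
        omega
    have e1 : k * q * p = k * p * q := by ring
    have hpos' : 0 < k * p * q := Nat.mul_pos hkp (by omega)
    rw [hco.lcm_eq_mul, Nat.Coprime.gcd_eq_one hco]
    constructor
    · intro S hS
      exact C.upper_coprime k hk S (by rw [e1]; omega)
    · intro ℓ hℓ
      by_contra hlt
      obtain ⟨T, hT, hT0, hTd, hT1⟩ := hℓ (Multiset.replicate 0 1 +
        Multiset.replicate (k * p * q - 1) y + Multiset.replicate (p - 1) x) (by
          simp only [Multiset.card_add, Multiset.card_replicate]; omega)
      obtain ⟨u, v, hu, hv, hqv, hc⟩ := C.lower_aux x y hCx hCy hCyb _ _ T hT hT1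
      have hu0 : u = 0 := by omega
      have hpos := Multiset.card_pos.2 hT0
      rw [hc, hu0, zero_add] at hTd hpos
      have := Nat.le_of_dvd hpos (hco.mul_dvd_of_dvd_of_dvd hTd hqv)
      omega
end

section
/- Let G be a finite abelian group and let S be a 1-product free sequence over G of length m ≥ 1 such that |Σ(S)| = m. Then S = g^{[m]} (the element g repeated m times) for some g ∈ G whose order is greater than m. -/
theorem aux_ne {G : Type*} [CommGroup G] {S U V : Multiset G}
    (hfree : ∀ T, T ≤ S → T ≠ 0 → T.prod ≠ 1) (hV : V ≤ S) (hUV : U < V) :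
    U.prod ≠ V.prod := by
  intro h
  obtain ⟨W, rfl⟩ := Multiset.le_iff_exists_add.1 hUV.le
  refine hfree W ((Multiset.le_add_left W U).trans hV) ?_ ?_
  · rintro rfl
    simp at hUV
  · simpa using h

theorem aux_le {G : Type*} [CommGroup G] [Fintype G] (S : Multiset G)
    (hfree : ∀ T, T ≤ S → T ≠ 0 → T.prod ≠ 1) :
    Multiset.card S ≤ Set.ncard {g : G | ∃ T, T ≤ S ∧ T ≠ 0 ∧ T.prod = g} := by
  induction S using Multiset.induction with
  | empty => simp
  | cons a R ih =>
    have h1 := ih (fun T hT => hfree T (hT.trans (Multiset.le_cons_self R a)))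
    rw [Multiset.card_cons]
    refine lt_of_le_of_lt h1 (Set.ncard_lt_ncard ?_ (Set.toFinite _))
    refine (Set.ssubset_iff_of_subset ?_).2 ⟨(a ::ₘ R).prod, ⟨_, le_rfl, by simp, rfl⟩, ?_⟩
    · rintro g ⟨T, hT, h0, rfl⟩
      exact ⟨T, hT.trans (Multiset.le_cons_self R a), h0, rfl⟩
    · rintro ⟨T, hT, -, h⟩
      exact aux_ne hfree le_rfl (lt_of_le_of_lt hT (Multiset.lt_cons_self R a)) h

theorem aux_eq {G : Type*} [CommGroup G] [Fintype G] (R : Multiset G) (a b : G)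
    (hfree : ∀ T, T ≤ a ::ₘ b ::ₘ R → T ≠ 0 → T.prod ≠ 1) (hab : a ≠ b) :
    Multiset.card R + 3 ≤
      Set.ncard {g : G | ∃ T, T ≤ a ::ₘ b ::ₘ R ∧ T ≠ 0 ∧ T.prod = g} := by
  have hb : b ::ₘ R ≤ a ::ₘ b ::ₘ R := Multiset.le_cons_self _ _
  have ha : a ::ₘ R ≤ a ::ₘ b ::ₘ R := Multiset.cons_le_cons a (Multiset.le_cons_self _ _)
  have hR : R ≤ a ::ₘ b ::ₘ R := (Multiset.le_cons_self R b).trans hb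
  have h1 := aux_le R (fun T hT => hfree T (hT.trans hR))
  have n1 : a * (b * R.prod) ≠ b * R.prod := by
    have := hfree {a} (by simp) (by simp)
    simpa using this
  have n2 : a * (b * R.prod) ≠ a * R.prod := by
    have := hfree {b} (by simp) (by simp)
    simpa using this
  have n3 : a * R.prod ≠ b * R.prod := by simpa using hab
  have m3 : b * R.prod ∉ {g : G | ∃ T, T ≤ R ∧ T ≠ 0 ∧ T.prod = g} := by
    rintro ⟨T, hT, -, h⟩
    exact aux_ne hfree hb (lt_of_le_of_lt hT (Multiset.lt_cons_self R b)) (by simpa using h)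
  have m2 : a * R.prod ∉ insert (b * R.prod) {g : G | ∃ T, T ≤ R ∧ T ≠ 0 ∧ T.prod = g} := by
    rintro (h | ⟨T, hT, -, h⟩)
    · exact n3 h
    · exact aux_ne hfree ha (lt_of_le_of_lt hT (Multiset.lt_cons_self R a)) (by simpa using h)
  have m1 : a * (b * R.prod) ∉ insert (a * R.prod) (insert (b * R.prod)
      {g : G | ∃ T, T ≤ R ∧ T ≠ 0 ∧ T.prod = g}) := by
    rintro (h | h | ⟨T, hT, -, h⟩)
    · exact n2 h
    · exact n1 h
    · exact aux_ne hfree le_rfl (lt_of_le_of_lt (hT.trans (Multiset.le_cons_self R b))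
        (Multiset.lt_cons_self _ a)) (by simpa using h)
  have hc := Set.ncard_insert_of_notMem m1 (Set.toFinite _)
  rw [Set.ncard_insert_of_notMem m2 (Set.toFinite _),
    Set.ncard_insert_of_notMem m3 (Set.toFinite _)] at hc
  have hsub : insert (a * (b * R.prod)) (insert (a * R.prod) (insert (b * R.prod)
      {g : G | ∃ T, T ≤ R ∧ T ≠ 0 ∧ T.prod = g})) ⊆
      {g : G | ∃ T, T ≤ a ::ₘ b ::ₘ R ∧ T ≠ 0 ∧ T.prod = g} := by
    rintro g (rfl | rfl | rfl | ⟨T, hT, h0, rfl⟩)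
    · exact ⟨_, le_rfl, by simp, by simp⟩
    · exact ⟨_, ha, by simp, by simp⟩
    · exact ⟨_, hb, by simp, by simp⟩
    · exact ⟨T, hT.trans hR, h0, rfl⟩
  have := Set.ncard_le_ncard hsub (Set.toFinite _)
  omega

/-- Let `G` be a finite abelian group and `S` a 1-product free sequence over `G` of
length `m ≥ 1` with `|Σ(S)| = m`.  Then `S = g^{[m]}` for some `g ∈ G` of order
greater than `m`. -/
theorem stmt7 {G : Type*} [CommGroup G] [Fintype G] (S : Multiset G) (m : ℕ)
    (hm : 1 ≤ m) (hlen : Multiset.card S = m)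
    (hfree : ∀ T, T ≤ S → T ≠ 0 → T.prod ≠ 1)
    (hsig : Set.ncard {g : G | ∃ T, T ≤ S ∧ T ≠ 0 ∧ T.prod = g} = m) :
    ∃ g : G, S = Multiset.replicate m g ∧ m < orderOf g := by
  obtain ⟨g, hg⟩ := Multiset.card_pos_iff_exists_mem.1 (by omega : 0 < Multiset.card S)
  have hS : S = Multiset.replicate m g := by
    refine Multiset.eq_replicate.2 ⟨hlen, fun b hb => ?_⟩
    by_contra hne
    obtain ⟨Q, rfl⟩ := Multiset.exists_cons_of_mem hg
    have hbQ : b ∈ Q := by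
      rcases Multiset.mem_cons.1 hb with h | h
      · exact absurd h hne
      · exact h
    obtain ⟨R, rfl⟩ := Multiset.exists_cons_of_mem hbQ
    have := aux_eq R g b hfree (Ne.symm hne)
    simp only [Multiset.card_cons] at hlen
    omega
  refine ⟨g, hS, ?_⟩
  by_contra hlt
  refine hfree (Multiset.replicate (orderOf g) g) ?_ ?_ ?_
  · rw [hS]
    exact (Multiset.replicate_le_replicate g).2 (not_lt.1 hlt)
  · intro h
    have := congrArg Multiset.card h
    have h2 := orderOf_pos g
    simp only [Multiset.card_replicate, Multiset.card_zero] at this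
    omega
  · rw [Multiset.prod_replicate, pow_orderOf_eq_one]
end
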